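/- arXiv:2408.04642 — 2 statements merged into one kernel-verified Lean document; each statement's English description precedes it below -/
import Mathlib

section
/- Let G be a 2-factor Hamiltonian k-regular bipartite graph (k ≥ 1). Then k ≤ 3. -/
open SimpleGraph

/-- A 2-factor of `G`: a 2-regular spanning subgraph, given as a simple graph `F ≤ G`
in which every vertex has exactly two neighbours. -/
def IsTwoFactor {V : Type*} (G F : SimpleGraph V) : Prop :=
  F ≤ G ∧ ∀ v : V, (F.neighborSet v).ncard = 2

/-- A graph admitting a 2-factor is 2-factor Hamiltonian if every 2-factor of it is a
Hamiltonian cycle, i.e. every 2-factor is connected. -/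
def TwoFactorHamiltonian {V : Type*} (G : SimpleGraph V) : Prop :=
  (∃ F, IsTwoFactor G F) ∧ ∀ F, IsTwoFactor G F → F.Connected

/-!
Two disjoint perfect matchings of a `2`-factor Hamiltonian bipartite graph with parts of size `n`
form a Hamiltonian cycle, so the quotient of the corresponding permutations is an `n`-cycle, of sign
`-(-1) ^ n`. In degree at least `3` there are three mutually disjoint perfect matchings, which
forces `-(-1) ^ n = 1`: disjoint perfect matchings have the same sign. In degree at least `4` the
edges of a perfect matching `σ` can be exchanged one at a time for those of another one `τ`, along
a cycle of `σ⁻¹ * τ`, so that some perfect matching avoids the mixed edges throughout; hence all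
perfect matchings have the same sign. The biadjacency matrix is then sign-nonsingular: a nonnegative
matrix supported on the edges is nonsingular as soon as its support contains a perfect matching.

A sign-nonsingular brace with `n ≥ 2` rows has at most `4n - 4` edges, by induction on `n`. If
deleting an edge destroys the brace property, there are tight sets, sets of `m` rows with exactly
`m + 1` neighbours. Contracting one side of the corresponding cut preserves sign-nonsingularity, and
the cross edges of the cut form a forest, because they can be ordered by the ratio of two vectors
in the kernel of the matrix. Counting edges along a chain of tight sets gives the bound.

A `k`-regular graph with `k ≥ 4` violates it: if the graph is a brace it has `kn > 4n - 4` edges,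
and otherwise contracting the complement of a smallest tight set gives a brace with too many edges.
-/

namespace BipartitePattern

open Finset
open scoped Classical

variable {A B : Type*}

/-! ### Elementary bipartite graphs and braces -/

section Matching

variable {P Q : B → A → Prop} {R R' S : Finset B} {C C' T : Finset A} {b : B} {a : A}

/-- The bipartite graph with sides `R` and `C` and adjacency relation `P` has a perfect matching. -/
def HasPerfectMatching (P : B → A → Prop) (R : Finset B) (C : Finset A) : Prop :=
  ∃ e : R ≃ C, ∀ b : R, P b (e b)

/-- The neighbourhood in `C` of a set `S` of vertices of the other side. -/
noncomputable def nbhd (P : B → A → Prop) (C : Finset A) (S : Finset B) : Finset A :=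
  S.biUnion fun b => bipartiteAbove P C b

theorem mem_nbhd : a ∈ nbhd P C S ↔ a ∈ C ∧ ∃ b ∈ S, P b a := by
  simp only [nbhd, mem_biUnion, mem_bipartiteAbove]
  grind

theorem nbhd_subset (P : B → A → Prop) (C : Finset A) (S : Finset B) : nbhd P C S ⊆ C :=
  fun _ ha => (mem_nbhd.1 ha).1

theorem nbhd_mono (P : B → A → Prop) (C : Finset A) {S S' : Finset B} (h : S ⊆ S') :
    nbhd P C S ⊆ nbhd P C S' :=
  biUnion_subset_biUnion_of_subset_left _ h

theorem nbhd_union (P : B → A → Prop) (C : Finset A) (S S' : Finset B) :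
    nbhd P C (S ∪ S') = nbhd P C S ∪ nbhd P C S' :=
  union_biUnion

theorem nbhd_erase (P : B → A → Prop) (C : Finset A) (S : Finset B) (t : A) :
    nbhd P (C.erase t) S = (nbhd P C S).erase t := by
  ext a
  simp only [mem_nbhd, mem_erase, and_assoc]

theorem card_nbhd_le_card_nbhd_erase_add_one (P : B → A → Prop) (C : Finset A) (S : Finset B)
    (t : A) : #(nbhd P C S) ≤ #(nbhd P (C.erase t) S) + 1 := by
  have := pred_card_le_card_erase (s := nbhd P C S) (a := t)
  rw [nbhd_erase]
  omega

theorem nbhd_nbhd (P : B → A → Prop) (C : Finset A) {S S' : Finset B} (h : S' ⊆ S) :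
    nbhd P (nbhd P C S) S' = nbhd P C S' := by
  ext a
  simp only [mem_nbhd]
  grind

theorem nbhd_compl_nbhd_subset (P : B → A → Prop) (R : Finset B) (C X : Finset A) :
    nbhd P C (R \ nbhd (fun a b => P b a) R X) ⊆ C \ X := by
  intro a ha
  simp only [mem_nbhd, mem_sdiff] at ha ⊢
  grind

namespace HasPerfectMatching

theorem of_injective (hRC : #R = #C) (f : R → A) (hf : f.Injective) (hC : ∀ b, f b ∈ C)
    (hP : ∀ b : R, P b (f b)) : HasPerfectMatching P R C := by
  have hinj : Function.Injective fun b : R => (⟨f b, hC b⟩ : C) :=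
    fun x y hxy => hf (congrArg Subtype.val hxy)
  have hbij := (Fintype.bijective_iff_injective_and_card _).2 ⟨hinj, by simpa using hRC⟩
  exact ⟨Equiv.ofBijective _ hbij, hP⟩

theorem mono (h : HasPerfectMatching P R C) (hPQ : ∀ b ∈ R, ∀ a ∈ C, P b a → Q b a) :
    HasPerfectMatching Q R C := by
  obtain ⟨e, he⟩ := h
  exact ⟨e, fun b => hPQ b b.2 _ (e b).2 (he b)⟩

theorem transpose (h : HasPerfectMatching P R C) : HasPerfectMatching (fun a b => P b a) C R := by
  obtain ⟨e, he⟩ := h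
  exact ⟨e.symm, fun a => by simpa using he (e.symm a)⟩

theorem union (h : HasPerfectMatching P R C) (h' : HasPerfectMatching P R' C')
    (hR : Disjoint R R') (hC : Disjoint C C') : HasPerfectMatching P (R ∪ R') (C ∪ C') := by
  obtain ⟨e, he⟩ := h
  obtain ⟨e', he'⟩ := h'
  refine ⟨(Equiv.Finset.union R R' hR).symm.trans
    ((e.sumCongr e').trans (Equiv.Finset.union C C' hC)), fun b => ?_⟩
  obtain ⟨x, rfl⟩ := (Equiv.Finset.union R R' hR).surjective b
  rcases x with x | x
  · simpa using he x
  · simpa using he' x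

theorem singleton (h : P b a) : HasPerfectMatching P {b} {a} :=
  ⟨Equiv.ofUnique _ _, fun ⟨x, hx⟩ => by
    obtain rfl := mem_singleton.1 hx
    exact h⟩

theorem cons (hb : b ∈ R) (ha : a ∈ C) (hP : P b a)
    (h : HasPerfectMatching P (R.erase b) (C.erase a)) : HasPerfectMatching P R C := by
  have := (singleton hP).union h (by simp) (by simp)
  rwa [← insert_eq, ← insert_eq, insert_erase hb, insert_erase ha] at this

theorem of_sdiff (hS : S ⊆ R) (hT : T ⊆ C) (h : HasPerfectMatching P S T)
    (h' : HasPerfectMatching P (R \ S) (C \ T)) : HasPerfectMatching P R C := by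
  have := h.union h' disjoint_sdiff disjoint_sdiff
  rwa [union_sdiff_of_subset hS, union_sdiff_of_subset hT] at this

theorem card_eq (h : HasPerfectMatching P R C) : #R = #C := by
  obtain ⟨e, -⟩ := h
  simpa using Fintype.card_congr e

theorem exists_erase (h : HasPerfectMatching P R C) (ha : a ∈ C) :
    ∃ b ∈ R, P b a ∧ HasPerfectMatching P (R.erase b) (C.erase a) := by
  have hRC := h.card_eq
  obtain ⟨e, he⟩ := h
  obtain ⟨b, hb⟩ := e.surjective ⟨a, ha⟩
  refine ⟨b, b.2, by simpa only [hb] using he b, ?_⟩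
  refine of_injective (by rw [card_erase_of_mem b.2, card_erase_of_mem ha, hRC])
    (fun x => e ⟨x, mem_of_mem_erase x.2⟩) (fun x y hxy => ?_) (fun x => ?_)
    (fun x => he ⟨x, mem_of_mem_erase x.2⟩)
  · exact Subtype.ext (Subtype.mk.inj (e.injective (Subtype.ext hxy)))
  · refine mem_erase.2 ⟨fun hxa => (mem_erase.1 x.2).1 ?_, (e _).2⟩
    exact congrArg Subtype.val (e.injective ((Subtype.ext hxa).trans hb.symm))

theorem of_card_le_card_nbhd (hRC : #R = #C) (h : ∀ X ⊆ R, X.Nonempty → #X ≤ #(nbhd P C X)) :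
    HasPerfectMatching P R C := by
  obtain ⟨f, hf, hfP⟩ := (all_card_le_biUnion_card_iff_exists_injective
    fun b : R => bipartiteAbove P C (b : B)).1 fun X => by
      rcases X.eq_empty_or_nonempty with rfl | hX
      · simp
      · have := h (X.map (.subtype _)) (map_subtype_subset X) hX.map
        rwa [card_map, nbhd, map_eq_image, image_biUnion] at this
  simp only [mem_bipartiteAbove] at hfP
  exact of_injective hRC f hf (fun b => (hfP b).1) (fun b => (hfP b).2)

end HasPerfectMatching

end Matching

section LinearAlgebra

variable {M : B → A → ℝ} {R : Finset B} {C : Finset A}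

/-- The block of `M` with rows `R` and columns `C` has trivial kernel. -/
def HasTrivialKernel (M : B → A → ℝ) (R : Finset B) (C : Finset A) : Prop :=
  ∀ v : A → ℝ, (∀ b ∈ R, ∑ a ∈ C, M b a * v a = 0) → ∀ a ∈ C, v a = 0

/-- The block of `M` with rows `R` and columns `C`. -/
def block (M : B → A → ℝ) (R : Finset B) (C : Finset A) : Matrix R C ℝ :=
  Matrix.of fun b a => M b a

theorem block_mulVec (M : B → A → ℝ) (v : A → ℝ) (b : R) :
    (block M R C).mulVec (fun a => v a) b = ∑ a ∈ C, M b a * v a :=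
  sum_coe_sort C fun a => M b a * v a

theorem exists_restrict_eq (v : C → ℝ) : ∃ v' : A → ℝ, v = fun a : C => v' a :=
  ⟨Function.extend Subtype.val v 0, funext fun a => (Subtype.val_injective.extend_apply v 0 a).symm⟩

theorem exists_kernel_vector_of_card_lt (M : B → A → ℝ) (h : #R < #C) :
    ∃ v : A → ℝ, (∃ a ∈ C, v a ≠ 0) ∧ ∀ b ∈ R, ∑ a ∈ C, M b a * v a = 0 := by
  have hker : LinearMap.ker (block M R C).mulVecLin ≠ ⊥ :=
    LinearMap.ker_ne_bot_of_finrank_lt (by simpa using h)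
  obtain ⟨v, hv, hv0⟩ := Submodule.exists_mem_ne_zero_of_ne_bot hker
  obtain ⟨v', rfl⟩ := exists_restrict_eq v
  refine ⟨v', ?_, fun b hb => ?_⟩
  · by_contra! hzero
    exact hv0 (funext fun a => hzero a a.2)
  · rw [← block_mulVec M v' ⟨b, hb⟩]
    exact congrFun hv ⟨b, hb⟩

theorem HasTrivialKernel.exists_sum_mul_eq (hM : HasTrivialKernel M R C) (hRC : #R = #C)
    (g : B → ℝ) : ∃ v : A → ℝ, ∀ b ∈ R, ∑ a ∈ C, M b a * v a = g b := by
  have hinj : Function.Injective (block M R C).mulVecLin := by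
    refine (injective_iff_map_eq_zero _).2 fun v hv => ?_
    obtain ⟨v', rfl⟩ := exists_restrict_eq v
    refine funext fun a => hM v' (fun b hb => ?_) a a.2
    rw [← block_mulVec M v' ⟨b, hb⟩]
    exact congrFun hv ⟨b, hb⟩
  have hsurj := (LinearMap.injective_iff_surjective_of_finrank_eq_finrank (by simp [hRC])).1 hinj
  obtain ⟨v, hv⟩ := hsurj fun b => g b
  obtain ⟨v', rfl⟩ := exists_restrict_eq v
  refine ⟨v', fun b hb => ?_⟩
  rw [← block_mulVec M v' ⟨b, hb⟩]
  exact congrFun hv ⟨b, hb⟩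

theorem HasTrivialKernel.transpose (hM : HasTrivialKernel M R C) (hRC : #R = #C) :
    HasTrivialKernel (fun a b => M b a) C R := by
  intro μ hμ b₁ hb₁
  obtain ⟨v, hv⟩ := hM.exists_sum_mul_eq hRC fun b => if b = b₁ then 1 else 0
  calc μ b₁ = ∑ b ∈ R, μ b * ∑ a ∈ C, M b a * v a := by
        rw [sum_congr rfl fun b hb => by rw [hv b hb]]
        simp [hb₁]
    _ = ∑ a ∈ C, v a * ∑ b ∈ R, M b a * μ b := by
        simp only [mul_sum]
        rw [sum_comm]
        exact sum_congr rfl fun a _ => sum_congr rfl fun b _ => by ring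
    _ = 0 := sum_eq_zero fun a ha => by rw [hμ a ha, mul_zero]

end LinearAlgebra

section Elementary

variable {P : B → A → Prop} {R S : Finset B} {C : Finset A}

/-- A bipartite graph with sides of equal size is elementary (connected, with every edge in a
perfect matching) if every proper nonempty set of rows has more neighbours than elements. -/
def IsElementary (P : B → A → Prop) (R : Finset B) (C : Finset A) : Prop :=
  #R = #C ∧ ∀ S ⊆ R, S.Nonempty → #S < #R → #S + 1 ≤ #(nbhd P C S)

/-- A brace: any two disjoint edges extend to a perfect matching. As in Hall's theorem, this is
encoded by the surplus of the neighbourhoods. -/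
def IsBrace (P : B → A → Prop) (R : Finset B) (C : Finset A) : Prop :=
  #R = #C ∧ ∀ S ⊆ R, S.Nonempty → #S + 2 ≤ #R → #S + 2 ≤ #(nbhd P C S)

/-- A tight set of rows: `S` and its `#S + 1` neighbours can be contracted to smaller graphs. -/
def IsTight (P : B → A → Prop) (R : Finset B) (C : Finset A) (S : Finset B) : Prop :=
  S ⊆ R ∧ S.Nonempty ∧ #S + 2 ≤ #R ∧ #(nbhd P C S) = #S + 1

theorem IsElementary.nbhd_self (h : IsElementary P R C) (h2 : 2 ≤ #R) : nbhd P C R = C := by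
  obtain ⟨b, hb⟩ : R.Nonempty := by rw [← card_pos]; omega
  have hcard := card_erase_of_mem hb
  have hsurplus := h.2 (R.erase b) (erase_subset _ _) (by rw [← card_pos]; omega) (by omega)
  have := card_le_card (nbhd_mono P C (erase_subset b R))
  have := h.1
  exact eq_of_subset_of_card_le (nbhd_subset _ _ _) (by omega)

theorem IsElementary.transpose (h : IsElementary P R C) :
    IsElementary (fun a b => P b a) C R := by
  refine ⟨h.1.symm, fun X hX hne hlt => ?_⟩
  by_contra! hcon
  set N := nbhd (fun a b => P b a) R X
  have hNR : N ⊆ R := nbhd_subset _ _ _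
  have hXpos := hne.card_pos
  have hRC := h.1
  have hN_compl := card_sdiff_of_subset hNR
  have hX_compl := card_sdiff_of_subset hX
  have hle : #(nbhd P C (R \ N)) ≤ #(C \ X) := card_le_card (nbhd_compl_nbhd_subset P R C X)
  have hN_le := card_le_card hNR
  rcases eq_or_ne N ∅ with hN0 | hN0
  · rw [hN0, sdiff_empty, h.nbhd_self (by omega)] at hle
    omega
  · have := card_pos.2 (nonempty_iff_ne_empty.2 hN0)
    have := h.2 (R \ N) sdiff_subset (by rw [← card_pos]; omega) (by omega)
    omega

theorem IsTight.erase_nbhd_hasPerfectMatching (hS : IsTight P R C S) (hE : IsElementary P R C)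
    {t : A} (ht : t ∈ nbhd P C S) : HasPerfectMatching P S ((nbhd P C S).erase t) := by
  obtain ⟨hSR, -, hle, hcard⟩ := hS
  refine .of_card_le_card_nbhd (by rw [card_erase_of_mem ht]; omega) fun X hX hne => ?_
  have hsurplus := hE.2 X (hX.trans hSR) hne (by have := card_le_card hX; omega)
  have herase := card_nbhd_le_card_nbhd_erase_add_one P (nbhd P C S) X t
  rw [nbhd_nbhd P C hX] at herase
  omega

theorem card_nbhd_union_le (P : B → A → Prop) (C : Finset A) (S X : Finset B) :
    #(nbhd P C (S ∪ X)) ≤ #(nbhd P C S) + #(nbhd P (C \ nbhd P C S) X) := by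
  refine (card_le_card fun a ha => ?_).trans (card_union_le _ _)
  simp only [mem_union, mem_sdiff, mem_nbhd] at ha ⊢
  grind

theorem IsTight.compl_erase_hasPerfectMatching (hS : IsTight P R C S) (hE : IsElementary P R C)
    {c : B} (hc : c ∈ R \ S) : HasPerfectMatching P ((R \ S).erase c) (C \ nbhd P C S) := by
  obtain ⟨hSR, -, hle, hcard⟩ := hS
  have hRC := hE.1
  refine .of_card_le_card_nbhd ?_ fun X hX hne => ?_
  · rw [card_erase_of_mem hc, card_sdiff_of_subset hSR, card_sdiff_of_subset (nbhd_subset _ _ _)]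
    omega
  have hdisj : Disjoint S X := disjoint_left.2 fun b hb hbX => by grind
  have hlt : #(S ∪ X) < #R :=
    card_lt_card ((ssubset_iff_of_subset (by grind)).2 ⟨c, by grind, by grind⟩)
  have hsurplus := hE.2 (S ∪ X) (by grind) (hne.mono subset_union_right) hlt
  have := card_nbhd_union_le P C S X
  rw [card_union_of_disjoint hdisj] at hsurplus
  omega

theorem IsTight.nbhd_compl (hS : IsTight P R C S) (hE : IsElementary P R C) :
    nbhd (fun a b => P b a) R (C \ nbhd P C S) = R \ S := by
  obtain ⟨hSR, hne, hle, hcard⟩ := hS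
  have hRC := hE.1
  have hpos := hne.card_pos
  have hC := card_sdiff_of_subset (nbhd_subset P C S)
  have hR := card_sdiff_of_subset hSR
  have hsurplus := hE.transpose.2 (C \ nbhd P C S) sdiff_subset
    (by rw [← card_pos]; omega) (by omega)
  refine eq_of_subset_of_card_le (fun b hb => ?_) (by omega)
  simp only [mem_nbhd, mem_sdiff] at hb ⊢
  grind

theorem IsTight.transpose (hS : IsTight P R C S) (hE : IsElementary P R C) :
    IsTight (fun a b => P b a) C R (C \ nbhd P C S) := by
  have hnbhd := hS.nbhd_compl hE
  obtain ⟨hSR, hne, hle, hcard⟩ := hS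
  have hRC := hE.1
  have hpos := hne.card_pos
  have hC := card_sdiff_of_subset (nbhd_subset P C S)
  have hR := card_sdiff_of_subset hSR
  refine ⟨sdiff_subset, by rw [← card_pos]; omega, by omega, ?_⟩
  rw [hnbhd]
  omega

end Elementary

/-! ### Sign-nonsingular matrices -/

section Crossing

variable {P : B → A → Prop} {R S : Finset B} {C T : Finset A} {c c' b₀ : B} {t t' a₀ : A}

theorem HasPerfectMatching.of_crossing (hS : S ⊆ R) (hT : T ⊆ C) (hc : c ∈ R \ S) (ht : t ∈ T)
    (hP : P c t) (hinner : HasPerfectMatching P S (T.erase t))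
    (houter : HasPerfectMatching P ((R \ S).erase c) (C \ T)) : HasPerfectMatching P R C := by
  refine .cons (mem_sdiff.1 hc).1 (hT ht) hP ?_
  refine .of_sdiff (S := S) (T := T.erase t) (by grind) (erase_subset_erase _ hT) hinner ?_
  rwa [show R.erase c \ S = (R \ S).erase c by grind, show C.erase t \ T.erase t = C \ T by grind]

theorem HasPerfectMatching.of_two_crossings (hS : S ⊆ R) (hT : T ⊆ C) (hb₀ : b₀ ∈ S)
    (ha₀ : a₀ ∈ C \ T) (hP₀ : P b₀ a₀) (hc : c ∈ R \ S) (hc' : c' ∈ R \ S) (hcc' : c ≠ c')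
    (ht : t ∈ T) (ht' : t' ∈ T) (htt' : t ≠ t') (hP : P c t) (hP' : P c' t')
    (hinner : HasPerfectMatching P (S.erase b₀) ((T.erase t).erase t'))
    (houter : HasPerfectMatching P (((R \ S).erase c).erase c') ((C \ T).erase a₀)) :
    HasPerfectMatching P R C := by
  refine .cons (mem_sdiff.1 hc).1 (hT ht) hP ?_
  refine .cons (b := c') (a := t') (by grind) (by grind) hP' ?_
  refine .cons (b := b₀) (a := a₀) (by grind) (by grind) hP₀ ?_
  refine .of_sdiff (S := S.erase b₀) (T := (T.erase t).erase t') (by grind) (by grind) hinner ?_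
  rwa [show ((R.erase c).erase c').erase b₀ \ S.erase b₀ = ((R \ S).erase c).erase c' by grind,
    show ((C.erase t).erase t').erase a₀ \ (T.erase t).erase t' = (C \ T).erase a₀ by grind]

end Crossing

section SignNonsingular

variable {s : B → A → ℝ} {R S : Finset B} {C T : Finset A} {c c' b₀ : B} {t t' a₀ : A} {v : A → ℝ}

/-- The bipartite graph of the nonzero entries of a matrix. -/
def support (s : B → A → ℝ) : B → A → Prop := fun b a => s b a ≠ 0

/-- Every matrix with the sign pattern of `s`, or with that pattern after replacing some entries by
zero, is nonsingular as soon as its bipartite graph has a perfect matching. For a 0-1 matrix this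
says that all perfect matchings have the same sign. -/
def IsSignNonsingular (s : B → A → ℝ) (R : Finset B) (C : Finset A) : Prop :=
  ∀ w : B → A → ℝ, (∀ b a, 0 ≤ w b a) → HasPerfectMatching (fun b a => w b a ≠ 0 ∧ s b a ≠ 0) R C →
    HasTrivialKernel (fun b a => w b a * s b a) R C

theorem IsSignNonsingular.transpose (hs : IsSignNonsingular s R C) :
    IsSignNonsingular (fun a b => s b a) C R := fun w hw hmatch =>
  (hs (fun b a => w a b) (fun b a => hw a b) hmatch.transpose).transpose hmatch.card_eq.symm

theorem IsSignNonsingular.reweight (hs : IsSignNonsingular s R C) {m : B → A → ℝ}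
    (hm : ∀ b a, 0 ≤ m b a) : IsSignNonsingular (fun b a => m b a * s b a) R C := by
  intro w hw hmatch
  simp only [← mul_assoc]
  refine hs _ (fun b a => mul_nonneg (hw b a) (hm b a)) (hmatch.mono fun b _ a _ h => ?_)
  exact ⟨mul_ne_zero h.1 (left_ne_zero_of_mul h.2), right_ne_zero_of_mul h.2⟩

/-- Some nonnegative combination of the values of `f` on `T` vanishes and involves `f t`. In a row
outside a cut such a combination can be realized by reweighting. -/
def HasNonnegRelationAt (T : Finset A) (f : A → ℝ) (t : A) : Prop :=
  ∃ p : A → ℝ, (∀ a, 0 ≤ p a) ∧ p t ≠ 0 ∧ ∑ a ∈ T, p a * f a = 0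

theorem HasNonnegRelationAt.of_eq_zero {f : A → ℝ} (hf : f t = 0) : HasNonnegRelationAt T f t := by
  refine ⟨fun a => if a = t then 1 else 0, fun a => by positivity, by simp, ?_⟩
  exact sum_eq_zero fun a _ => by rcases eq_or_ne a t with rfl | h <;> simp [*]

theorem exists_pos_mul_add_mul_eq_zero {α β : ℝ} (h : α * β < 0) :
    ∃ p q : ℝ, 0 < p ∧ 0 < q ∧ p * α + q * β = 0 := by
  refine ⟨|β|, |α|, abs_pos.2 (right_ne_zero_of_mul h.ne), abs_pos.2 (left_ne_zero_of_mul h.ne), ?_⟩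
  rcases mul_neg_iff.1 h with ⟨hα, hβ⟩ | ⟨hα, hβ⟩
  · rw [abs_of_pos hα, abs_of_neg hβ]
    ring
  · rw [abs_of_neg hα, abs_of_pos hβ]
    ring

theorem HasNonnegRelationAt.of_mul_neg {f : A → ℝ} (ht : t ∈ T) (ht' : t' ∈ T)
    (hf : f t * f t' < 0) : HasNonnegRelationAt T f t := by
  obtain ⟨p, q, hp, hq, hpq⟩ := exists_pos_mul_add_mul_eq_zero hf
  have hne : t ≠ t' := by
    rintro rfl
    exact hf.not_ge (mul_self_nonneg _)
  refine ⟨fun a => if a = t then p else if a = t' then q else 0, fun a => by positivity,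
    by simpa using hp.ne', ?_⟩
  rw [sum_eq_add_of_mem t t' ht ht' hne fun a _ ha => by simp [ha.1, ha.2]]
  simpa [hne.symm] using hpq

/-- A kernel vector of the block `S × T` that some row outside `S` can be reweighted to annihilate
extends by zero to a kernel vector of a reweighting of the whole matrix. -/
theorem IsSignNonsingular.eq_zero_of_crossing (hs : IsSignNonsingular s R C) (hS : S ⊆ R)
    (hT : T ⊆ C) (hv : ∀ b ∈ S, ∑ a ∈ T, s b a * v a = 0) (hc : c ∈ R \ S) (ht : t ∈ T)
    (hsct : s c t ≠ 0) (hrel : HasNonnegRelationAt T (fun a => s c a * v a) t)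
    (hinner : HasPerfectMatching (support s) S (T.erase t))
    (houter : HasPerfectMatching (support s) ((R \ S).erase c) (C \ T)) : ∀ a ∈ T, v a = 0 := by
  obtain ⟨p, hp, hpt, hpv⟩ := hrel
  have hcS := (mem_sdiff.1 hc).2
  have hker := hs (fun b a => if a ∉ T ∨ b ∈ S then 1 else if b = c then p a else 0)
    (fun b a => by split_ifs <;> simp [hp a]) ?_ (fun a => if a ∈ T then v a else 0) ?_
  · intro a ha
    simpa [ha] using hker a (hT ha)
  · exact .of_crossing hS hT hc ht (by simp [ht, hcS, hpt, hsct])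
      (hinner.mono fun b hb a _ h => ⟨by simp [hb], h⟩)
      (houter.mono fun b _ a ha h => ⟨by simp [(mem_sdiff.1 ha).2], h⟩)
  · intro b _
    rw [← sum_subset hT fun a _ ha => by simp [ha]]
    by_cases hbS : b ∈ S
    · exact (sum_congr rfl fun a ha => by simp [ha, hbS]).trans (hv b hbS)
    rcases eq_or_ne b c with rfl | hbc
    · exact (sum_congr rfl fun a ha => by simp [ha, hbS, mul_assoc]).trans hpv
    · exact sum_eq_zero fun a ha => by simp [ha, hbS, hbc]

theorem IsSignNonsingular.hasTrivialKernel_erase (hs : IsSignNonsingular s R C) (hS : S ⊆ R)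
    (hT : T ⊆ C) (hc : c ∈ R \ S) (ht : t ∈ T) (hsct : s c t ≠ 0)
    (hinner : HasPerfectMatching (support s) S (T.erase t))
    (houter : HasPerfectMatching (support s) ((R \ S).erase c) (C \ T)) :
    HasTrivialKernel s S (T.erase t) := by
  intro v hv a ha
  have hzero :=
    hs.eq_zero_of_crossing hS hT (v := Function.update v t 0) (fun b hb => ?_) hc ht hsct
    (.of_eq_zero (by simp)) hinner houter a (mem_of_mem_erase ha)
  · rwa [Function.update_of_ne (ne_of_mem_erase ha)] at hzero
  · refine Eq.trans ?_ (hv b hb)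
    rw [← add_sum_erase T _ ht, Function.update_self, mul_zero, zero_add]
    exact sum_congr rfl fun a ha => by rw [Function.update_of_ne (ne_of_mem_erase ha)]

/-- The extension of `v` by `1` at `a₀` and by zero elsewhere would be a kernel vector of a
reweighting with a perfect matching. -/
theorem IsSignNonsingular.false_of_two_crossings (hs : IsSignNonsingular s R C) (hS : S ⊆ R)
    (hT : T ⊆ C) (hb₀ : b₀ ∈ S) (ha₀ : a₀ ∈ C \ T) (hs₀ : s b₀ a₀ ≠ 0)
    (hv : ∀ b ∈ S, ∑ a ∈ T, s b a * v a = -s b a₀) (hc : c ∈ R \ S) (hc' : c' ∈ R \ S)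
    (hcc' : c ≠ c') (ht : t ∈ T) (ht' : t' ∈ T) (htt' : t ≠ t') (hsct : s c t ≠ 0)
    (hsct' : s c' t' ≠ 0) (hrel : HasNonnegRelationAt T (fun a => s c a * v a) t)
    (hrel' : HasNonnegRelationAt T (fun a => s c' a * v a) t')
    (hinner : HasPerfectMatching (support s) (S.erase b₀) ((T.erase t).erase t'))
    (houter : HasPerfectMatching (support s) (((R \ S).erase c).erase c') ((C \ T).erase a₀)) :
    False := by
  obtain ⟨p, hp, hpt, hpv⟩ := hrel
  obtain ⟨p', hp', hpt', hpv'⟩ := hrel'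
  have ⟨ha₀C, ha₀T⟩ := mem_sdiff.1 ha₀
  have hcS := (mem_sdiff.1 hc).2
  have hcS' := (mem_sdiff.1 hc').2
  have hker := hs (fun b a => if b ∈ S ∨ a ∉ insert a₀ T then 1 else if a = a₀ then 0 else
      if b = c then p a else if b = c' then p' a else 0)
    (fun b a => by split_ifs <;> simp [hp a, hp' a]) ?_
    (fun a => if a = a₀ then 1 else if a ∈ T then v a else 0) ?_
  · simpa using hker a₀ ha₀C
  · have hta₀ : t ≠ a₀ := fun h => ha₀T (h ▸ ht)
    have hta₀' : t' ≠ a₀ := fun h => ha₀T (h ▸ ht')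
    refine .of_two_crossings hS hT hb₀ ha₀ (by simp [hb₀, hs₀]) hc hc' hcc' ht ht' htt'
      (by simp [hcS, ht, hta₀, hpt, hsct]) (by simp [hcS', ht', hta₀', hcc'.symm, hpt', hsct'])
      (hinner.mono fun b hb a _ h => ⟨by simp [mem_of_mem_erase hb], h⟩)
      (houter.mono fun b _ a ha h => ⟨?_, h⟩)
    rw [mem_erase, mem_sdiff] at ha
    simp [ha.1, ha.2.2]
  · intro b _
    have hne : ∀ a ∈ T, a ≠ a₀ := fun a ha h => ha₀T (h ▸ ha)
    rw [← sum_subset (insert_subset ha₀C hT) fun a _ ha => by simp_all, sum_insert ha₀T]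
    by_cases hbS : b ∈ S
    · refine (congrArg₂ (· + ·) (by simp [hbS]) (Eq.trans (sum_congr rfl fun a ha => ?_)
        (hv b hbS))).trans (add_neg_cancel (s b a₀))
      simp [hbS, ha, hne a ha]
    rcases eq_or_ne b c with rfl | hbc
    · refine (add_eq_right.2 (by simp [hbS])).trans (Eq.trans (sum_congr rfl fun a ha => ?_) hpv)
      simp [hbS, ha, hne a ha, mul_assoc]
    rcases eq_or_ne b c' with rfl | hbc'
    · refine (add_eq_right.2 (by simp [hbS])).trans (Eq.trans (sum_congr rfl fun a ha => ?_) hpv')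
      simp [hbS, ha, hne a ha, hbc, mul_assoc]
    · refine (add_eq_right.2 (by simp [hbS])).trans (sum_eq_zero fun a ha => ?_)
      simp [hbS, ha, hne a ha, hbc, hbc']

end SignNonsingular

section Contraction

variable {s : B → A → ℝ} {R S : Finset B} {C T : Finset A} {u : A → ℝ} {τ : B → A} {t₀ : A}

theorem IsTight.exists_kernel_vector (hS : IsTight (support s) R C S)
    (hs : IsSignNonsingular s R C) (hE : IsElementary (support s) R C) :
    ∃ u : A → ℝ, (∃ a ∈ nbhd (support s) C S, u a ≠ 0) ∧
      (∀ b ∈ S, ∑ a ∈ nbhd (support s) C S, s b a * u a = 0) ∧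
      ∀ c ∈ R \ S, ∀ t ∈ nbhd (support s) C S, s c t ≠ 0 → u t ≠ 0 := by
  obtain ⟨u, ⟨a, ha, hua⟩, hu⟩ := exists_kernel_vector_of_card_lt s
    (show #S < #(nbhd (support s) C S) by rw [hS.2.2.2]; omega)
  refine ⟨u, ⟨a, ha, hua⟩, hu, fun c hc t ht hsct hut => hua ?_⟩
  exact hs.eq_zero_of_crossing hS.1 (nbhd_subset _ _ _) hu hc ht hsct (.of_eq_zero (by simp [hut]))
    (hS.erase_nbhd_hasPerfectMatching hE ht) (hS.compl_erase_hasPerfectMatching hE hc) a ha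

/-- The contraction of columns `T` to the single column `t₀`, in which the row `c` keeps the entry
in the column `τ c`, scaled by a kernel vector `u` of the contracted block. -/
noncomputable def contraction (s : B → A → ℝ) (u : A → ℝ) (τ : B → A) (t₀ : A) : B → A → ℝ :=
  fun c a => if a = t₀ then s c (τ c) * u (τ c) else s c a

/-- The weights on the original matrix induced by weights `w` on its contraction. -/
noncomputable def expandWeights (S : Finset B) (T : Finset A) (τ : B → A) (t₀ : A)
    (w : B → A → ℝ) : B → A → ℝ :=
  fun b a => if b ∈ S then 1 else if a ∈ T then (if a = τ b then w b t₀ else 0) else w b a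

theorem HasPerfectMatching.expandWeights (hSR : S ⊆ R) (hTC : T ⊆ C) (ht₀ : t₀ ∈ T)
    (hτ : ∀ c, τ c ∈ T) (hinner : ∀ t ∈ T, HasPerfectMatching (support s) S (T.erase t))
    {w : B → A → ℝ} (hw : HasPerfectMatching
      (fun b a => w b a ≠ 0 ∧ contraction s u τ t₀ b a ≠ 0) (R \ S) (insert t₀ (C \ T))) :
    HasPerfectMatching
      (fun b a => BipartitePattern.expandWeights S T τ t₀ w b a ≠ 0 ∧ s b a ≠ 0) R C := by
  obtain ⟨c, hc, ⟨hwc, hsc⟩, hrest⟩ := hw.exists_erase (mem_insert_self _ _)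
  have hcS := (mem_sdiff.1 hc).2
  simp only [contraction, if_true] at hsc
  refine .cons (mem_sdiff.1 hc).1 (hTC (hτ c))
    ⟨by simpa [BipartitePattern.expandWeights, hcS, hτ c] using hwc, left_ne_zero_of_mul hsc⟩ ?_
  refine .of_sdiff (S := S) (T := T.erase (τ c)) (by grind) (by grind)
    ((hinner _ (hτ c)).mono fun b hb a _ h => ⟨by simp [BipartitePattern.expandWeights, hb], h⟩) ?_
  have hne : ∀ a ∈ C \ T, a ≠ t₀ := fun a ha h => (mem_sdiff.1 ha).2 (h ▸ ht₀)
  rw [erase_insert fun h => hne _ h rfl] at hrest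
  rw [show R.erase c \ S = (R \ S).erase c by grind,
    show C.erase (τ c) \ T.erase (τ c) = C \ T by grind [hτ c]]
  refine hrest.mono fun b hb a ha h => ?_
  simpa [BipartitePattern.expandWeights, contraction, (mem_sdiff.1 (mem_of_mem_erase hb)).2,
    (mem_sdiff.1 ha).2, hne a ha] using h

theorem sum_expandWeights_mul (hTC : T ⊆ C) (ht₀ : t₀ ∈ T) (hτ : ∀ c, τ c ∈ T)
    (w : B → A → ℝ) (v : A → ℝ) {b : B} (hb : b ∉ S) :
    ∑ a ∈ C, expandWeights S T τ t₀ w b a * s b a * (if a ∈ T then v t₀ * u a else v a) =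
      ∑ a ∈ insert t₀ (C \ T), w b a * contraction s u τ t₀ b a * v a := by
  rw [← sum_sdiff hTC, add_comm, sum_insert (by simp [ht₀])]
  congr 1
  · rw [sum_eq_single_of_mem (τ b) (hτ b) fun a ha hab => by simp [expandWeights, hb, ha, hab]]
    simp only [expandWeights, contraction, hb, hτ b, if_true, if_false]
    ring
  · refine sum_congr rfl fun a ha => ?_
    have haT := (mem_sdiff.1 ha).2
    have hat₀ : a ≠ t₀ := fun h => haT (h ▸ ht₀)
    simp [expandWeights, contraction, hb, haT, hat₀]

theorem IsSignNonsingular.contraction (hs : IsSignNonsingular s R C) (hSR : S ⊆ R) (hTC : T ⊆ C)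
    (ht₀ : t₀ ∈ T) (hτ : ∀ c, τ c ∈ T) (hzero : ∀ b ∈ S, ∀ a ∈ C \ T, s b a = 0)
    (hinner : ∀ t ∈ T, HasPerfectMatching (support s) S (T.erase t))
    (hu : ∀ b ∈ S, ∑ a ∈ T, s b a * u a = 0) (hu0 : ∃ a ∈ T, u a ≠ 0) :
    IsSignNonsingular (contraction s u τ t₀) (R \ S) (insert t₀ (C \ T)) := by
  intro w hw hmatch v hv
  have hker := hs (expandWeights S T τ t₀ w)
    (fun b a => by unfold expandWeights; split_ifs <;> simp [hw])
    (hmatch.expandWeights hSR hTC ht₀ hτ hinner) (fun a => if a ∈ T then v t₀ * u a else v a) ?_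
  · intro a ha
    rcases mem_insert.1 ha with rfl | ha
    · obtain ⟨t, ht, hut⟩ := hu0
      simpa [ht, hut] using hker t (hTC ht)
    · simpa [(mem_sdiff.1 ha).2] using hker a (mem_sdiff.1 ha).1
  · intro b hb
    by_cases hbS : b ∈ S
    · rw [← sum_sdiff hTC, sum_eq_zero fun a ha => by simp [hzero b hbS a ha], zero_add]
      calc _ = ∑ a ∈ T, v t₀ * (s b a * u a) := sum_congr rfl fun a ha => by
              simp only [expandWeights, hbS, ha, if_true]
              ring
        _ = 0 := by rw [← mul_sum, hu b hbS, mul_zero]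
    · rw [sum_expandWeights_mul hTC ht₀ hτ w v hbS]
      exact hv b (mem_sdiff.2 ⟨hb, hbS⟩)

/-- `Q` extends the bipartite graph `P` between `S` and `T` by a vertex `c₀` whose neighbours are
those vertices of `T` that have a neighbour in `Z`; that is, `Z` is contracted to `c₀`. -/
structure IsContraction (P Q : B → A → Prop) (S Z : Finset B) (T : Finset A) (c₀ : B) : Prop where
  agree : ∀ b ∈ S, ∀ a ∈ T, (Q b a ↔ P b a)
  adj : ∀ a ∈ T, (Q c₀ a ↔ ∃ c ∈ Z, P c a)

theorem IsTight.exists_contraction (hS : IsTight (support s) R C S) (hs : IsSignNonsingular s R C)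
    (hE : IsElementary (support s) R C) (ht₀ : t₀ ∈ nbhd (support s) C S) :
    ∃ s' : B → A → ℝ, IsSignNonsingular s' (R \ S) (insert t₀ (C \ nbhd (support s) C S)) ∧
      IsContraction (fun a b => support s b a) (fun a b => support s' b a)
        (C \ nbhd (support s) C S) (nbhd (support s) C S) (R \ S) t₀ := by
  obtain ⟨u, hu0, hu, hu_cross⟩ := hS.exists_kernel_vector hs hE
  set T := nbhd (support s) C S
  have hτ : ∀ c : B, ∃ t ∈ T, (∃ t ∈ T, s c t ≠ 0) → s c t ≠ 0 := fun c => by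
    by_cases h : ∃ t ∈ T, s c t ≠ 0
    · obtain ⟨t, ht, hsct⟩ := h
      exact ⟨t, ht, fun _ => hsct⟩
    · exact ⟨t₀, ht₀, fun h' => absurd h' h⟩
  choose τ hτT hτ using hτ
  have hzero : ∀ b ∈ S, ∀ a ∈ C \ T, s b a = 0 := fun b hb a ha => by
    by_contra hsba
    exact (mem_sdiff.1 ha).2 (mem_nbhd.2 ⟨(mem_sdiff.1 ha).1, b, hb, hsba⟩)
  refine ⟨contraction s u τ t₀, hs.contraction hS.1 (nbhd_subset _ _ _) ht₀ hτT hzero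
    (fun t ht => hS.erase_nbhd_hasPerfectMatching hE ht) hu hu0, fun a ha c _ => ?_, fun c hc => ?_⟩
  · have hat₀ : a ≠ t₀ := fun h => (mem_sdiff.1 ha).2 (h ▸ ht₀)
    simp only [support, contraction, if_neg hat₀]
  · simp only [support, contraction, if_true]
    exact ⟨fun h => ⟨τ c, hτT c, left_ne_zero_of_mul h⟩,
      fun h => mul_ne_zero (hτ c h) (hu_cross c hc _ (hτT c) (hτ c h))⟩

theorem IsTight.exists_row_contraction (hS : IsTight (support s) R C S)
    (hs : IsSignNonsingular s R C) (hE : IsElementary (support s) R C) {c₀ : B} (hc₀ : c₀ ∈ R \ S) :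
    ∃ s' : B → A → ℝ, IsSignNonsingular s' (insert c₀ S) (nbhd (support s) C S) ∧
      IsContraction (support s) (support s') S (R \ S) (nbhd (support s) C S) c₀ := by
  have hN : nbhd (support fun a b => s b a) R (C \ nbhd (support s) C S) = R \ S := hS.nbhd_compl hE
  obtain ⟨s', hs', hcontr⟩ := IsTight.exists_contraction (s := fun a b => s b a)
    (hS.transpose hE) hs.transpose hE.transpose (t₀ := c₀) (by rw [hN]; exact hc₀)
  simp only [hN, sdiff_sdiff_right_self, inf_eq_inter,
    inter_eq_right.2 (nbhd_subset (support s) C S), inter_eq_right.2 hS.1] at hs' hcontr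
  exact ⟨fun b a => s' a b, hs'.transpose, hcontr⟩

end Contraction

section EdgeDeletion

variable {P : B → A → Prop} {R S : Finset B} {C : Finset A} {b₀ c c' : B} {a₀ t t' : A}

/-- The bipartite graph obtained by deleting the edge between `b₀` and `a₀`. -/
def deleteEdge (P : B → A → Prop) (b₀ : B) (a₀ : A) : B → A → Prop :=
  fun b a => P b a ∧ ¬(b = b₀ ∧ a = a₀)

theorem nbhd_deleteEdge_of_notMem (h : b₀ ∉ S) :
    nbhd (deleteEdge P b₀ a₀) C S = nbhd P C S := by
  ext a
  simp only [mem_nbhd, deleteEdge]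
  grind

theorem nbhd_erase_subset_nbhd_deleteEdge (P : B → A → Prop) (C : Finset A) (S : Finset B) (b₀ : B)
    (a₀ : A) :
    nbhd P (C.erase a₀) S ⊆ nbhd (deleteEdge P b₀ a₀) C S := by
  intro a ha
  simp only [mem_nbhd, mem_erase, deleteEdge] at ha ⊢
  grind

theorem IsBrace.isElementary_deleteEdge (hP : IsBrace P R C) (h3 : 3 ≤ #R) :
    IsElementary (deleteEdge P b₀ a₀) R C := by
  refine ⟨hP.1, fun S hS hne hlt => ?_⟩
  by_cases h2 : #S + 2 ≤ #R
  · have := hP.2 S hS hne h2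
    have := card_nbhd_le_card_nbhd_erase_add_one P C S a₀
    have := card_le_card (nbhd_erase_subset_nbhd_deleteEdge P C S b₀ a₀)
    omega
  · obtain ⟨b, hb, hb₀⟩ : ∃ b ∈ S, b₀ ∉ S.erase b := by
      by_cases hb₀ : b₀ ∈ S
      · exact ⟨b₀, hb₀, notMem_erase _ _⟩
      · exact hne.imp fun b hb => ⟨hb, fun h => hb₀ (mem_of_mem_erase h)⟩
    have hcard := card_erase_of_mem hb
    have hsurplus := hP.2 (S.erase b) ((erase_subset _ _).trans hS) (by rw [← card_pos]; omega)
      (by omega)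
    rw [← nbhd_deleteEdge_of_notMem (a₀ := a₀) hb₀] at hsurplus
    have := card_le_card (nbhd_mono (deleteEdge P b₀ a₀) C (erase_subset b S))
    omega

theorem IsBrace.mem_of_isTight_deleteEdge (hP : IsBrace P R C)
    (hS : IsTight (deleteEdge P b₀ a₀) R C S) : b₀ ∈ S := by
  obtain ⟨hSR, hne, hle, hcard⟩ := hS
  by_contra hb₀
  have := hP.2 S hSR hne hle
  rw [← nbhd_deleteEdge_of_notMem (a₀ := a₀) hb₀] at this
  omega

theorem IsBrace.notMem_nbhd_of_isTight_deleteEdge (hP : IsBrace P R C)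
    (hS : IsTight (deleteEdge P b₀ a₀) R C S) : a₀ ∉ nbhd (deleteEdge P b₀ a₀) C S := by
  obtain ⟨hSR, hne, hle, hcard⟩ := hS
  intro ha₀
  have hsub : nbhd P C S ⊆ nbhd (deleteEdge P b₀ a₀) C S := by
    intro a ha
    rcases eq_or_ne a a₀ with rfl | haa
    · exact ha₀
    · exact nbhd_erase_subset_nbhd_deleteEdge P C S b₀ a₀
        (nbhd_erase P C S a₀ ▸ mem_erase.2 ⟨haa, ha⟩)
  have := hP.2 S hSR hne hle
  have := card_le_card hsub
  omega

theorem IsBrace.erase_nbhd_hasPerfectMatching (hP : IsBrace P R C)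
    (hS : IsTight (deleteEdge P b₀ a₀) R C S) (ht : t ∈ nbhd (deleteEdge P b₀ a₀) C S)
    (ht' : t' ∈ nbhd (deleteEdge P b₀ a₀) C S) (htt' : t ≠ t') :
    HasPerfectMatching (deleteEdge P b₀ a₀) (S.erase b₀)
      (((nbhd (deleteEdge P b₀ a₀) C S).erase t).erase t') := by
  have hb₀ := hP.mem_of_isTight_deleteEdge hS
  obtain ⟨hSR, -, hle, hcard⟩ := hS
  refine .of_card_le_card_nbhd ?_ fun X hX hne => ?_
  · rw [card_erase_of_mem hb₀, card_erase_of_mem (mem_erase.2 ⟨htt'.symm, ht'⟩),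
      card_erase_of_mem ht, hcard]
    omega
  have hXS : X ⊆ S := hX.trans (erase_subset _ _)
  have hsurplus := hP.2 X (hXS.trans hSR) hne (by have := card_le_card hXS; omega)
  rw [← nbhd_deleteEdge_of_notMem (b₀ := b₀) (a₀ := a₀) fun h => notMem_erase _ _ (hX h),
    ← nbhd_nbhd _ C hXS] at hsurplus
  have := card_nbhd_le_card_nbhd_erase_add_one (deleteEdge P b₀ a₀)
    (nbhd (deleteEdge P b₀ a₀) C S) X t
  have := card_nbhd_le_card_nbhd_erase_add_one (deleteEdge P b₀ a₀)
    ((nbhd (deleteEdge P b₀ a₀) C S).erase t) X t'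
  omega

theorem IsBrace.compl_erase_hasPerfectMatching (hP : IsBrace P R C) (ha₀ : a₀ ∈ C)
    (hS : IsTight (deleteEdge P b₀ a₀) R C S) (hc : c ∈ R \ S) (hc' : c' ∈ R \ S) (hcc' : c ≠ c') :
    HasPerfectMatching (deleteEdge P b₀ a₀) (((R \ S).erase c).erase c')
      ((C \ nbhd (deleteEdge P b₀ a₀) C S).erase a₀) := by
  have haT := hP.notMem_nbhd_of_isTight_deleteEdge hS
  obtain ⟨hSR, -, hle, hcard⟩ := hS
  have hRC := hP.1
  have hrows : #(((R \ S).erase c).erase c') + 2 + #S = #R := by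
    rw [card_erase_of_mem (mem_erase.2 ⟨hcc'.symm, hc'⟩), card_erase_of_mem hc,
      card_sdiff_of_subset hSR]
    omega
  refine .of_card_le_card_nbhd ?_ fun X hX hne => ?_
  · rw [card_erase_of_mem (mem_sdiff.2 ⟨ha₀, haT⟩), card_sdiff_of_subset (nbhd_subset _ _ _)]
    omega
  have hXS : X ⊆ R \ S := hX.trans ((erase_subset _ _).trans (erase_subset _ _))
  have hcardX := card_union_of_disjoint (disjoint_of_subset_right hXS disjoint_sdiff)
  have hsurplus := hP.2 (S ∪ X) (union_subset hSR (hXS.trans sdiff_subset))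
    (hne.mono subset_union_right) (by have := card_le_card hX; omega)
  have hsub : nbhd P (C.erase a₀) (S ∪ X) ⊆ nbhd (deleteEdge P b₀ a₀) C S ∪
      nbhd (deleteEdge P b₀ a₀) ((C \ nbhd (deleteEdge P b₀ a₀) C S).erase a₀) X := by
    intro a ha
    simp only [mem_nbhd, mem_erase, mem_union, mem_sdiff, deleteEdge] at ha ⊢
    grind
  have := card_nbhd_le_card_nbhd_erase_add_one P C (S ∪ X) a₀
  have := (card_le_card hsub).trans (card_union_le _ _)
  omega

end EdgeDeletion

section Cut

variable {P : B → A → Prop} {R S : Finset B} {C : Finset A} {b₀ : B} {a₀ : A}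

/-- A cut of a bipartite graph into a block `S × T` with one more column than rows and a block with
one more row than columns, such that `b₀ a₀` is the only edge from `S` to the complement of `T`.
The matchings of both blocks avoiding given vertices are those provided by a tight set `S` of the
graph without the edge `b₀ a₀`. -/
structure IsCut (P : B → A → Prop) (R : Finset B) (C : Finset A) (b₀ : B) (a₀ : A) (S : Finset B)
    (T : Finset A) : Prop where
  rows_subset : S ⊆ R
  cols_subset : T ⊆ C
  row_mem : b₀ ∈ S
  col_mem : a₀ ∈ C \ T
  adj : P b₀ a₀
  eq_of_adj : ∀ b ∈ S, ∀ a ∈ C \ T, P b a → b = b₀ ∧ a = a₀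
  inner : ∀ t ∈ T, HasPerfectMatching P S (T.erase t)
  outer : ∀ c ∈ R \ S, HasPerfectMatching P ((R \ S).erase c) (C \ T)
  inner_pair : ∀ t ∈ T, ∀ t' ∈ T, t ≠ t' →
    HasPerfectMatching P (S.erase b₀) ((T.erase t).erase t')
  outer_pair : ∀ c ∈ R \ S, ∀ c' ∈ R \ S, c ≠ c' →
    HasPerfectMatching P (((R \ S).erase c).erase c') ((C \ T).erase a₀)

theorem IsBrace.isCut (hP : IsBrace P R C) (h3 : 3 ≤ #R) (ha₀ : a₀ ∈ C) (hadj : P b₀ a₀)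
    (hS : IsTight (deleteEdge P b₀ a₀) R C S) :
    IsCut P R C b₀ a₀ S (nbhd (deleteEdge P b₀ a₀) C S) where
  rows_subset := hS.1
  cols_subset := nbhd_subset _ _ _
  row_mem := hP.mem_of_isTight_deleteEdge hS
  col_mem := mem_sdiff.2 ⟨ha₀, hP.notMem_nbhd_of_isTight_deleteEdge hS⟩
  adj := hadj
  eq_of_adj b hb a ha h := by
    by_contra hne
    exact (mem_sdiff.1 ha).2 (mem_nbhd.2 ⟨(mem_sdiff.1 ha).1, b, hb, h, hne⟩)
  inner t ht := (hS.erase_nbhd_hasPerfectMatching (hP.isElementary_deleteEdge h3) ht).mono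
    fun _ _ _ _ => And.left
  outer c hc := (hS.compl_erase_hasPerfectMatching (hP.isElementary_deleteEdge h3) hc).mono
    fun _ _ _ _ => And.left
  inner_pair t ht t' ht' htt' := (hP.erase_nbhd_hasPerfectMatching hS ht ht' htt').mono
    fun _ _ _ _ => And.left
  outer_pair c hc c' hc' hcc' := (hP.compl_erase_hasPerfectMatching ha₀ hS hc hc' hcc').mono
    fun _ _ _ _ => And.left

end Cut

section CutVectors

variable {s : B → A → ℝ} {R S : Finset B} {C T : Finset A} {b₀ c c' : B} {a₀ t t₁ t₂ : A}
  {u x : A → ℝ} {ζ : ℝ}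

/-- A kernel vector `u` of the block `S × T` of a cut, and a vector `x` extending by `1` at `a₀` to
a kernel vector of the rows in `S`. The order of the ratios `x / u` is the order in which the edges
crossing the cut can be laid out without intersections. -/
structure IsCutVectors (s : B → A → ℝ) (R S : Finset B) (T : Finset A) (a₀ : A) (u x : A → ℝ) :
    Prop where
  sum_mul_u : ∀ b ∈ S, ∑ a ∈ T, s b a * u a = 0
  sum_mul_x : ∀ b ∈ S, ∑ a ∈ T, s b a * x a = -s b a₀
  u_ne_zero : ∀ c ∈ R \ S, ∀ t ∈ T, s c t ≠ 0 → u t ≠ 0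

theorem IsCutVectors.sum_mul_sub (hux : IsCutVectors s R S T a₀ u x) (ζ : ℝ) :
    ∀ b ∈ S, ∑ a ∈ T, s b a * (x a - ζ * u a) = -s b a₀ := fun b hb => by
  calc ∑ a ∈ T, s b a * (x a - ζ * u a) = ∑ a ∈ T, s b a * x a - ζ * ∑ a ∈ T, s b a * u a := by
        rw [mul_sum, ← sum_sub_distrib]
        exact sum_congr rfl fun a _ => by ring
    _ = -s b a₀ := by rw [hux.sum_mul_u b hb, hux.sum_mul_x b hb, mul_zero, sub_zero]

theorem IsCut.exists_vectors (hcut : IsCut (support s) R C b₀ a₀ S T)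
    (hs : IsSignNonsingular s R C) (hc : c ∈ R \ S) (ht : t ∈ T) (hct : s c t ≠ 0) :
    ∃ u x : A → ℝ, IsCutVectors s R S T a₀ u x := by
  have hcard := (hcut.inner t ht).card_eq
  have hT := card_erase_add_one ht
  obtain ⟨u, ⟨a, ha, hua⟩, hu⟩ := exists_kernel_vector_of_card_lt s (show #S < #T by omega)
  obtain ⟨y, hy⟩ := (hs.hasTrivialKernel_erase hcut.rows_subset hcut.cols_subset hc ht hct
    (hcut.inner t ht) (hcut.outer c hc)).exists_sum_mul_eq hcard fun b => -s b a₀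
  refine ⟨u, Function.update y t 0, hu, fun b hb => ?_, fun c hc t ht hsct hut => hua ?_⟩
  · refine Eq.trans ?_ (hy b hb)
    rw [← add_sum_erase T _ ht, Function.update_self, mul_zero, zero_add]
    exact sum_congr rfl fun a ha => by rw [Function.update_of_ne (ne_of_mem_erase ha)]
  · exact hs.eq_zero_of_crossing hcut.rows_subset hcut.cols_subset hu hc ht hsct
      (.of_eq_zero (by simp [hut])) (hcut.inner t ht) (hcut.outer c hc) a ha

theorem IsCutVectors.mul_pos (hux : IsCutVectors s R S T a₀ u x) (hs : IsSignNonsingular s R C)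
    (hcut : IsCut (support s) R C b₀ a₀ S T) (hc : c ∈ R \ S) (ht₁ : t₁ ∈ T) (ht₂ : t₂ ∈ T)
    (h₁ : s c t₁ ≠ 0) (h₂ : s c t₂ ≠ 0) : 0 < s c t₁ * u t₁ * (s c t₂ * u t₂) := by
  have hu₁ := hux.u_ne_zero c hc t₁ ht₁ h₁
  have hu₂ := hux.u_ne_zero c hc t₂ ht₂ h₂
  by_contra! hle
  have hneg : s c t₁ * u t₁ * (s c t₂ * u t₂) < 0 := hle.lt_of_ne (by positivity)
  exact hu₁ (hs.eq_zero_of_crossing hcut.rows_subset hcut.cols_subset hux.sum_mul_u hc ht₁ h₁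
    (.of_mul_neg ht₁ ht₂ hneg) (hcut.inner t₁ ht₁) (hcut.outer c hc) t₁ ht₁)

theorem IsCutVectors.false_of_two_crossings (hux : IsCutVectors s R S T a₀ u x)
    (hs : IsSignNonsingular s R C) (hcut : IsCut (support s) R C b₀ a₀ S T) (ζ : ℝ)
    (hc : c ∈ R \ S) (hc' : c' ∈ R \ S) (hcc' : c ≠ c') (ht₁ : t₁ ∈ T) (ht₂ : t₂ ∈ T)
    (ht : t₁ ≠ t₂) (h₁ : s c t₁ ≠ 0) (h₂ : s c' t₂ ≠ 0)
    (hrel : HasNonnegRelationAt T (fun a => s c a * (x a - ζ * u a)) t₁)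
    (hrel' : HasNonnegRelationAt T (fun a => s c' a * (x a - ζ * u a)) t₂) : False :=
  hs.false_of_two_crossings hcut.rows_subset hcut.cols_subset hcut.row_mem hcut.col_mem hcut.adj
    (hux.sum_mul_sub ζ) hc hc' hcc' ht₁ ht₂ ht h₁ h₂ hrel hrel' (hcut.inner_pair _ ht₁ _ ht₂ ht)
    (hcut.outer_pair _ hc _ hc' hcc')

theorem sub_div_mul_self_eq_zero {p q : ℝ} (hq : q ≠ 0) : p - p / q * q = 0 := by
  rw [div_mul_cancel₀ p hq, sub_self]

theorem IsCutVectors.div_ne_div (hux : IsCutVectors s R S T a₀ u x) (hs : IsSignNonsingular s R C)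
    (hcut : IsCut (support s) R C b₀ a₀ S T) (hc : c ∈ R \ S) (hc' : c' ∈ R \ S) (hcc' : c ≠ c')
    (ht₁ : t₁ ∈ T) (ht₂ : t₂ ∈ T) (ht : t₁ ≠ t₂) (h₁ : s c t₁ ≠ 0) (h₂ : s c' t₂ ≠ 0) :
    x t₁ / u t₁ ≠ x t₂ / u t₂ := by
  intro heq
  have hzero₁ := sub_div_mul_self_eq_zero (p := x t₁) (hux.u_ne_zero c hc t₁ ht₁ h₁)
  have hzero₂ := sub_div_mul_self_eq_zero (p := x t₂) (hux.u_ne_zero c' hc' t₂ ht₂ h₂)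
  exact hux.false_of_two_crossings hs hcut (x t₁ / u t₁) hc hc' hcc' ht₁ ht₂ ht h₁ h₂
    (.of_eq_zero (by simp only [hzero₁, mul_zero]))
    (.of_eq_zero (by simp only [heq, hzero₂, mul_zero]))

theorem mul_sub_mul_neg {p q u₁ u₂ x₁ x₂ : ℝ} (h : 0 < p * u₁ * (q * u₂)) (h₁ : x₁ / u₁ < ζ)
    (h₂ : ζ < x₂ / u₂) : p * (x₁ - ζ * u₁) * (q * (x₂ - ζ * u₂)) < 0 := by
  have hu₁ : u₁ ≠ 0 := right_ne_zero_of_mul (left_ne_zero_of_mul h.ne')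
  have hu₂ : u₂ ≠ 0 := right_ne_zero_of_mul (right_ne_zero_of_mul h.ne')
  calc p * (x₁ - ζ * u₁) * (q * (x₂ - ζ * u₂))
      = p * u₁ * (q * u₂) * ((x₁ / u₁ - ζ) * (x₂ / u₂ - ζ)) := by field_simp
    _ < 0 := mul_neg_of_pos_of_neg h (mul_neg_of_neg_of_pos (sub_neg.2 h₁) (sub_pos.2 h₂))

/-- Otherwise `x - ζ * u`, with `ζ` slightly larger than the ratio at `t`, changes sign in both
rows. -/
theorem IsCutVectors.not_le_of_adj (hux : IsCutVectors s R S T a₀ u x)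
    (hs : IsSignNonsingular s R C) (hcut : IsCut (support s) R C b₀ a₀ S T) (hc : c ∈ R \ S)
    (hc' : c' ∈ R \ S) (hcc' : c ≠ c') (ht : t ∈ T) (ht₁ : t₁ ∈ T) (ht₂ : t₂ ∈ T) (htt₁ : t ≠ t₁)
    (htt₂ : t ≠ t₂) (hct : s c t ≠ 0) (hct₁ : s c t₁ ≠ 0) (hct' : s c' t ≠ 0)
    (hct₂ : s c' t₂ ≠ 0) : ¬(x t / u t ≤ x t₁ / u t₁ ∧ x t / u t ≤ x t₂ / u t₂) := by
  rintro ⟨hle₁, hle₂⟩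
  have hlt₁ := hle₁.lt_of_ne (hux.div_ne_div hs hcut hc' hc hcc'.symm ht ht₁ htt₁ hct' hct₁)
  have hlt₂ := hle₂.lt_of_ne (hux.div_ne_div hs hcut hc hc' hcc' ht ht₂ htt₂ hct hct₂)
  obtain ⟨ζ, hζ, hζ'⟩ := exists_between (lt_min hlt₁ hlt₂)
  rw [lt_min_iff] at hζ'
  have hneg := mul_sub_mul_neg (hux.mul_pos hs hcut hc ht ht₁ hct hct₁) hζ hζ'.1
  have hneg' := mul_sub_mul_neg (hux.mul_pos hs hcut hc' ht ht₂ hct' hct₂) hζ hζ'.2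
  rw [mul_comm] at hneg'
  exact hux.false_of_two_crossings hs hcut ζ hc hc' hcc' ht ht₂ htt₂ hct hct₂
    (.of_mul_neg ht ht₁ hneg) (.of_mul_neg ht₂ ht hneg')

end CutVectors

section EdgeCount

variable {P : B → A → Prop} {R : Finset B} {T : Finset A}

/-- The number of edges between `R` and `C`. -/
noncomputable def edgeCount (P : B → A → Prop) (R : Finset B) (C : Finset A) : ℕ :=
  ∑ b ∈ R, #(bipartiteAbove P C b)

theorem edgeCount_transpose (P : B → A → Prop) (R : Finset B) (C : Finset A) :
    edgeCount (fun a b => P b a) C R = edgeCount P R C :=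
  (sum_card_bipartiteAbove_eq_sum_card_bipartiteBelow P).symm

theorem edgeCount_nbhd (P : B → A → Prop) (R : Finset B) (C : Finset A) :
    edgeCount P R (nbhd P C R) = edgeCount P R C := by
  refine sum_congr rfl fun b hb => congrArg card ?_
  ext a
  simp only [mem_bipartiteAbove, mem_nbhd]
  grind

theorem nbhd_nbhd_transpose (P : B → A → Prop) (R : Finset B) (C : Finset A) :
    nbhd (fun a b => P b a) R (nbhd P C R) = nbhd (fun a b => P b a) R C := by
  ext b
  simp only [mem_nbhd]
  grind

/-- By `hz` the leftmost column shares at most one of its neighbours with the later ones, so peeling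
off columns from the left bounds the number of edges by that of a forest. -/
theorem edgeCount_add_one_le_of_order (z : A → ℝ)
    (hz : ∀ c ∈ R, ∀ c' ∈ R, ∀ t ∈ T, ∀ t₁ ∈ T, ∀ t₂ ∈ T, c ≠ c' → t ≠ t₁ → t ≠ t₂ → P c t →
      P c t₁ → P c' t → P c' t₂ → ¬(z t ≤ z t₁ ∧ z t ≤ z t₂)) (hT : T.Nonempty) :
    edgeCount P R T + 1 ≤ #T + #(nbhd (fun a b => P b a) R T) := by
  rw [← edgeCount_transpose]
  induction hn : #T generalizing T with
  | zero => exact absurd hn hT.card_pos.ne'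
  | succ n ih =>
    obtain ⟨t, ht, hmin⟩ := exists_min_image T z hT
    have hsum := add_sum_erase T (fun t => #(bipartiteAbove (fun a b => P b a) R t)) ht
    have hnbhd : nbhd (fun a b => P b a) R T =
        bipartiteAbove (fun a b => P b a) R t ∪ nbhd (fun a b => P b a) R (T.erase t) := by
      conv_lhs => rw [← insert_erase ht]
      exact biUnion_insert
    rcases (T.erase t).eq_empty_or_nonempty with h | h
    · rw [hnbhd, edgeCount, ← hsum]
      simp only [h, nbhd, sum_empty, biUnion_empty, union_empty]
      omega
    · have hinter : #(bipartiteAbove (fun a b => P b a) R t ∩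
          nbhd (fun a b => P b a) R (T.erase t)) ≤ 1 := by
        refine card_le_one.2 fun c hc c' hc' => ?_
        simp only [mem_inter, mem_bipartiteAbove, mem_nbhd, mem_erase] at hc hc'
        obtain ⟨⟨hcR, hct⟩, -, t₁, ⟨hne₁, ht₁⟩, hct₁⟩ := hc
        obtain ⟨⟨hcR', hct'⟩, -, t₂, ⟨hne₂, ht₂⟩, hct₂⟩ := hc'
        by_contra hcc'
        exact hz c hcR c' hcR' t ht t₁ ht₁ t₂ ht₂ hcc' hne₁.symm hne₂.symm hct hct₁ hct' hct₂
          ⟨hmin t₁ ht₁, hmin t₂ ht₂⟩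
      have hrest := ih (T := T.erase t) (by grind) h (by rw [card_erase_of_mem ht, hn]; rfl)
      have hunion := card_union_add_card_inter (bipartiteAbove (fun a b => P b a) R t)
        (nbhd (fun a b => P b a) R (T.erase t))
      rw [edgeCount] at hrest ⊢
      rw [← hnbhd] at hunion
      omega

theorem IsCut.edgeCount_add_one_le {s : B → A → ℝ} {S Q : Finset B} {C : Finset A} {b₀ : B} {a₀ : A}
    (hcut : IsCut (support s) R C b₀ a₀ S T) (hs : IsSignNonsingular s R C) (hQ : Q ⊆ R \ S)
    (hne : (nbhd (support s) T Q).Nonempty) :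
    edgeCount (support s) Q T + 1 ≤
      #(nbhd (support s) T Q) + #(nbhd (fun a b => support s b a) Q T) := by
  have hsub := nbhd_subset (support s) T Q
  obtain ⟨t, ht⟩ := hne
  obtain ⟨htT, c, hc, hct⟩ := mem_nbhd.1 ht
  obtain ⟨u, x, hux⟩ := hcut.exists_vectors hs (hQ hc) htT hct
  rw [← edgeCount_nbhd, ← nbhd_nbhd_transpose (support s) Q T]
  refine edgeCount_add_one_le_of_order (fun t => x t / u t) (fun c hc c' hc' t ht t₁ ht₁ t₂ ht₂
    hcc' htt₁ htt₂ hct hct₁ hct' hct₂ => ?_) ⟨t, ht⟩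
  exact hux.not_le_of_adj hs hcut (hQ hc) (hQ hc') hcc' (hsub ht) (hsub ht₁) (hsub ht₂) htt₁ htt₂
    hct hct₁ hct' hct₂

end EdgeCount

/-! ### Nested cuts -/

section ScaleBlock

variable {s : B → A → ℝ} {R U : Finset B} {C W : Finset A} {l : B → A → ℝ} {a : A} {b : B}

/-- The matrix `s` with the entries of the block `U × W` multiplied by those of `l`. -/
noncomputable def scaleBlock (s : B → A → ℝ) (U : Finset B) (W : Finset A) (l : B → A → ℝ) :
    B → A → ℝ :=
  fun b a => (if b ∈ U ∧ a ∈ W then l b a else 1) * s b a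

theorem scaleBlock_of_mem (hb : b ∈ U) (ha : a ∈ W) : scaleBlock s U W l b a = l b a * s b a := by
  rw [scaleBlock, if_pos ⟨hb, ha⟩]

theorem scaleBlock_of_notMem_left (hb : b ∉ U) : scaleBlock s U W l b a = s b a := by
  rw [scaleBlock, if_neg fun h => hb h.1, one_mul]

theorem scaleBlock_of_notMem_right (ha : a ∉ W) : scaleBlock s U W l b a = s b a := by
  rw [scaleBlock, if_neg fun h => ha h.2, one_mul]

theorem IsSignNonsingular.scaleBlock (hs : IsSignNonsingular s R C) (hl : ∀ b a, 0 ≤ l b a) :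
    IsSignNonsingular (scaleBlock s U W l) R C :=
  hs.reweight fun b a => by split_ifs <;> simp [hl]

theorem HasPerfectMatching.scaleBlock_of_rows {X : Finset B} {Y : Finset A}
    (h : HasPerfectMatching (support s) X Y) (hX : ∀ b ∈ X, b ∉ U) :
    HasPerfectMatching (support (BipartitePattern.scaleBlock s U W l)) X Y :=
  h.mono fun b hb a _ hba => by rwa [support, scaleBlock_of_notMem_left (hX b hb)]

theorem HasPerfectMatching.scaleBlock_of_cols {X : Finset B} {Y : Finset A}
    (h : HasPerfectMatching (support s) X Y) (hY : ∀ a ∈ Y, a ∉ W) :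
    HasPerfectMatching (support (BipartitePattern.scaleBlock s U W l)) X Y :=
  h.mono fun b _ a ha hba => by rwa [support, scaleBlock_of_notMem_right (hY a ha)]

end ScaleBlock

section NestedCut

variable {s : B → A → ℝ} {R S S' : Finset B} {C T T' : Finset A} {b₀ b₁ b₃ c c₂ : B}
  {a₀ a w₁ w₂ w₃ : A} {u x : A → ℝ} {μ : B → ℝ}

/-- Two nested cuts at the same edge `b₀ a₀` such that the difference `(S \ S') × (T \ T')` of their
blocks is elementary. -/
structure IsNestedCut (P : B → A → Prop) (R : Finset B) (C : Finset A) (b₀ : B) (a₀ : A)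
    (S : Finset B) (T : Finset A) (S' : Finset B) (T' : Finset A) : Prop where
  cut : IsCut P R C b₀ a₀ S T
  inner_cut : IsCut P R C b₀ a₀ S' T'
  rows_subset : S' ⊆ S
  cols_subset : T' ⊆ T
  middle : HasPerfectMatching P (S \ S') (T \ T')
  middle_erase : ∀ b ∈ S \ S', ∀ a ∈ T \ T',
    HasPerfectMatching P ((S \ S').erase b) ((T \ T').erase a)

theorem IsNestedCut.eq_zero_of_mem (h : IsNestedCut (support s) R C b₀ a₀ S T S' T') {b : B}
    (hb : b ∈ S') (ha : a ∈ T \ T') : s b a = 0 := by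
  by_contra hne
  have haC := mem_sdiff.2 ⟨h.cut.cols_subset (mem_sdiff.1 ha).1, (mem_sdiff.1 ha).2⟩
  obtain ⟨-, rfl⟩ := h.inner_cut.eq_of_adj b hb a haC hne
  exact (mem_sdiff.1 h.cut.col_mem).2 (mem_sdiff.1 ha).1

theorem IsNestedCut.eq_zero_of_mem_middle (h : IsNestedCut (support s) R C b₀ a₀ S T S' T') {b : B}
    (hb : b ∈ S \ S') : s b a₀ = 0 := by
  by_contra hne
  obtain ⟨rfl, -⟩ := h.cut.eq_of_adj b (mem_sdiff.1 hb).1 a₀ h.cut.col_mem hne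
  exact (mem_sdiff.1 hb).2 h.inner_cut.row_mem

theorem IsNestedCut.mem_sdiff_of_mem (h : IsNestedCut (support s) R C b₀ a₀ S T S' T')
    (hc : c ∈ R \ S) : c ∈ R \ S' :=
  sdiff_subset_sdiff Subset.rfl h.rows_subset hc

theorem IsNestedCut.mem_sdiff_of_mem_middle (h : IsNestedCut (support s) R C b₀ a₀ S T S' T')
    (hb : b₁ ∈ S \ S') : b₁ ∈ R \ S' :=
  sdiff_subset_sdiff h.cut.rows_subset Subset.rfl hb

theorem IsNestedCut.sum_scaleBlock_of_mem (h : IsNestedCut (support s) R C b₀ a₀ S T S' T')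
    (l : B → A → ℝ) (V : A → ℝ) {b : B} (hb : b ∈ S') :
    ∑ a ∈ T, scaleBlock s (S \ S') T' l b a * V a = ∑ a ∈ T', s b a * V a := by
  have hbS : b ∉ S \ S' := fun hb' => (mem_sdiff.1 hb').2 hb
  simp only [scaleBlock_of_notMem_left hbS]
  refine (sum_subset h.cols_subset fun a ha ha' => ?_).symm
  rw [h.eq_zero_of_mem hb (mem_sdiff.2 ⟨ha, ha'⟩), zero_mul]

theorem IsNestedCut.sum_scaleBlock_of_mem_middle (h : IsNestedCut (support s) R C b₀ a₀ S T S' T')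
    (l : B → A → ℝ) (V : A → ℝ) {b : B} (hb : b ∈ S \ S') :
    ∑ a ∈ T, scaleBlock s (S \ S') T' l b a * V a =
      ∑ a ∈ T \ T', s b a * V a + ∑ a ∈ T', l b a * s b a * V a := by
  rw [← sum_sdiff h.cols_subset]
  congr 1
  · exact sum_congr rfl fun a ha => by rw [scaleBlock_of_notMem_right (mem_sdiff.1 ha).2]
  · exact sum_congr rfl fun a ha => by rw [scaleBlock_of_mem hb ha]

theorem HasTrivialKernel.exists_dual {M : B → A → ℝ} {U : Finset B} {Y : Finset A}
    (hM : HasTrivialKernel M U Y) (hUY : #U = #Y) (ha : a ∈ Y) : ∃ μ : B → ℝ, ∀ g : B → ℝ,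
      ∃ y : A → ℝ, (∀ b ∈ U, ∑ a ∈ Y, M b a * y a = g b) ∧ y a = ∑ b ∈ U, μ b * g b := by
  obtain ⟨μ, hμ⟩ := (hM.transpose hUY).exists_sum_mul_eq hUY.symm fun a' => if a' = a then 1 else 0
  refine ⟨μ, fun g => ?_⟩
  obtain ⟨y, hy⟩ := hM.exists_sum_mul_eq hUY g
  refine ⟨y, hy, ?_⟩
  calc y a = ∑ a' ∈ Y, (∑ b ∈ U, M b a' * μ b) * y a' := by
        rw [sum_congr rfl fun a' ha' => by rw [hμ a' ha']]
        simp [ha]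
    _ = ∑ b ∈ U, μ b * ∑ a' ∈ Y, M b a' * y a' := by
        simp only [sum_mul, mul_sum]
        rw [sum_comm]
        exact sum_congr rfl fun b _ => sum_congr rfl fun a' _ => by ring
    _ = ∑ b ∈ U, μ b * g b := sum_congr rfl fun b hb => by rw [hy b hb]

theorem IsNestedCut.hasTrivialKernel_middle (h : IsNestedCut (support s) R C b₀ a₀ S T S' T')
    (hs : IsSignNonsingular s R C) (hc : c ∈ R \ S) (hw : w₁ ∈ T') (hcw : s c w₁ ≠ 0) :
    HasTrivialKernel s (S \ S') (T \ T') := by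
  intro y hy a ha
  have hcU : c ∉ S \ S' := fun hc' => (mem_sdiff.1 hc).2 (mem_sdiff.1 hc').1
  set V : A → ℝ := fun a => if a ∈ T' then 0 else y a with hV
  have hsum : ∀ b ∈ S, ∑ a ∈ T, scaleBlock s (S \ S') T' (fun _ _ => 0) b a * V a = 0 := by
    intro b hb
    by_cases hbS' : b ∈ S'
    · rw [h.sum_scaleBlock_of_mem _ _ hbS']
      exact sum_eq_zero fun a ha => by simp [hV, ha]
    · have hbU := mem_sdiff.2 ⟨hb, hbS'⟩
      simp only [h.sum_scaleBlock_of_mem_middle _ _ hbU, zero_mul, sum_const_zero, add_zero]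
      refine (sum_congr rfl fun a ha => ?_).trans (hy b hbU)
      simp only [hV, if_neg (mem_sdiff.1 ha).2]
  have hzero := (hs.scaleBlock fun _ _ => le_rfl).eq_zero_of_crossing h.cut.rows_subset
    h.cut.cols_subset hsum hc (h.cols_subset hw)
    (by rwa [scaleBlock_of_notMem_left hcU]) (.of_eq_zero (by simp [hV, hw])) ?_
    ((h.cut.outer c hc).scaleBlock_of_rows (by grind)) a (mem_sdiff.1 ha).1
  · simpa [hV, (mem_sdiff.1 ha).2] using hzero
  · refine .of_sdiff h.rows_subset (erase_subset_erase w₁ h.cols_subset)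
      ((h.inner_cut.inner w₁ hw).scaleBlock_of_rows (by grind)) ?_
    rw [show T.erase w₁ \ T'.erase w₁ = T \ T' by grind]
    exact h.middle.scaleBlock_of_cols fun a ha => (mem_sdiff.1 ha).2

/-- The rows of `S \ S'`, with their entries in `T'` scaled by `l`, propagate values on `T'` to
values on `T`. The value obtained at `a` is a combination of the scaling factors with coefficients
governed by the multipliers `μ`. -/
def IsPropagator (s : B → A → ℝ) (S : Finset B) (T : Finset A) (S' : Finset B) (T' : Finset A)
    (a : A) (μ : B → ℝ) : Prop :=
  ∀ (l : B → A → ℝ) (v : A → ℝ), ∃ V : A → ℝ, (∀ a ∈ T', V a = v a) ∧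
    (∀ b ∈ S \ S', ∑ a ∈ T, scaleBlock s (S \ S') T' l b a * V a = 0) ∧
    V a = ∑ q ∈ (S \ S') ×ˢ T', l q.1 q.2 * (μ q.1 * s q.1 q.2 * v q.2)

theorem IsNestedCut.exists_isPropagator (h : IsNestedCut (support s) R C b₀ a₀ S T S' T')
    (hM : HasTrivialKernel s (S \ S') (T \ T')) (ha : a ∈ T \ T') :
    ∃ μ : B → ℝ, IsPropagator s S T S' T' a μ := by
  obtain ⟨μ, hμ⟩ := hM.exists_dual h.middle.card_eq ha
  refine ⟨fun b => -μ b, fun l v => ?_⟩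
  obtain ⟨y, hy, hya⟩ := hμ fun b => -∑ w ∈ T', l b w * s b w * v w
  refine ⟨fun a => if a ∈ T' then v a else y a, fun a ha => if_pos ha, fun b hb => ?_, ?_⟩
  · rw [h.sum_scaleBlock_of_mem_middle _ _ hb,
      sum_congr rfl fun a ha => by rw [if_neg (mem_sdiff.1 ha).2], hy b hb, neg_add_eq_zero]
    exact sum_congr rfl fun a ha => by rw [if_pos ha]
  · simp only [if_neg (mem_sdiff.1 ha).2, hya, sum_product]
    refine sum_congr rfl fun b _ => ?_
    rw [mul_neg, mul_sum, ← sum_neg_distrib]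
    exact sum_congr rfl fun w _ => by ring

theorem IsNestedCut.not_hasNonnegRelationAt (h : IsNestedCut (support s) R C b₀ a₀ S T S' T')
    (hs : IsSignNonsingular s R C) (hux : IsCutVectors s R S' T' a₀ u x)
    (hμ : IsPropagator s S T S' T' a μ) (hc : c ∈ R \ S) (ha : a ∈ T \ T') (hca : s c a ≠ 0)
    (hb : b₁ ∈ S \ S') (hw : w₁ ∈ T') (hbw : s b₁ w₁ ≠ 0) :
    ¬HasNonnegRelationAt ((S \ S') ×ˢ T') (fun q => μ q.1 * s q.1 q.2 * u q.2) (b₁, w₁) := by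
  rintro ⟨p, hp, hpt, hsum⟩
  obtain ⟨V, hV, hVmid, hVa⟩ := hμ (fun b a => p (b, a)) u
  rw [hsum] at hVa
  refine hux.u_ne_zero b₁ (h.mem_sdiff_of_mem_middle hb) w₁ hw hbw ?_
  rw [← hV w₁ hw]
  have hsl : IsSignNonsingular (scaleBlock s (S \ S') T' fun b a => p (b, a)) R C :=
    hs.scaleBlock fun _ _ => hp _
  refine hsl.eq_zero_of_crossing h.cut.rows_subset
    h.cut.cols_subset (fun b hb => ?_) hc (mem_sdiff.1 ha).1
    (by rwa [scaleBlock_of_notMem_right (mem_sdiff.1 ha).2])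
    (.of_eq_zero (by rw [hVa, mul_zero])) ?_
    ((h.cut.outer c hc).scaleBlock_of_rows (by grind)) w₁ (h.cols_subset hw)
  · by_cases hbS' : b ∈ S'
    · rw [h.sum_scaleBlock_of_mem _ _ hbS', ← hux.sum_mul_u b hbS']
      exact sum_congr rfl fun a ha => by rw [hV a ha]
    · exact hVmid b (mem_sdiff.2 ⟨hb, hbS'⟩)
  · refine .cons (b := b₁) (a := w₁) (by grind) (by have := h.cols_subset; grind) (by
      rw [support, scaleBlock_of_mem hb hw]
      exact mul_ne_zero hpt hbw) ?_
    refine .of_sdiff (S := S') (T := T'.erase w₁) (by have := h.rows_subset; grind)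
      (by have := h.cols_subset; grind)
      ((h.inner_cut.inner w₁ hw).scaleBlock_of_rows (by grind)) ?_
    rw [show S.erase b₁ \ S' = (S \ S').erase b₁ by grind,
      show (T.erase a).erase w₁ \ T'.erase w₁ = (T \ T').erase a by grind]
    exact (h.middle_erase b₁ hb a ha).scaleBlock_of_cols (by grind)

theorem IsNestedCut.not_hasNonnegRelationAt_sub
    (h : IsNestedCut (support s) R C b₀ a₀ S T S' T') (hs : IsSignNonsingular s R C)
    (hux : IsCutVectors s R S' T' a₀ u x) (hμ : IsPropagator s S T S' T' a μ) (hc : c ∈ R \ S)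
    (ha : a ∈ T \ T') (hca : s c a ≠ 0) (hc₂ : c₂ ∈ R \ S) (hcc₂ : c ≠ c₂) (hw₂ : w₂ ∈ T')
    (hcw₂ : s c₂ w₂ ≠ 0) (hb : b₁ ∈ S \ S') (hw : w₁ ∈ T') (hbw : s b₁ w₁ ≠ 0) (hww : w₁ ≠ w₂) :
    ¬HasNonnegRelationAt ((S \ S') ×ˢ T')
      (fun q => μ q.1 * s q.1 q.2 * (x q.2 - x w₂ / u w₂ * u q.2)) (b₁, w₁) := by
  rintro ⟨p, hp, hpt, hsum⟩
  obtain ⟨V, hV, hVmid, hVa⟩ := hμ (fun b a => p (b, a)) fun w => x w - x w₂ / u w₂ * u w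
  rw [hsum] at hVa
  have hu := hux.u_ne_zero c₂ (h.mem_sdiff_of_mem hc₂) w₂ hw₂ hcw₂
  have hVw₂ : V w₂ = 0 := (hV w₂ hw₂).trans (sub_div_mul_self_eq_zero hu)
  have ha₀T' : a₀ ∉ T' := (mem_sdiff.1 h.inner_cut.col_mem).2
  have hsl : IsSignNonsingular (scaleBlock s (S \ S') T' fun b a => p (b, a)) R C :=
    hs.scaleBlock fun _ _ => hp _
  refine hsl.false_of_two_crossings h.cut.rows_subset
    h.cut.cols_subset h.cut.row_mem h.cut.col_mem
    (by rw [scaleBlock_of_notMem_right ha₀T']; exact h.cut.adj) (v := V) (fun b hb => ?_)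
    hc hc₂ hcc₂ (mem_sdiff.1 ha).1 (h.cols_subset hw₂) (by grind)
    (by rwa [scaleBlock_of_notMem_right (mem_sdiff.1 ha).2])
    (by rwa [scaleBlock_of_notMem_left (by grind)]) (.of_eq_zero (by rw [hVa, mul_zero]))
    (.of_eq_zero (by rw [hVw₂, mul_zero])) ?_
    ((h.cut.outer_pair c hc c₂ hc₂ hcc₂).scaleBlock_of_rows (by grind))
  · rw [scaleBlock_of_notMem_right ha₀T']
    by_cases hbS' : b ∈ S'
    · rw [h.sum_scaleBlock_of_mem _ _ hbS', ← hux.sum_mul_sub (x w₂ / u w₂) b hbS']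
      exact sum_congr rfl fun a ha => by rw [hV a ha]
    · have hbU := mem_sdiff.2 ⟨hb, hbS'⟩
      rw [h.eq_zero_of_mem_middle hbU, neg_zero]
      exact hVmid b hbU
  · have hb₀ := h.inner_cut.row_mem
    refine .cons (b := b₁) (a := w₁) (by grind) (by have := h.cols_subset; grind) (by
      rw [support, scaleBlock_of_mem hb hw]
      exact mul_ne_zero hpt hbw) ?_
    refine .of_sdiff (S := S'.erase b₀) (T := (T'.erase w₁).erase w₂)
      (by have := h.rows_subset; grind) (by have := h.cols_subset; grind)
      ((h.inner_cut.inner_pair w₁ hw w₂ hw₂ hww).scaleBlock_of_rows (by grind)) ?_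
    rw [show (S.erase b₀).erase b₁ \ S'.erase b₀ = (S \ S').erase b₁ by grind,
      show ((T.erase a).erase w₂).erase w₁ \ (T'.erase w₁).erase w₂ = (T \ T').erase a by grind]
    exact (h.middle_erase b₁ hb a ha).scaleBlock_of_cols (by grind)

theorem IsNestedCut.not_lt_and_lt (h : IsNestedCut (support s) R C b₀ a₀ S T S' T')
    (hs : IsSignNonsingular s R C) (hux : IsCutVectors s R S' T' a₀ u x) (hc : c ∈ R \ S)
    (ha : a ∈ T \ T') (hca : s c a ≠ 0) (hc₂ : c₂ ∈ R \ S) (hcc₂ : c ≠ c₂) (hw₂ : w₂ ∈ T')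
    (hcw₂ : s c₂ w₂ ≠ 0) (hb₁ : b₁ ∈ S \ S') (hw₁ : w₁ ∈ T') (hbw₁ : s b₁ w₁ ≠ 0)
    (hb₃ : b₃ ∈ S \ S') (hw₃ : w₃ ∈ T') (hbw₃ : s b₃ w₃ ≠ 0) :
    ¬(x w₁ / u w₁ < x w₂ / u w₂ ∧ x w₂ / u w₂ < x w₃ / u w₃) := by
  rintro ⟨h₁₂, h₂₃⟩
  have hww : w₁ ≠ w₂ := by
    rintro rfl
    exact h₁₂.false
  obtain ⟨μ, hμ⟩ := h.exists_isPropagator (h.hasTrivialKernel_middle hs hc₂ hw₂ hcw₂) ha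
  have hmem₁ : (b₁, w₁) ∈ (S \ S') ×ˢ T' := mem_product.2 ⟨hb₁, hw₁⟩
  have hmem₃ : (b₃, w₃) ∈ (S \ S') ×ˢ T' := mem_product.2 ⟨hb₃, hw₃⟩
  have hno₁ := h.not_hasNonnegRelationAt hs hux hμ hc ha hca hb₁ hw₁ hbw₁
  have hno₃ := h.not_hasNonnegRelationAt hs hux hμ hc ha hca hb₃ hw₃ hbw₃
  have hpos : 0 < μ b₁ * s b₁ w₁ * u w₁ * (μ b₃ * s b₃ w₃ * u w₃) := by
    rcases lt_trichotomy (μ b₁ * s b₁ w₁ * u w₁ * (μ b₃ * s b₃ w₃ * u w₃)) 0 with hlt | heq | hgt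
    · exact absurd (.of_mul_neg hmem₁ hmem₃ hlt) hno₁
    · rcases mul_eq_zero.1 heq with h₁ | h₃
      · exact absurd (.of_eq_zero h₁) hno₁
      · exact absurd (.of_eq_zero h₃) hno₃
    · exact hgt
  exact h.not_hasNonnegRelationAt_sub hs hux hμ hc ha hca hc₂ hcc₂ hw₂ hcw₂ hb₁ hw₁ hbw₁ hww
    (.of_mul_neg hmem₁ hmem₃ (mul_sub_mul_neg hpos h₁₂ h₂₃))

theorem IsNestedCut.exists_adj_of_ne (h : IsNestedCut (support s) R C b₀ a₀ S T S' T')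
    (hP : IsBrace (support s) R C) (hc₂ : c₂ ∈ R \ S) (hne : (S \ S').Nonempty) :
    ∃ a ∈ T \ T', ∃ c ∈ R \ S, c ≠ c₂ ∧ s c a ≠ 0 := by
  by_contra! hno
  have hSR := h.cut.rows_subset
  have hb₀ : b₀ ∈ (R \ (S \ S')).erase c₂ := by
    have := h.cut.row_mem
    have := h.inner_cut.row_mem
    grind
  have hrows : #((R \ (S \ S')).erase c₂) + 1 + #(S \ S') = #R := by
    rw [card_erase_add_one (by grind), card_sdiff_add_card_eq_card (sdiff_subset.trans hSR)]
  have hsub : nbhd (support s) C ((R \ (S \ S')).erase c₂) ⊆ C \ (T \ T') := by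
    intro a ha
    obtain ⟨haC, b, hb, hba⟩ := mem_nbhd.1 ha
    refine mem_sdiff.2 ⟨haC, fun haM => hba ?_⟩
    by_cases hbS' : b ∈ S'
    · exact h.eq_zero_of_mem hbS' haM
    · exact hno a haM b (by grind) (ne_of_mem_erase hb)
  have hsurplus := hP.2 _ ((erase_subset _ _).trans sdiff_subset) ⟨b₀, hb₀⟩
    (by have := hne.card_pos; omega)
  have hcols := card_sdiff_add_card_eq_card (sdiff_subset.trans h.cut.cols_subset : T \ T' ⊆ C)
  have := card_le_card hsub
  have := h.middle.card_eq
  have := hP.1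
  omega

theorem exists_lt_lt_of_two_lt_card {F : Finset A} {z : A → ℝ} (hz : Set.InjOn z F) (hF : 2 < #F) :
    ∃ w₁ ∈ F, ∃ w₂ ∈ F, ∃ w₃ ∈ F, z w₁ < z w₂ ∧ z w₂ < z w₃ := by
  have hne : F.Nonempty := card_pos.1 (by omega)
  obtain ⟨w₁, h₁, hmin⟩ := exists_min_image F z hne
  obtain ⟨w₃, h₃, hmax⟩ := exists_max_image F z hne
  obtain ⟨w₂, h₂⟩ : ((F.erase w₁).erase w₃).Nonempty := card_pos.1 (by
    have := pred_card_le_card_erase (s := F) (a := w₁)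
    have := pred_card_le_card_erase (s := F.erase w₁) (a := w₃)
    omega)
  simp only [mem_erase] at h₂
  obtain ⟨h₂₃, h₂₁, h₂⟩ := h₂
  exact ⟨w₁, h₁, w₂, h₂, w₃, h₃, (hmin w₂ h₂).lt_of_ne fun heq => h₂₁ (hz h₁ h₂ heq).symm,
    (hmax w₂ h₂).lt_of_ne fun heq => h₂₃ (hz h₂ h₃ heq)⟩

theorem IsNestedCut.card_le_two (h : IsNestedCut (support s) R C b₀ a₀ S T S' T')
    (hP : IsBrace (support s) R C) (hs : IsSignNonsingular s R C) :
    #{w ∈ T' | (∃ b ∈ S \ S', s b w ≠ 0) ∧ ∃ c ∈ R \ S, s c w ≠ 0} ≤ 2 := by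
  set F := {w ∈ T' | (∃ b ∈ S \ S', s b w ≠ 0) ∧ ∃ c ∈ R \ S, s c w ≠ 0}
  by_contra! hcard
  have hmemF : ∀ w ∈ F, w ∈ T' ∧ (∃ b ∈ S \ S', s b w ≠ 0) ∧ ∃ c ∈ R \ S, s c w ≠ 0 :=
    fun w hw => mem_filter.1 hw
  obtain ⟨w, hw⟩ := card_pos.1 (show 0 < #F by omega)
  obtain ⟨hwT, -, c, hc, hcw⟩ := hmemF w hw
  obtain ⟨u, x, hux⟩ := h.inner_cut.exists_vectors hs (h.mem_sdiff_of_mem hc) hwT hcw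
  have hinj : Set.InjOn (fun w => x w / u w) F := by
    intro w hw w' hw' heq
    obtain ⟨hwT, ⟨b, hb, hbw⟩, -⟩ := hmemF w hw
    obtain ⟨hwT', -, c, hc, hcw⟩ := hmemF w' hw'
    by_contra hne
    exact hux.div_ne_div hs h.inner_cut (h.mem_sdiff_of_mem_middle hb) (h.mem_sdiff_of_mem hc)
      (by grind) hwT hwT' hne hbw hcw heq
  obtain ⟨w₁, h₁, w₂, h₂, w₃, h₃, hlt⟩ := exists_lt_lt_of_two_lt_card hinj hcard
  obtain ⟨hw₁, ⟨b₁, hb₁, hbw₁⟩, -⟩ := hmemF w₁ h₁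
  obtain ⟨hw₂, -, c₂, hc₂, hcw₂⟩ := hmemF w₂ h₂
  obtain ⟨hw₃, ⟨b₃, hb₃, hbw₃⟩, -⟩ := hmemF w₃ h₃
  obtain ⟨a, ha, c, hc, hcc₂, hca⟩ := h.exists_adj_of_ne hP hc₂ ⟨b₁, hb₁⟩
  exact h.not_lt_and_lt hs hux hc ha hca hc₂ hcc₂ hw₂ hcw₂ hb₁ hw₁ hbw₁ hb₃ hw₃ hbw₃ hlt

end NestedCut

section Middle

variable {P Q : B → A → Prop} {R S S' : Finset B} {C : Finset A} {a a₀ : A} {b b₀ : B}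

theorem IsElementary.hasPerfectMatching_erase (hE : IsElementary P R C) (hb : b ∈ R) (ha : a ∈ C) :
    HasPerfectMatching P (R.erase b) (C.erase a) := by
  have hcard := card_erase_add_one hb
  have hRC := hE.1
  refine .of_card_le_card_nbhd (by rw [card_erase_of_mem hb, card_erase_of_mem ha, hE.1])
    fun X hX hne => ?_
  have := hE.2 X (hX.trans (erase_subset _ _)) hne (by have := card_le_card hX; omega)
  have := card_nbhd_le_card_nbhd_erase_add_one P C X a
  omega

theorem IsTight.isElementary_sdiff (hS : IsTight Q R C S) (hS' : IsTight Q R C S')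
    (hE : IsElementary Q R C) (hsub : S' ⊆ S)
    (hmax : ∀ X, S' ⊂ X → X ⊂ S → ¬IsTight Q R C X) :
    IsElementary Q (S \ S') (nbhd Q C S \ nbhd Q C S') := by
  obtain ⟨hSR, -, hle, hcard⟩ := hS
  obtain ⟨-, -, -, hcard'⟩ := hS'
  have hrows := card_sdiff_add_card_eq_card hsub
  have hcols := card_sdiff_add_card_eq_card (nbhd_mono Q C hsub)
  refine ⟨by omega, fun X hX hXne hlt => ?_⟩
  have hXS : S' ∪ X ⊆ S := union_subset hsub (hX.trans sdiff_subset)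
  have hunion : #(S' ∪ X) = #S' + #X :=
    card_union_of_disjoint (disjoint_sdiff.mono_right hX)
  have hXpos := hXne.card_pos
  have hsurplus := hE.2 (S' ∪ X) (hXS.trans hSR) (hXne.mono subset_union_right) (by omega)
  have hnot := hmax (S' ∪ X)
    (subset_union_left.ssubset_of_ne fun heq => by rw [← heq] at hunion; omega)
    (hXS.ssubset_of_ne fun heq => by rw [heq] at hunion; omega)
  have hnbhd := card_nbhd_union_le Q (nbhd Q C S) S' X
  rw [nbhd_nbhd Q C hXS, nbhd_nbhd Q C hsub] at hnbhd
  have : #(nbhd Q C (S' ∪ X)) ≠ #(S' ∪ X) + 1 := fun heq =>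
    hnot ⟨hXS.trans hSR, hXne.mono subset_union_right, by omega, heq⟩
  omega

theorem IsBrace.isNestedCut (hP : IsBrace P R C) (h3 : 3 ≤ #R) (ha₀ : a₀ ∈ C) (hadj : P b₀ a₀)
    (hS : IsTight (deleteEdge P b₀ a₀) R C S) (hS' : IsTight (deleteEdge P b₀ a₀) R C S')
    (hsub : S' ⊂ S) (hmax : ∀ X, S' ⊂ X → X ⊂ S → ¬IsTight (deleteEdge P b₀ a₀) R C X) :
    IsNestedCut P R C b₀ a₀ S (nbhd (deleteEdge P b₀ a₀) C S) S'
      (nbhd (deleteEdge P b₀ a₀) C S') := by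
  have hE := hS.isElementary_sdiff hS' (hP.isElementary_deleteEdge h3) hsub.subset hmax
  have herase : ∀ b ∈ S \ S', ∀ a ∈ nbhd (deleteEdge P b₀ a₀) C S \ nbhd (deleteEdge P b₀ a₀) C S',
      HasPerfectMatching P ((S \ S').erase b)
        ((nbhd (deleteEdge P b₀ a₀) C S \ nbhd (deleteEdge P b₀ a₀) C S').erase a) :=
    fun b hb a ha => (hE.hasPerfectMatching_erase hb ha).mono fun _ _ _ _ => And.left
  refine ⟨hP.isCut h3 ha₀ hadj hS, hP.isCut h3 ha₀ hadj hS', hsub.subset,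
    nbhd_mono _ C hsub.subset, ?_, herase⟩
  obtain ⟨a, ha⟩ : (nbhd (deleteEdge P b₀ a₀) C S \ nbhd (deleteEdge P b₀ a₀) C S').Nonempty :=
    card_pos.1 (hE.1 ▸ (sdiff_nonempty.2 hsub.2).card_pos)
  obtain ⟨haS, haS'⟩ := mem_sdiff.1 ha
  obtain ⟨haC, b, hbS, hba⟩ := mem_nbhd.1 haS
  have hb : b ∈ S \ S' := mem_sdiff.2 ⟨hbS, fun hbS' => haS' (mem_nbhd.2 ⟨haC, b, hbS', hba⟩)⟩
  exact .cons hb ha hba.1 (herase b hb a ha)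

end Middle

section Surplus

variable {P : B → A → Prop} {R S X : Finset B} {C : Finset A}

theorem IsElementary.card_add_two_le (hE : IsElementary P R C) (hX : X ⊆ R) (hne : X.Nonempty)
    (hle : #X + 2 ≤ #R) (hnot : ¬IsTight P R C X) : #X + 2 ≤ #(nbhd P C X) := by
  have := hE.2 X hX hne (by omega)
  have : #(nbhd P C X) ≠ #X + 1 := fun h => hnot ⟨hX, hne, hle, h⟩
  omega

theorem IsElementary.isBrace (hE : IsElementary P R C) (h : ∀ X, ¬IsTight P R C X) :
    IsBrace P R C :=
  ⟨hE.1, fun X hX hne hle => hE.card_add_two_le hX hne hle (h X)⟩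

theorem IsTight.nbhd_sdiff_nonempty (hS : IsTight P R C S) (hE : IsElementary P R C) :
    (nbhd P (nbhd P C S) (R \ S)).Nonempty := by
  obtain ⟨hSR, hne, hle, hcard⟩ := hS
  by_contra! hempty
  have hdisj : nbhd P C (R \ S) ⊆ C \ nbhd P C S := fun a ha => by
    obtain ⟨haC, b, hb, hba⟩ := mem_nbhd.1 ha
    refine mem_sdiff.2 ⟨haC, fun haS => ?_⟩
    exact notMem_empty a (hempty ▸ mem_nbhd.2 ⟨haS, b, hb, hba⟩)
  have hpos := hne.card_pos
  have hrows := card_sdiff_of_subset hSR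
  have hsurplus := hE.2 (R \ S) sdiff_subset (by rw [← card_pos]; omega) (by omega)
  have hcols := card_le_card hdisj
  rw [card_sdiff_of_subset (nbhd_subset _ _ _)] at hcols
  have := hE.1
  omega

end Surplus

section ColumnContraction

variable {P Q : B → A → Prop} {R S X : Finset B} {C : Finset A} {t₀ : A}

theorem IsContraction.card_add_two_le (hS : IsTight P R C S) (ht₀ : t₀ ∈ nbhd P C S)
    (hQ : IsContraction (fun a b => P b a) (fun a b => Q b a) (C \ nbhd P C S) (nbhd P C S) (R \ S)
      t₀) (hX : X ⊆ R \ S) (hunion : #(S ∪ X) + 2 ≤ #(nbhd P C (S ∪ X)))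
    (hself : #X + 2 ≤ #(nbhd P C X)) :
    #X + 2 ≤ #(nbhd Q (insert t₀ (C \ nbhd P C S)) X) := by
  set T := nbhd P C S with hT
  by_cases hadj : ∃ c ∈ X, ∃ t ∈ T, P c t
  · obtain ⟨c, hc, t, ht, hct⟩ := hadj
    have hsub : insert t₀ (nbhd P C (S ∪ X) \ T) ⊆ nbhd Q (insert t₀ (C \ T)) X := by
      refine insert_subset (mem_nbhd.2 ⟨mem_insert_self _ _, c, hc,
        (hQ.adj c (hX hc)).2 ⟨t, ht, hct⟩⟩) fun a ha => ?_
      rw [nbhd_union, ← hT, union_sdiff_left, mem_sdiff] at ha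
      obtain ⟨haC, b, hb, hba⟩ := mem_nbhd.1 ha.1
      have haCT := mem_sdiff.2 ⟨haC, ha.2⟩
      exact mem_nbhd.2 ⟨mem_insert_of_mem haCT, b, hb, (hQ.agree a haCT b (hX hb)).2 hba⟩
    have hcard := card_le_card hsub
    rw [card_insert_of_notMem (fun h => (mem_sdiff.1 h).2 ht₀),
      card_sdiff_of_subset (nbhd_mono P C subset_union_left)] at hcard
    have := card_union_of_disjoint (disjoint_sdiff.mono_right hX)
    have := hS.2.2.2
    omega
  · push Not at hadj
    refine hself.trans (card_le_card fun a ha => ?_)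
    obtain ⟨haC, b, hb, hba⟩ := mem_nbhd.1 ha
    have haCT : a ∈ C \ T := mem_sdiff.2 ⟨haC, fun haT => hadj b hb a haT hba⟩
    exact mem_nbhd.2 ⟨mem_insert_of_mem haCT, b, hb, (hQ.agree a haCT b (hX hb)).2 hba⟩

theorem IsContraction.isBrace (hS : IsTight P R C S) (hE : IsElementary P R C)
    (ht₀ : t₀ ∈ nbhd P C S)
    (hQ : IsContraction (fun a b => P b a) (fun a b => Q b a) (C \ nbhd P C S) (nbhd P C S) (R \ S)
      t₀) (hunion : ∀ X ⊆ R \ S, X.Nonempty → ¬IsTight P R C (S ∪ X))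
    (hself : ∀ X ⊆ R \ S, ¬IsTight P R C X) :
    IsBrace Q (R \ S) (insert t₀ (C \ nbhd P C S)) := by
  have hrows := card_sdiff_of_subset hS.1
  have hcols := card_sdiff_of_subset (nbhd_subset P C S)
  have ⟨hSR, _, hle, hcard⟩ := hS
  have hRC := hE.1
  refine ⟨by rw [card_insert_of_notMem (fun h => (mem_sdiff.1 h).2 ht₀)]; omega,
    fun X hX hne hX2 => ?_⟩
  have hcardX := card_union_of_disjoint (disjoint_sdiff.mono_right hX)
  have hXR := hX.trans sdiff_subset
  refine hQ.card_add_two_le hS ht₀ hX ?_ (hE.card_add_two_le hXR hne (by omega) (hself X hX))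
  exact hE.card_add_two_le (union_subset hSR hXR) (hne.mono subset_union_right) (by omega)
    (hunion X hX hne)

end ColumnContraction

section RowContraction

variable {P Q : B → A → Prop} {R S X Z : Finset B} {C T : Finset A} {c₀ : B}

theorem IsContraction.nbhd_eq (hQ : IsContraction P Q S Z (nbhd P C S) c₀) (hX : X ⊆ S) :
    nbhd Q (nbhd P C S) X = nbhd P C X := by
  rw [← nbhd_nbhd P C hX]
  ext a
  simp only [mem_nbhd (C := nbhd P C S)]
  exact and_congr_right fun ha => exists_congr fun b => and_congr_right fun hb =>
    hQ.agree b (hX hb) a ha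

theorem IsContraction.card_nbhd_union_add_card_le (hQ : IsContraction P Q S Z T c₀) (hT : T ⊆ C)
    (hX : X ⊆ insert c₀ S) (hc₀ : c₀ ∈ X) :
    #(nbhd P C (X.erase c₀ ∪ Z)) + #T ≤ #C + #(nbhd Q T X) := by
  have hsub : nbhd P C (X.erase c₀ ∪ Z) ⊆ (C \ T) ∪ nbhd Q T X := fun a ha => by
    obtain ⟨haC, b, hb, hba⟩ := mem_nbhd.1 ha
    by_cases haT : a ∈ T
    · refine mem_union_right _ (mem_nbhd.2 ⟨haT, ?_⟩)
      rcases mem_union.1 hb with hb | hb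
      · obtain ⟨hbc₀, hbX⟩ := mem_erase.1 hb
        exact ⟨b, hbX, (hQ.agree b ((mem_insert.1 (hX hbX)).resolve_left hbc₀) a haT).2 hba⟩
      · exact ⟨c₀, hc₀, (hQ.adj a haT).2 ⟨b, hb, hba⟩⟩
    · exact mem_union_left _ (mem_sdiff.2 ⟨haC, haT⟩)
  have hcard := (card_le_card hsub).trans (card_union_le _ _)
  have := card_sdiff_add_card_eq_card hT
  omega

/-- `X.erase c₀ ∪ (R \ S)` is the preimage of `X` under the contraction. -/
theorem IsContraction.card_nbhd_add_card_le (hS : IsTight P R C S) (hRC : #R = #C)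
    (hQ : IsContraction P Q S (R \ S) (nbhd P C S) c₀) (hX : X ⊆ insert c₀ S) (hc₀ : c₀ ∈ X) :
    #(nbhd P C (X.erase c₀ ∪ (R \ S))) + #X ≤
      #(X.erase c₀ ∪ (R \ S)) + #(nbhd Q (nbhd P C S) X) := by
  have hdisj : Disjoint (X.erase c₀) (R \ S) :=
    disjoint_sdiff.mono_left fun b hb =>
      (mem_insert.1 (hX (mem_of_mem_erase hb))).resolve_left (ne_of_mem_erase hb)
  have := card_union_of_disjoint hdisj
  have := card_erase_add_one hc₀
  have := card_sdiff_add_card_eq_card hS.1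
  have := hS.2.2.2
  have := hQ.card_nbhd_union_add_card_le (nbhd_subset _ _ _) hX hc₀
  omega

theorem IsContraction.isElementary (hS : IsTight P R C S) (hE : IsElementary P R C)
    (hc₀ : c₀ ∈ R \ S) (hQ : IsContraction P Q S (R \ S) (nbhd P C S) c₀) :
    IsElementary Q (insert c₀ S) (nbhd P C S) := by
  have hinsert := card_insert_of_notMem (mem_sdiff.1 hc₀).2
  have ⟨hSR, _, hle, hcard⟩ := hS
  refine ⟨by omega, fun X hX hXne hlt => ?_⟩
  by_cases hcX : c₀ ∈ X
  · have hsub : X.erase c₀ ⊆ S := subset_insert_iff.1 hX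
    have hY : X.erase c₀ ∪ (R \ S) ⊆ R := union_subset (hsub.trans hSR) sdiff_subset
    have := card_union_le (X.erase c₀) (R \ S)
    have := card_erase_add_one hcX
    have := card_sdiff_add_card_eq_card hSR
    have := hE.2 _ hY ⟨c₀, mem_union_right _ hc₀⟩ (by omega)
    have := hQ.card_nbhd_add_card_le hS hE.1 hX hcX
    omega
  · have hXS : X ⊆ S := (subset_insert_iff_of_notMem hcX).1 hX
    rw [hQ.nbhd_eq hXS]
    exact hE.2 X (hXS.trans hSR) hXne (by have := card_le_card hXS; omega)

theorem IsContraction.isTight_of_isTight (hS : IsTight P R C S) (hE : IsElementary P R C)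
    (hc₀ : c₀ ∈ R \ S) (hQ : IsContraction P Q S (R \ S) (nbhd P C S) c₀)
    (hcover : ∀ Y, R \ S ⊆ Y → ¬IsTight P R C Y)
    (hX : IsTight Q (insert c₀ S) (nbhd P C S) X) : X ⊂ S ∧ IsTight P R C X := by
  have hinsert := card_insert_of_notMem (mem_sdiff.1 hc₀).2
  have ⟨hSR, _, hle, hcard⟩ := hS
  obtain ⟨hXS, hXne, hX2, hXcard⟩ := hX
  by_cases hcX : c₀ ∈ X
  · have hsub : X.erase c₀ ⊆ S := subset_insert_iff.1 hXS
    have hY : X.erase c₀ ∪ (R \ S) ⊆ R := union_subset (hsub.trans hSR) sdiff_subset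
    have := card_union_le (X.erase c₀) (R \ S)
    have := card_erase_add_one hcX
    have := card_sdiff_add_card_eq_card hSR
    have := hE.card_add_two_le hY ⟨c₀, mem_union_right _ hc₀⟩ (by omega)
      (hcover _ subset_union_right)
    have := hQ.card_nbhd_add_card_le hS hE.1 hXS hcX
    omega
  · have hXS : X ⊆ S := (subset_insert_iff_of_notMem hcX).1 hXS
    rw [hQ.nbhd_eq hXS] at hXcard
    refine ⟨hXS.ssubset_of_ne fun h => ?_, hXS.trans hSR, hXne, by omega, hXcard⟩
    rw [h] at hX2
    omega

theorem IsContraction.isTight (hc₀ : c₀ ∈ R \ S)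
    (hQ : IsContraction P Q S (R \ S) (nbhd P C S) c₀) (hX : IsTight P R C X) (hXS : X ⊂ S) :
    IsTight Q (insert c₀ S) (nbhd P C S) X := by
  refine ⟨hXS.subset.trans (subset_insert _ _), hX.2.1, ?_, by
    rw [hQ.nbhd_eq hXS.subset]; exact hX.2.2.2⟩
  rw [card_insert_of_notMem (mem_sdiff.1 hc₀).2]
  have := card_lt_card hXS
  omega

end RowContraction

section Counting

variable {P Q : B → A → Prop} {R S Z : Finset B} {C T T' : Finset A} {b₀ c₀ : B} {a₀ : A}

theorem edgeCount_add_edgeCount_sdiff (P : B → A → Prop) (C : Finset A) (h : S ⊆ R) :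
    edgeCount P S C + edgeCount P (R \ S) C = edgeCount P R C := by
  rw [add_comm]
  exact sum_sdiff h

theorem edgeCount_add_edgeCount_sdiff_right (P : B → A → Prop) (R : Finset B) (h : T ⊆ C) :
    edgeCount P R T + edgeCount P R (C \ T) = edgeCount P R C := by
  simp only [← edgeCount_transpose P R]
  exact edgeCount_add_edgeCount_sdiff _ R h

theorem edgeCount_congr (h : ∀ b ∈ R, ∀ a ∈ C, (P b a ↔ Q b a)) :
    edgeCount P R C = edgeCount Q R C :=
  sum_congr rfl fun b hb => congrArg card (filter_congr fun a ha => h b hb a ha)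

theorem nbhd_congr (h : ∀ b ∈ R, ∀ a ∈ C, (P b a ↔ Q b a)) : nbhd P C R = nbhd Q C R :=
  biUnion_congr rfl fun b hb => filter_congr fun a ha => h b hb a ha

theorem card_nbhd_add_card_nbhd_sdiff (P : B → A → Prop) (R : Finset B) (h : T' ⊆ T) :
    #(nbhd P T' R) + #(nbhd P (T \ T') R) = #(nbhd P T R) := by
  rw [← card_union_of_disjoint
    (disjoint_sdiff.mono (nbhd_subset P T' R) (nbhd_subset P (T \ T') R))]
  congr 1
  ext a
  simp only [mem_union, mem_nbhd, mem_sdiff]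
  grind

theorem IsContraction.mono (hQ : IsContraction P Q S Z T c₀) {S' : Finset B} (hS : S' ⊆ S)
    (hT : T' ⊆ T) : IsContraction P Q S' Z T' c₀ where
  agree b hb a ha := hQ.agree b (hS hb) a (hT ha)
  adj a ha := hQ.adj a (hT ha)

theorem IsContraction.edgeCount_insert (hQ : IsContraction P Q S Z T c₀) (hc₀ : c₀ ∉ S) :
    edgeCount Q (insert c₀ S) T = #(nbhd P T Z) + edgeCount P S T := by
  rw [edgeCount, sum_insert hc₀, ← edgeCount, edgeCount_congr hQ.agree]
  congr 2
  ext a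
  rw [mem_bipartiteAbove, mem_nbhd]
  exact and_congr_right (hQ.adj a)

theorem IsContraction.edgeCount_insert_transpose
    (hQ : IsContraction (fun a b => P b a) (fun a b => Q b a) T T' S a₀) (ha₀ : a₀ ∉ T) :
    edgeCount Q S (insert a₀ T) = #(nbhd (fun a b => P b a) S T') + edgeCount P S T := by
  rw [← edgeCount_transpose Q, hQ.edgeCount_insert ha₀, edgeCount_transpose]

theorem edgeCount_deleteEdge_add_one (hb₀ : b₀ ∈ R) (ha₀ : a₀ ∈ C) (hadj : P b₀ a₀) :
    edgeCount (deleteEdge P b₀ a₀) R C + 1 = edgeCount P R C := by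
  have hrest : ∀ b ∈ R.erase b₀,
      #(bipartiteAbove (deleteEdge P b₀ a₀) C b) = #(bipartiteAbove P C b) := fun b hb =>
    congrArg card (filter_congr fun a _ =>
      and_iff_left fun h => ne_of_mem_erase hb h.1)
  have hrow : bipartiteAbove (deleteEdge P b₀ a₀) C b₀ = (bipartiteAbove P C b₀).erase a₀ := by
    ext a
    simp only [mem_bipartiteAbove, mem_erase, deleteEdge]
    tauto
  have hmem : a₀ ∈ bipartiteAbove P C b₀ := (mem_bipartiteAbove P).2 ⟨ha₀, hadj⟩
  rw [edgeCount, edgeCount, ← add_sum_erase _ _ hb₀, ← add_sum_erase _ _ hb₀, sum_congr rfl hrest,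
    hrow, ← card_erase_add_one hmem]
  ring

end Counting

/-! ### The edge bound for braces -/

section EdgeBound

variable {P Q : B → A → Prop} {s s' : B → A → ℝ} {R S S' Z N : Finset B} {C T T' : Finset A}
  {b₀ c₀ : B} {a₀ : A}

theorem IsContraction.card_nbhd_transpose_le (hQ : IsContraction P Q S Z T c₀) :
    #(nbhd (fun a b => P b a) S T) ≤ #(nbhd (fun a b => Q b a) (insert c₀ S) T) := by
  refine card_le_card fun b hb => ?_
  obtain ⟨hbS, a, ha, hba⟩ := mem_nbhd.1 hb
  exact mem_nbhd.2 ⟨mem_insert_of_mem hbS, a, ha, (hQ.agree b hbS a ha).2 hba⟩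

theorem IsContraction.card_nbhd_transpose_add_one_le (hQ : IsContraction P Q S Z T c₀)
    (hc₀ : c₀ ∉ S) (hne : (nbhd P T Z).Nonempty) :
    #(nbhd (fun a b => P b a) S T) + 1 ≤ #(nbhd (fun a b => Q b a) (insert c₀ S) T) := by
  rw [← card_insert_of_notMem fun h => hc₀ (nbhd_subset _ _ _ h)]
  refine card_le_card (insert_subset ?_ fun b hb => ?_)
  · obtain ⟨a, ha⟩ := hne
    obtain ⟨haT, hadj⟩ := mem_nbhd.1 ha
    exact mem_nbhd.2 ⟨mem_insert_self _ _, a, haT, (hQ.adj a haT).2 hadj⟩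
  · obtain ⟨hbS, a, ha, hba⟩ := mem_nbhd.1 hb
    exact mem_nbhd.2 ⟨mem_insert_of_mem hbS, a, ha, (hQ.agree b hbS a ha).2 hba⟩

theorem deleteEdge_iff_of_notMem (hb₀ : b₀ ∉ N) (hb : b ∈ N) :
    deleteEdge P b₀ a₀ b a ↔ P b a :=
  and_iff_left fun h : b = b₀ ∧ a = a₀ => hb₀ (h.1 ▸ hb)

theorem IsBrace.not_isTight_deleteEdge_of_subset (hP : IsBrace P R C) (h3 : 3 ≤ #R) (ha₀ : a₀ ∈ C)
    (hS : IsTight (deleteEdge P b₀ a₀) R C S) (hZ : R \ S ⊆ Z) :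
    ¬IsTight (deleteEdge P b₀ a₀) R C Z := fun hZt => by
  rw [← (hP.isElementary_deleteEdge (b₀ := b₀) (a₀ := a₀) h3).nbhd_self (by omega)] at ha₀
  obtain ⟨haC, b, hb, hba⟩ := mem_nbhd.1 ha₀
  by_cases hbS : b ∈ S
  · exact hP.notMem_nbhd_of_isTight_deleteEdge hS (mem_nbhd.2 ⟨haC, b, hbS, hba⟩)
  · exact hP.notMem_nbhd_of_isTight_deleteEdge hZt
      (mem_nbhd.2 ⟨haC, b, hZ (mem_sdiff.2 ⟨hb, hbS⟩), hba⟩)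

theorem IsBrace.edgeCount_deleteEdge_add_one_le (hP : IsBrace (support s) R C)
    (hs : IsSignNonsingular s R C) (h3 : 3 ≤ #R) (ha₀ : a₀ ∈ C) (hadj : support s b₀ a₀)
    (hS : IsTight (deleteEdge (support s) b₀ a₀) R C S)
    (hT : T = nbhd (deleteEdge (support s) b₀ a₀) C S) (hN : N ⊆ R \ S)
    (hne : (nbhd (deleteEdge (support s) b₀ a₀) T N).Nonempty) :
    edgeCount (deleteEdge (support s) b₀ a₀) N T + 1 ≤
      #(nbhd (deleteEdge (support s) b₀ a₀) T N) +
        #(nbhd (fun a b => deleteEdge (support s) b₀ a₀ b a) N T) := by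
  have hb₀ : b₀ ∉ N := fun h => (mem_sdiff.1 (hN h)).2 (hP.mem_of_isTight_deleteEdge hS)
  rw [nbhd_deleteEdge_of_notMem hb₀] at hne
  rw [edgeCount_congr fun _ hb _ _ => deleteEdge_iff_of_notMem hb₀ hb,
    nbhd_deleteEdge_of_notMem hb₀, nbhd_congr fun _ _ _ hb => deleteEdge_iff_of_notMem hb₀ hb]
  subst hT
  exact (hP.isCut h3 ha₀ hadj hS).edgeCount_add_one_le hs hN hne

theorem IsBrace.card_nbhd_inter_nbhd_le_two (hP : IsBrace (support s) R C)
    (hs : IsSignNonsingular s R C) (h3 : 3 ≤ #R) (ha₀ : a₀ ∈ C) (hadj : support s b₀ a₀)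
    (hS : IsTight (deleteEdge (support s) b₀ a₀) R C S)
    (hS' : IsTight (deleteEdge (support s) b₀ a₀) R C S') (hsub : S' ⊂ S)
    (hmax : ∀ X, S' ⊂ X → X ⊂ S → ¬IsTight (deleteEdge (support s) b₀ a₀) R C X)
    (hT' : T' = nbhd (deleteEdge (support s) b₀ a₀) C S') :
    #(nbhd (deleteEdge (support s) b₀ a₀) T' (S \ S') ∩
      nbhd (deleteEdge (support s) b₀ a₀) T' (R \ S)) ≤ 2 := by
  have hcut := hP.isNestedCut h3 ha₀ hadj hS hS' hsub hmax
  refine (card_le_card fun w hw => ?_).trans (hcut.card_le_two hP hs)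
  obtain ⟨hwN, hwZ⟩ := mem_inter.1 hw
  obtain ⟨hwT, b, hb, hbw⟩ := mem_nbhd.1 hwN
  obtain ⟨-, c, hc, hcw⟩ := mem_nbhd.1 hwZ
  exact mem_filter.2 ⟨hT' ▸ hwT, ⟨b, hb, hbw.1⟩, c, hc, hcw.1⟩

theorem IsBrace.edgeCount_cross_le (hP : IsBrace (support s) R C)
    (hs : IsSignNonsingular s R C) (h3 : 3 ≤ #R) (ha₀ : a₀ ∈ C) (hadj : support s b₀ a₀)
    (hS : IsTight (deleteEdge (support s) b₀ a₀) R C S)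
    (hS' : IsTight (deleteEdge (support s) b₀ a₀) R C S') (hsub : S' ⊂ S)
    (hmax : ∀ X, S' ⊂ X → X ⊂ S → ¬IsTight (deleteEdge (support s) b₀ a₀) R C X)
    (hT' : T' = nbhd (deleteEdge (support s) b₀ a₀) C S') (hc₀ : c₀ ∉ S)
    (hQ : IsContraction (deleteEdge (support s) b₀ a₀) Q (S \ S') (R \ S) T' c₀) :
    edgeCount (deleteEdge (support s) b₀ a₀) (S \ S') T' +
        #(nbhd (deleteEdge (support s) b₀ a₀) T' (R \ S)) ≤
      #(nbhd (deleteEdge (support s) b₀ a₀) T' (R \ S')) +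
        #(nbhd (fun a b => Q b a) (insert c₀ (S \ S')) T') := by
  have hcross := hP.edgeCount_deleteEdge_add_one_le (N := S \ S') hs h3 ha₀ hadj hS' hT'
    (sdiff_subset_sdiff hS.1 subset_rfl)
  have hinter := hP.card_nbhd_inter_nbhd_le_two hs h3 ha₀ hadj hS hS' hsub hmax hT'
  set P := deleteEdge (support s) b₀ a₀
  have hunion := card_union_add_card_inter (nbhd P T' (S \ S')) (nbhd P T' (R \ S))
  rw [← nbhd_union, union_comm, sdiff_union_sdiff_cancel hS.1 hsub.subset] at hunion
  have hN := card_le_card (nbhd_mono P T' (sdiff_subset_sdiff hS.1 (subset_refl S')))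
  have hZ := card_le_card (nbhd_mono P T' (sdiff_subset_sdiff (subset_refl R) hsub.subset))
  have hle := hQ.card_nbhd_transpose_le
  rcases (nbhd P T' (S \ S')).eq_empty_or_nonempty with hNe | hNe
  · have hzero : edgeCount P (S \ S') T' = 0 := by
      rw [← edgeCount_nbhd, hNe]
      simp [edgeCount, bipartiteAbove]
    omega
  · have := hcross hNe
    rcases (nbhd P T' (R \ S)).eq_empty_or_nonempty with hZe | hZe
    · have := card_eq_zero.2 hZe
      omega
    · have := hQ.card_nbhd_transpose_add_one_le (fun h => hc₀ (mem_sdiff.1 h).1) hZe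
      omega

/-- The induction hypothesis of the edge bound for sign-nonsingular braces: a sign-nonsingular brace
with `m` rows, `2 ≤ m < n`, has at most `4 * m - 4` edges. -/
def EdgeBoundBelow (A B : Type*) (n : ℕ) : Prop :=
  ∀ (s : B → A → ℝ) (R : Finset B) (C : Finset A), IsSignNonsingular s R C →
    IsBrace (support s) R C → 2 ≤ #R → #R < n → edgeCount (support s) R C + 4 ≤ 4 * #R

theorem IsSignNonsingular.exists_deleteEdge (hs : IsSignNonsingular s R C) (b₀ : B) (a₀ : A) :
    ∃ s', IsSignNonsingular s' R C ∧ support s' = deleteEdge (support s) b₀ a₀ := by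
  refine ⟨BipartitePattern.scaleBlock s {b₀} {a₀} fun _ _ => 0, hs.scaleBlock fun _ _ => le_rfl, ?_⟩
  ext b a
  by_cases h : b = b₀ ∧ a = a₀ <;> simp [support, BipartitePattern.scaleBlock, deleteEdge, h]

theorem EdgeBoundBelow.edgeCount_add_card_nbhd_le_of_forall_not_isTight
    (IH : EdgeBoundBelow A B #R) (hP : IsBrace (support s) R C) (hs : IsSignNonsingular s R C)
    (h3 : 3 ≤ #R) (ha₀ : a₀ ∈ C) (hS : IsTight (deleteEdge (support s) b₀ a₀) R C S)
    (hT : T = nbhd (deleteEdge (support s) b₀ a₀) C S)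
    (hnot : ∀ X, X ⊂ S → ¬IsTight (deleteEdge (support s) b₀ a₀) R C X) :
    edgeCount (deleteEdge (support s) b₀ a₀) S T +
      #(nbhd (deleteEdge (support s) b₀ a₀) T (R \ S)) ≤ 4 * #S := by
  have hE := hP.isElementary_deleteEdge (b₀ := b₀) (a₀ := a₀) h3
  have hcover := fun Z => hP.not_isTight_deleteEdge_of_subset h3 ha₀ hS (Z := Z)
  have ⟨_, hne, hle, hcard⟩ := hS
  obtain ⟨c₀, hc₀⟩ := sdiff_nonempty_of_card_lt_card (show #S < #R by omega)
  obtain ⟨s₀, hs₀, hs₀P⟩ := hs.exists_deleteEdge b₀ a₀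
  generalize deleteEdge (support s) b₀ a₀ = D at *
  subst hs₀P hT
  obtain ⟨s₁, hs₁, hQ⟩ := hS.exists_row_contraction hs₀ hE hc₀
  have hbrace : IsBrace (support s₁) (insert c₀ S) (nbhd (support s₀) C S) :=
    (hQ.isElementary hS hE hc₀).isBrace fun X hX =>
      have ⟨hXS, hXt⟩ := hQ.isTight_of_isTight hS hE hc₀ hcover hX
      hnot X hXS hXt
  have hcount := hQ.edgeCount_insert (mem_sdiff.1 hc₀).2
  have hinsert := card_insert_of_notMem (mem_sdiff.1 hc₀).2
  have hpos := hne.card_pos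
  have := IH s₁ _ _ hs₁ hbrace (by omega) (by omega)
  omega

theorem IsContraction.isBrace_of_maximal {Q' : B → A → Prop} {t₀ : A} (hS : IsTight P R C S)
    (hE : IsElementary P R C) (hc₀ : c₀ ∈ R \ S)
    (hQ : IsContraction P Q S (R \ S) (nbhd P C S) c₀)
    (hcover : ∀ Y, R \ S ⊆ Y → ¬IsTight P R C Y) (hmem : ∀ Y, IsTight P R C Y → b₀ ∈ Y)
    (hS' : IsTight P R C S') (hsub : S' ⊂ S) (hmax : ∀ X, S' ⊂ X → X ⊂ S → ¬IsTight P R C X)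
    (ht₀ : t₀ ∈ nbhd P C S')
    (hQ' : IsContraction (fun a b => Q b a) (fun a b => Q' b a) (nbhd P C S \ nbhd P C S')
      (nbhd P C S') (insert c₀ S \ S') t₀) :
    IsBrace Q' (insert c₀ S \ S') (insert t₀ (nbhd P C S \ nbhd P C S')) := by
  rw [← hQ.nbhd_eq hsub.subset] at ht₀ hQ' ⊢
  refine hQ'.isBrace (hQ.isTight hc₀ hS' hsub) (hQ.isElementary hS hE hc₀) ht₀
    (fun X hX hXne hXt => ?_) fun X hX hXt => ?_
  · obtain ⟨hXS, hXt⟩ := hQ.isTight_of_isTight hS hE hc₀ hcover hXt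
    refine hmax _ (subset_union_left.ssubset_of_ne fun h => ?_) hXS hXt
    obtain ⟨b, hb⟩ := hXne
    exact (mem_sdiff.1 (hX hb)).2 (h ▸ mem_union_right _ hb)
  · exact (mem_sdiff.1 (hX (hmem X (hQ.isTight_of_isTight hS hE hc₀ hcover hXt).2))).2 (hmem S' hS')

theorem edgeCount_add_card_nbhd_eq (hsub : S' ⊆ S) (hT : T = nbhd P C S)
    (hT' : T' = nbhd P C S') :
    edgeCount P S T + #(nbhd P T (R \ S)) =
      edgeCount P S' T' + (edgeCount P (S \ S') T' + #(nbhd P T' (R \ S))) +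
        (edgeCount P (S \ S') (T \ T') + #(nbhd P (T \ T') (R \ S))) := by
  have hTT : T' ⊆ T := hT ▸ hT' ▸ nbhd_mono P C hsub
  rw [← edgeCount_add_edgeCount_sdiff P T hsub,
    ← edgeCount_add_edgeCount_sdiff_right P (S \ S') hTT,
    ← card_nbhd_add_card_nbhd_sdiff P _ hTT, ← edgeCount_nbhd P S' T, hT, nbhd_nbhd P C hsub, hT']
  ring

theorem IsBrace.exists_isBrace_middle (hP : IsBrace (support s) R C)
    (hs : IsSignNonsingular s R C) (h3 : 3 ≤ #R) (ha₀ : a₀ ∈ C)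
    (hS : IsTight (deleteEdge (support s) b₀ a₀) R C S)
    (hT : T = nbhd (deleteEdge (support s) b₀ a₀) C S)
    (hS' : IsTight (deleteEdge (support s) b₀ a₀) R C S') (hsub : S' ⊂ S)
    (hmax : ∀ X, S' ⊂ X → X ⊂ S → ¬IsTight (deleteEdge (support s) b₀ a₀) R C X)
    (hT' : T' = nbhd (deleteEdge (support s) b₀ a₀) C S') (hc₀ : c₀ ∈ R \ S) :
    ∃ (Q : B → A → Prop) (s₂ : B → A → ℝ) (t₀ : A), t₀ ∈ T' ∧
      IsContraction (deleteEdge (support s) b₀ a₀) Q S (R \ S) T c₀ ∧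
      IsContraction (fun a b => Q b a) (fun a b => support s₂ b a) (T \ T') T'
        (insert c₀ (S \ S')) t₀ ∧
      IsSignNonsingular s₂ (insert c₀ (S \ S')) (insert t₀ (T \ T')) ∧
      IsBrace (support s₂) (insert c₀ (S \ S')) (insert t₀ (T \ T')) := by
  have hE := hP.isElementary_deleteEdge (b₀ := b₀) (a₀ := a₀) h3
  have hcover := fun Z => hP.not_isTight_deleteEdge_of_subset h3 ha₀ hS (Z := Z)
  have hmem := fun Y => hP.mem_of_isTight_deleteEdge (b₀ := b₀) (a₀ := a₀) (S := Y)
  obtain ⟨s₀, hs₀, hs₀P⟩ := hs.exists_deleteEdge b₀ a₀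
  generalize deleteEdge (support s) b₀ a₀ = D at *
  subst hs₀P
  obtain ⟨s₁, hs₁, hQ⟩ := hS.exists_row_contraction hs₀ hE hc₀
  have hT'Q : T' = nbhd (support s₁) T S' := by rw [hT', hT, hQ.nbhd_eq hsub.subset]
  obtain ⟨t₀, ht₀⟩ : T'.Nonempty := by
    rw [← card_pos, hT', hS'.2.2.2]
    omega
  obtain ⟨s₂, hs₂, hQ'⟩ := (hQ.isTight hc₀ hS' hsub).exists_contraction hs₁
    (hQ.isElementary hS hE hc₀) (t₀ := t₀) (by rwa [← hT, ← hT'Q])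
  rw [← hT, ← hT'Q] at hs₂ hQ'
  have hbrace : IsBrace (support s₂) (insert c₀ S \ S') (insert t₀ (T \ T')) := by
    rw [hT, hT'] at hQ' ⊢
    exact hQ.isBrace_of_maximal hS hE hc₀ hcover hmem hS' hsub hmax (hT' ▸ ht₀) hQ'
  rw [insert_sdiff_of_notMem _ fun h => (mem_sdiff.1 hc₀).2 (hsub.subset h)] at hs₂ hQ' hbrace
  exact ⟨_, s₂, t₀, ht₀, hT ▸ hQ, hQ', hs₂, hbrace⟩

theorem EdgeBoundBelow.edgeCount_add_card_nbhd_le_of_isTight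
    (IH : EdgeBoundBelow A B #R) (hP : IsBrace (support s) R C) (hs : IsSignNonsingular s R C)
    (h3 : 3 ≤ #R) (ha₀ : a₀ ∈ C) (hadj : support s b₀ a₀)
    (hS : IsTight (deleteEdge (support s) b₀ a₀) R C S)
    (hT : T = nbhd (deleteEdge (support s) b₀ a₀) C S)
    (hS' : IsTight (deleteEdge (support s) b₀ a₀) R C S') (hsub : S' ⊂ S)
    (hmax : ∀ X, S' ⊂ X → X ⊂ S → ¬IsTight (deleteEdge (support s) b₀ a₀) R C X)
    (hT' : T' = nbhd (deleteEdge (support s) b₀ a₀) C S')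
    (hbound : edgeCount (deleteEdge (support s) b₀ a₀) S' T' +
      #(nbhd (deleteEdge (support s) b₀ a₀) T' (R \ S')) ≤ 4 * #S') :
    edgeCount (deleteEdge (support s) b₀ a₀) S T +
      #(nbhd (deleteEdge (support s) b₀ a₀) T (R \ S)) ≤ 4 * #S := by
  obtain ⟨c₀, hc₀⟩ := sdiff_nonempty_of_card_lt_card (show #S < #R by have := hS.2.2.1; omega)
  have hc₀S := (mem_sdiff.1 hc₀).2
  have hc₀N : c₀ ∉ S \ S' := fun h => hc₀S (mem_sdiff.1 h).1
  obtain ⟨Q, s₂, t₀, ht₀, hQ, hQ', hs₂, hbrace⟩ :=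
    hP.exists_isBrace_middle hs h3 ha₀ hS hT hS' hsub hmax hT' hc₀
  have hTT : T' ⊆ T := hT ▸ hT' ▸ nbhd_mono _ C hsub.subset
  have hcross := hP.edgeCount_cross_le hs h3 ha₀ hadj hS hS' hsub hmax hT' hc₀S
    (hQ.mono sdiff_subset hTT)
  have hrows := card_insert_of_notMem hc₀N
  have hSS' := card_sdiff_add_card_eq_card hsub.subset
  have hlt := card_lt_card hsub
  have hpos := hS'.2.1.card_pos
  have hle := hS.2.2.1
  have hmiddle := IH s₂ _ _ hs₂ hbrace (by omega) (by omega)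
  rw [hQ'.edgeCount_insert_transpose fun h => (mem_sdiff.1 h).2 ht₀,
    (hQ.mono sdiff_subset sdiff_subset).edgeCount_insert hc₀N] at hmiddle
  have hsplit := edgeCount_add_card_nbhd_eq (R := R) hsub.subset hT hT'
  omega

theorem EdgeBoundBelow.edgeCount_add_card_nbhd_le
    (IH : EdgeBoundBelow A B #R) (hP : IsBrace (support s) R C) (hs : IsSignNonsingular s R C)
    (h3 : 3 ≤ #R) (ha₀ : a₀ ∈ C) (hadj : support s b₀ a₀)
    (hS : IsTight (deleteEdge (support s) b₀ a₀) R C S)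
    (hT : T = nbhd (deleteEdge (support s) b₀ a₀) C S) :
    edgeCount (deleteEdge (support s) b₀ a₀) S T +
      #(nbhd (deleteEdge (support s) b₀ a₀) T (R \ S)) ≤ 4 * #S := by
  induction S using Finset.strongInduction generalizing T with
  | H S ih =>
    by_cases hnot : ∀ X, X ⊂ S → ¬IsTight (deleteEdge (support s) b₀ a₀) R C X
    · exact IH.edgeCount_add_card_nbhd_le_of_forall_not_isTight hP hs h3 ha₀ hS hT hnot
    push Not at hnot
    obtain ⟨X, hXS, hX⟩ := hnot
    obtain ⟨S', ⟨hsub, hS'⟩, hmax⟩ := ((Set.finite_Iic S).subset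
      (t := {X | X ⊂ S ∧ IsTight (deleteEdge (support s) b₀ a₀) R C X})
      fun X hX => hX.1.le).exists_maximal ⟨X, hXS, hX⟩
    exact IH.edgeCount_add_card_nbhd_le_of_isTight hP hs h3 ha₀ hadj hS hT hS' hsub
      (fun Y hY hYS hYt => hY.not_subset (hmax ⟨hYS, hYt⟩ hY.subset)) rfl (ih S' hsub hS' rfl)

end EdgeBound

section EdgeBound

variable {s : B → A → ℝ} {R S : Finset B} {C : Finset A} {b₀ : B} {a₀ : A}

theorem IsBrace.exists_isBrace_of_maximal (hP : IsBrace (support s) R C)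
    (hs : IsSignNonsingular s R C) (h3 : 3 ≤ #R)
    (hS : Maximal (IsTight (deleteEdge (support s) b₀ a₀) R C) S) :
    ∃ (s' : B → A → ℝ) (t₀ : A), t₀ ∈ nbhd (deleteEdge (support s) b₀ a₀) C S ∧
      IsContraction (fun a b => deleteEdge (support s) b₀ a₀ b a) (fun a b => support s' b a)
        (C \ nbhd (deleteEdge (support s) b₀ a₀) C S) (nbhd (deleteEdge (support s) b₀ a₀) C S)
        (R \ S) t₀ ∧
      IsSignNonsingular s' (R \ S) (insert t₀ (C \ nbhd (deleteEdge (support s) b₀ a₀) C S)) ∧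
      IsBrace (support s') (R \ S)
        (insert t₀ (C \ nbhd (deleteEdge (support s) b₀ a₀) C S)) := by
  have hE := hP.isElementary_deleteEdge (b₀ := b₀) (a₀ := a₀) h3
  have hmem := fun Y => hP.mem_of_isTight_deleteEdge (b₀ := b₀) (a₀ := a₀) (S := Y)
  obtain ⟨s₀, hs₀, hs₀P⟩ := hs.exists_deleteEdge b₀ a₀
  generalize deleteEdge (support s) b₀ a₀ = D at *
  subst hs₀P
  obtain ⟨t₀, ht₀⟩ : (nbhd (support s₀) C S).Nonempty := by
    rw [← card_pos, hS.prop.2.2.2]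
    omega
  obtain ⟨s', hs', hQ⟩ := hS.prop.exists_contraction hs₀ hE ht₀
  refine ⟨s', t₀, ht₀, hQ, hs', hQ.isBrace hS.prop hE ht₀ (fun X hX hXne hXt => ?_)
    fun X hX hXt => (mem_sdiff.1 (hX (hmem X hXt))).2 (hmem S hS.prop)⟩
  obtain ⟨b, hb⟩ := hXne
  exact (mem_sdiff.1 (hX hb)).2 (hS.le_of_ge hXt subset_union_left (mem_union_right _ hb))

theorem edgeCount_eq_add_add (P : B → A → Prop) (C : Finset A) (hS : S ⊆ R) :
    edgeCount P R C = edgeCount P S (nbhd P C S) + edgeCount P (R \ S) (nbhd P C S) +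
      edgeCount P (R \ S) (C \ nbhd P C S) := by
  rw [edgeCount_nbhd, add_assoc, edgeCount_add_edgeCount_sdiff_right P _ (nbhd_subset P C S),
    edgeCount_add_edgeCount_sdiff P C hS]

theorem EdgeBoundBelow.edgeCount_le_of_not_isBrace_deleteEdge (IH : EdgeBoundBelow A B #R)
    (hP : IsBrace (support s) R C) (hs : IsSignNonsingular s R C) (h3 : 3 ≤ #R) (hb₀ : b₀ ∈ R)
    (ha₀ : a₀ ∈ C) (hadj : support s b₀ a₀)
    (hnot : ¬IsBrace (deleteEdge (support s) b₀ a₀) R C) :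
    edgeCount (support s) R C + 4 ≤ 4 * #R := by
  have hE := hP.isElementary_deleteEdge (b₀ := b₀) (a₀ := a₀) h3
  obtain ⟨S, hS⟩ : ∃ S, Maximal (IsTight (deleteEdge (support s) b₀ a₀) R C) S := by
    obtain ⟨X, hX⟩ := not_forall_not.1 fun h => hnot (hE.isBrace h)
    exact ((Set.finite_Iic R).subset fun X hX => hX.1).exists_maximal ⟨X, hX⟩
  obtain ⟨s', t₀, ht₀, hQ, hs', hbrace⟩ := hP.exists_isBrace_of_maximal hs h3 hS
  have hrows := card_sdiff_add_card_eq_card hS.prop.1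
  have hpos := hS.prop.2.1.card_pos
  have hle := hS.prop.2.2.1
  have hcontract := IH s' _ _ hs' hbrace (by omega) (by omega)
  rw [hQ.edgeCount_insert_transpose fun h => (mem_sdiff.1 h).2 ht₀] at hcontract
  have hchain := IH.edgeCount_add_card_nbhd_le hP hs h3 ha₀ hadj hS.prop rfl
  have hcross := hP.edgeCount_deleteEdge_add_one_le hs h3 ha₀ hadj hS.prop rfl subset_rfl
    (hS.prop.nbhd_sdiff_nonempty hE)
  have hdelete := edgeCount_deleteEdge_add_one hb₀ ha₀ hadj
  have hsplit := edgeCount_eq_add_add (deleteEdge (support s) b₀ a₀) C hS.prop.1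
  omega

theorem IsBrace.four_le_card_bipartiteAbove {P : B → A → Prop} (hP : IsBrace P R C) (h3 : 3 ≤ #R)
    (hb₀ : b₀ ∈ R) (hdelete : ∀ a ∈ C, P b₀ a → IsBrace (deleteEdge P b₀ a) R C) :
    4 ≤ #(bipartiteAbove P C b₀) := by
  have hsurplus : ∀ Q : B → A → Prop, IsBrace Q R C → 3 ≤ #(bipartiteAbove Q C b₀) := fun Q hQ => by
    simpa [nbhd] using hQ.2 {b₀} (by simpa using hb₀) (by simp) (by simpa using h3)
  obtain ⟨a, ha⟩ : (bipartiteAbove P C b₀).Nonempty := by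
    have := hsurplus P hP
    rw [← card_pos]
    omega
  obtain ⟨haC, hadj⟩ := (mem_bipartiteAbove P).1 ha
  have herase : bipartiteAbove (deleteEdge P b₀ a) C b₀ ⊆ (bipartiteAbove P C b₀).erase a :=
    fun x hx => by
      obtain ⟨hxC, hPx, hne⟩ := (mem_bipartiteAbove _).1 hx
      exact mem_erase.2 ⟨fun h => hne ⟨rfl, h⟩, (mem_bipartiteAbove P).2 ⟨hxC, hPx⟩⟩
  have := card_le_card herase
  have := card_erase_add_one ha
  have := hsurplus _ (hdelete a haC hadj)
  omega

theorem edgeCount_add_four_le_of_card_eq_two (P : B → A → Prop) (hR : #R = 2) (hC : #C = 2) :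
    edgeCount P R C + 4 ≤ 4 * #R := by
  have hle : edgeCount P R C ≤ #R * #C :=
    sum_le_card_nsmul _ _ _ fun b _ => card_filter_le _ _
  rw [hR, hC] at hle
  omega

theorem EdgeBoundBelow.edgeCount_add_four_le (IH : EdgeBoundBelow A B #R)
    (hs : IsSignNonsingular s R C) (hP : IsBrace (support s) R C) (h3 : 3 ≤ #R) :
    edgeCount (support s) R C + 4 ≤ 4 * #R := by
  induction hm : edgeCount (support s) R C using Nat.strong_induction_on generalizing s with
  | _ m ih =>
    subst hm
    by_contra hlt
    have hdelete : ∀ b ∈ R, ∀ a ∈ C, support s b a → IsBrace (deleteEdge (support s) b a) R C :=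
      fun b hb a ha hadj => by_contra fun hnot =>
        hlt (IH.edgeCount_le_of_not_isBrace_deleteEdge hP hs h3 hb ha hadj hnot)
    have hdegree := fun b hb => hP.four_le_card_bipartiteAbove h3 hb (hdelete b hb)
    have hmany : #R * 4 ≤ edgeCount (support s) R C := card_nsmul_le_sum _ _ _ hdegree
    obtain ⟨b, hb⟩ : R.Nonempty := by rw [← card_pos]; omega
    obtain ⟨a, ha⟩ : (bipartiteAbove (support s) C b).Nonempty := by
      have := hdegree b hb
      rw [← card_pos]
      omega
    obtain ⟨haC, hadj⟩ := (mem_bipartiteAbove _).1 ha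
    obtain ⟨s', hs', hs'P⟩ := hs.exists_deleteEdge b a
    have hcount := edgeCount_deleteEdge_add_one hb haC hadj
    have hbrace := hdelete b hb a haC hadj
    rw [← hs'P] at hcount hbrace
    have := ih _ (by omega) hs' hbrace rfl
    omega

theorem edgeBoundBelow (A B : Type*) (n : ℕ) : EdgeBoundBelow A B n := by
  induction n with
  | zero => exact fun _ _ _ _ _ _ h => absurd h (Nat.not_lt_zero _)
  | succ n ih =>
    intro s R C hs hP h2 hlt
    have IH : EdgeBoundBelow A B #R := fun s' R' C' hs' hP' h2' hlt' =>
      ih s' R' C' hs' hP' h2' (by omega)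
    rcases h2.eq_or_lt' with hR | h3
    · exact edgeCount_add_four_le_of_card_eq_two _ hR (hP.1 ▸ hR)
    · exact IH.edgeCount_add_four_le hs hP h3

theorem IsSignNonsingular.edgeCount_add_four_le (hs : IsSignNonsingular s R C)
    (hP : IsBrace (support s) R C) (h2 : 2 ≤ #R) : edgeCount (support s) R C + 4 ≤ 4 * #R :=
  edgeBoundBelow A B (#R + 1) s R C hs hP h2 (Nat.lt_succ_self _)

end EdgeBound

section Regular

variable {s : B → A → ℝ} {R S : Finset B} {C : Finset A} {k : ℕ}

theorem edgeCount_eq_card_mul {P : B → A → Prop} (hdeg : ∀ b ∈ R, #(bipartiteAbove P C b) = k) :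
    edgeCount P R C = #R * k :=
  sum_const_nat hdeg

theorem IsTight.card_lt_of_sdiff_subset {P : B → A → Prop} {Y : Finset B} (hS : IsTight P R C S)
    (hE : IsElementary P R C) (hY : IsTight P R C Y) (hsub : R \ S ⊆ Y) :
    #(C \ nbhd P C Y) < #S := by
  have := card_sdiff_add_card_eq_card hS.1
  have := card_sdiff_add_card_eq_card (nbhd_subset P C Y)
  have := card_le_card hsub
  have := hY.2.2.2
  have := hE.1
  omega

theorem IsTight.false_of_minimal (hS : IsTight (support s) R C S) (hk : 4 ≤ k)
    (hs : IsSignNonsingular s R C) (hE : IsElementary (support s) R C)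
    (hdeg : ∀ b ∈ R, #(bipartiteAbove (support s) C b) = k)
    (hrows : ∀ X, IsTight (support s) R C X → #S ≤ #X)
    (hcols : ∀ Y, IsTight (fun a b => support s b a) C R Y → #S ≤ #Y) : False := by
  obtain ⟨c₀, hc₀⟩ := sdiff_nonempty_of_card_lt_card (show #S < #R by have := hS.2.2.1; omega)
  have hc₀S := (mem_sdiff.1 hc₀).2
  obtain ⟨s', hs', hQ⟩ := hS.exists_row_contraction hs hE hc₀
  have hcover : ∀ Y, R \ S ⊆ Y → ¬IsTight (support s) R C Y := fun Y hsub hY =>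
    (hcols _ (hY.transpose hE)).not_gt (hS.card_lt_of_sdiff_subset hE hY hsub)
  have hbrace := (hQ.isElementary hS hE hc₀).isBrace fun X hX =>
    have ⟨hXS, hXt⟩ := hQ.isTight_of_isTight hS hE hc₀ hcover hX
    (hrows X hXt).not_gt (card_lt_card hXS)
  have hinsert := card_insert_of_notMem hc₀S
  have hpos := hS.2.1.card_pos
  have hbound := hs'.edgeCount_add_four_le hbrace (by omega)
  rw [hQ.edgeCount_insert hc₀S, edgeCount_nbhd,
    edgeCount_eq_card_mul fun b hb => hdeg b (hS.1 hb)] at hbound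
  have := (hS.nbhd_sdiff_nonempty hE).card_pos
  have := Nat.mul_le_mul_left #S hk
  omega

theorem IsSignNonsingular.degree_le_three (hs : IsSignNonsingular s R C)
    (hE : IsElementary (support s) R C) (h2 : 2 ≤ #R)
    (hrows : ∀ b ∈ R, #(bipartiteAbove (support s) C b) = k)
    (hcols : ∀ a ∈ C, #(bipartiteBelow (support s) R a) = k) : k ≤ 3 := by
  by_contra! hk
  by_cases hex : ∃ m, (∃ S, IsTight (support s) R C S ∧ #S = m) ∨
      ∃ Y, IsTight (fun a b => support s b a) C R Y ∧ #Y = m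
  · have hmin := fun m => Nat.find_min' (m := m) hex
    rcases Nat.find_spec hex with ⟨S, hS, hm⟩ | ⟨Y, hY, hm⟩
    · exact hS.false_of_minimal hk hs hE hrows (fun X hX => hm ▸ hmin _ (.inl ⟨X, hX, rfl⟩))
        fun Y hY => hm ▸ hmin _ (.inr ⟨Y, hY, rfl⟩)
    · exact hY.false_of_minimal (s := fun a b => s b a) hk hs.transpose hE.transpose hcols
        (fun X hX => hm ▸ hmin _ (.inr ⟨X, hX, rfl⟩)) fun Y hY => hm ▸ hmin _ (.inl ⟨Y, hY, rfl⟩)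
  · have hbrace := hE.isBrace fun X hX => hex ⟨_, .inl ⟨X, hX, rfl⟩⟩
    have hbound := hs.edgeCount_add_four_le hbrace h2
    rw [edgeCount_eq_card_mul hrows] at hbound
    have := Nat.mul_le_mul_left #R hk
    omega

end Regular

/-! ### Signs of perfect matchings -/

section MixedEdges

variable {P : B → B → Prop} {σ τ θ : Equiv.Perm B}

/-- The bipartite graph obtained from `P` by deleting the edges in `E`. -/
def deleteEdges (P E : B → B → Prop) : B → B → Prop :=
  fun b a => P b a ∧ ¬E b a

/-- A perfect matching of a bipartite graph both sides of which are indexed by `B`. -/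
def IsMatchingPerm (P : B → B → Prop) (σ : Equiv.Perm B) : Prop :=
  ∀ b, P b (σ b)

/-- The edges `(b, τ b)` for `b ∈ X` and `(b, σ b)` for `b ∉ X` or `b = v₀`. When `X` is an initial
segment of the `σ⁻¹ * τ`-orbit of `v₀`, they touch every column and only the row of `v₀` twice. -/
def mixedEdges (σ τ : Equiv.Perm B) (v₀ : B) (X : Set B) (b a : B) : Prop :=
  (b ∈ X ∧ a = τ b) ∨ ((b ∉ X ∨ b = v₀) ∧ a = σ b)

theorem exists_mixedEdges (hσ : IsMatchingPerm P σ) (hτ : IsMatchingPerm P τ) {v₀ : B} {X : Set B}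
    (hX : ∀ b ∈ X, b ≠ v₀ → (σ⁻¹ * τ)⁻¹ b ∈ X) (a : B) :
    ∃ b, P b a ∧ mixedEdges σ τ v₀ X b a := by
  by_cases h : σ⁻¹ a ∈ X ∧ σ⁻¹ a ≠ v₀
  · have hmem : τ⁻¹ a ∈ X := by simpa using hX _ h.1 h.2
    exact ⟨τ⁻¹ a, by simpa using hτ (τ⁻¹ a), .inl ⟨hmem, by simp⟩⟩
  · exact ⟨σ⁻¹ a, by simpa using hσ (σ⁻¹ a), .inr ⟨by tauto, by simp⟩⟩

/-- The first `j` points of the `ρ`-orbit of `v₀`. -/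
def orbitSegment (ρ : Equiv.Perm B) (v₀ : B) (j : ℕ) : Set B :=
  {x | ∃ i < j, (ρ ^ i) v₀ = x}

theorem inv_mem_orbitSegment {ρ : Equiv.Perm B} {v₀ b : B} {j : ℕ} (hb : b ∈ orbitSegment ρ v₀ j)
    (hne : b ≠ v₀) : ρ⁻¹ b ∈ orbitSegment ρ v₀ j := by
  obtain ⟨i, hi, rfl⟩ := hb
  cases i with
  | zero => exact absurd rfl hne
  | succ i => exact ⟨i, by omega, by simp [pow_succ']⟩

theorem not_mixedEdges_orbitSegment_succ {v₀ : B} {j : ℕ}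
    (hθ : ∀ b, ¬mixedEdges σ τ v₀ (orbitSegment (σ⁻¹ * τ) v₀ j) b (θ b))
    (hne : θ (((σ⁻¹ * τ) ^ j) v₀) ≠ τ (((σ⁻¹ * τ) ^ j) v₀)) (b : B) :
    ¬mixedEdges σ τ v₀ (orbitSegment (σ⁻¹ * τ) v₀ (j + 1)) b (θ b) := by
  rintro (⟨⟨i, hi, rfl⟩, hτb⟩ | ⟨hb, hσb⟩)
  · rcases (Nat.lt_succ_iff_lt_or_eq.1 hi) with hlt | rfl
    · exact hθ _ (.inl ⟨⟨i, hlt, rfl⟩, hτb⟩)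
    · exact hne hτb
  · refine hθ b (.inr ⟨hb.imp_left fun hb hmem => hb ?_, hσb⟩)
    obtain ⟨i, hi, hib⟩ := hmem
    exact ⟨i, by omega, hib⟩

end MixedEdges

section MatchingPerm

variable [Fintype B] {P E : B → B → Prop} {k d e : ℕ} {σ τ θ : Equiv.Perm B}

/-- A `k`-regular bipartite graph both sides of which are indexed by `B`. -/
structure IsRegularPattern (P : B → B → Prop) (k : ℕ) : Prop where
  card_above : ∀ b, #(bipartiteAbove P univ b) = k
  card_below : ∀ a, #(bipartiteBelow P univ a) = k

theorem HasPerfectMatching.exists_isMatchingPerm (h : HasPerfectMatching P univ univ) :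
    ∃ σ, IsMatchingPerm P σ := by
  obtain ⟨e, he⟩ := h
  let full : (univ : Finset B) ≃ B := Equiv.subtypeUnivEquiv mem_univ
  exact ⟨full.symm.trans (e.trans full), fun b => he (full.symm b)⟩

/-- Hall's condition by counting edges: a single row with deficiency `e < d` does not break it. -/
theorem exists_isMatchingPerm_of_card_le (he : e < d) (v₀ : B)
    (hrow : ∀ b, b ≠ v₀ → d ≤ #(bipartiteAbove P univ b))
    (hrow₀ : d ≤ #(bipartiteAbove P univ v₀) + e)
    (hcol : ∀ a, #(bipartiteBelow P univ a) ≤ d) : ∃ σ, IsMatchingPerm P σ := by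
  refine (HasPerfectMatching.of_card_le_card_nbhd rfl fun X _ _ => ?_).exists_isMatchingPerm
  have hupper : edgeCount P X univ ≤ #(nbhd P univ X) * d := by
    rw [← edgeCount_nbhd, ← edgeCount_transpose]
    exact sum_le_card_nsmul _ _ _ fun a _ =>
      (card_le_card (filter_subset_filter _ (subset_univ X))).trans (hcol a)
  have herase : #(X.erase v₀) * d ≤ edgeCount P (X.erase v₀) univ :=
    card_nsmul_le_sum _ _ _ fun b hb => hrow b (ne_of_mem_erase hb)
  have hlower : #X * d ≤ edgeCount P X univ + e := by
    by_cases hv : v₀ ∈ X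
    · rw [edgeCount, ← add_sum_erase _ _ hv, ← edgeCount, ← card_erase_add_one hv, add_one_mul]
      omega
    · rw [erase_eq_of_notMem hv] at herase
      omega
  by_contra! hlt
  have := Nat.mul_le_mul_right d hlt
  rw [Nat.succ_mul] at this
  omega

theorem card_bipartiteAbove_le_deleteEdges {b x : B} (h : ∀ a, E b a → a = x) :
    #(bipartiteAbove P univ b) ≤ #(bipartiteAbove (deleteEdges P E) univ b) + 1 := by
  refine (card_le_card fun a ha => ?_).trans (card_insert_le x _)
  obtain ⟨-, hPa⟩ := (mem_bipartiteAbove P).1 ha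
  by_cases hE : E b a
  · exact mem_insert.2 (.inl (h a hE))
  · exact mem_insert_of_mem ((mem_bipartiteAbove _).2 ⟨mem_univ _, hPa, hE⟩)

theorem card_bipartiteBelow_deleteEdges_lt {b a : B} (hP : P b a) (hE : E b a) :
    #(bipartiteBelow (deleteEdges P E) univ a) < #(bipartiteBelow P univ a) := by
  refine card_lt_card ((ssubset_iff_of_subset fun x hx => ?_).2 ⟨b, ?_, fun hb => ?_⟩)
  · exact (mem_bipartiteBelow P).2 ⟨mem_univ _, ((mem_bipartiteBelow _).1 hx).2.1⟩
  · exact (mem_bipartiteBelow P).2 ⟨mem_univ _, hP⟩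
  · exact ((mem_bipartiteBelow _).1 hb).2.2 hE

theorem IsRegularPattern.deleteEdges_perm (hP : IsRegularPattern P (k + 1))
    (hσ : IsMatchingPerm P σ) :
    IsRegularPattern (deleteEdges P fun b a => σ b = a) k where
  card_above b := by
    have hdelete : bipartiteAbove (deleteEdges P fun b a => σ b = a) univ b =
        (bipartiteAbove P univ b).erase (σ b) := by
      ext a
      simp [BipartitePattern.deleteEdges, mem_bipartiteAbove, and_comm, eq_comm]
    rw [hdelete, card_erase_of_mem (by simpa using hσ b), hP.card_above, Nat.add_sub_cancel]
  card_below a := by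
    have hdelete : bipartiteBelow (deleteEdges P fun b a => σ b = a) univ a =
        (bipartiteBelow P univ a).erase (σ.symm a) := by
      ext b
      simp [BipartitePattern.deleteEdges, mem_bipartiteBelow, and_comm, Equiv.eq_symm_apply]
    rw [hdelete, card_erase_of_mem (by simpa using hσ (σ.symm a)), hP.card_below,
      Nat.add_sub_cancel]

theorem IsRegularPattern.exists_isMatchingPerm [Nonempty B] (hP : IsRegularPattern P k)
    (hk : 1 ≤ k) : ∃ σ, IsMatchingPerm P σ :=
  have v₀ := Classical.arbitrary B
  exists_isMatchingPerm_of_card_le hk v₀ (fun b _ => (hP.card_above b).ge)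
    (hP.card_above v₀).ge fun a => (hP.card_below a).le

theorem IsRegularPattern.exists_isMatchingPerm_forall_ne [Nonempty B] (hP : IsRegularPattern P k)
    (hk : 2 ≤ k) (hσ : IsMatchingPerm P σ) : ∃ τ, IsMatchingPerm P τ ∧ ∀ b, σ b ≠ τ b := by
  obtain ⟨k, rfl⟩ := Nat.exists_eq_add_of_lt hk
  obtain ⟨τ, hτ⟩ := (hP.deleteEdges_perm hσ).exists_isMatchingPerm (by omega)
  exact ⟨τ, fun b => (hτ b).1, fun b => (hτ b).2⟩

/-- A bipartite graph in which any two disjoint perfect matchings form a Hamiltonian cycle. -/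
def IsHamiltonianPattern (P : B → B → Prop) : Prop :=
  ∀ σ τ : Equiv.Perm B, IsMatchingPerm P σ → IsMatchingPerm P τ → (∀ b, σ b ≠ τ b) →
    ∀ x y, (σ⁻¹ * τ).SameCycle x y

theorem IsHamiltonianPattern.sign_inv_mul [Nonempty B] (hP : IsHamiltonianPattern P)
    (hσ : IsMatchingPerm P σ) (hτ : IsMatchingPerm P τ) (hne : ∀ b, σ b ≠ τ b) :
    Equiv.Perm.sign (σ⁻¹ * τ) = -(-1) ^ Fintype.card B := by
  have hmoves : ∀ b, (σ⁻¹ * τ) b ≠ b := fun b hb =>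
    hne b (Equiv.Perm.inv_eq_iff_eq.1 hb).symm
  have v₀ := Classical.arbitrary B
  have hcycle : (σ⁻¹ * τ).IsCycle := ⟨v₀, hmoves v₀, fun y _ => hP σ τ hσ hτ hne v₀ y⟩
  have hsupport : (σ⁻¹ * τ).support = univ :=
    eq_univ_of_forall fun b => Equiv.Perm.mem_support.2 (hmoves b)
  rw [hcycle.sign, hsupport, card_univ]

/-- With three pairwise disjoint perfect matchings, two of the sign quotients multiply to the third,
so the common value of the three is `1`. -/
theorem IsHamiltonianPattern.neg_neg_one_pow_card [Nonempty B] (hP : IsHamiltonianPattern P)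
    (hreg : IsRegularPattern P k) (hk : 3 ≤ k) : -(-1 : ℤˣ) ^ Fintype.card B = 1 := by
  obtain ⟨k, rfl⟩ := Nat.exists_eq_add_of_lt hk
  obtain ⟨σ, hσ⟩ := hreg.exists_isMatchingPerm (by omega)
  obtain ⟨τ, hτ⟩ := (hreg.deleteEdges_perm hσ).exists_isMatchingPerm (by omega)
  obtain ⟨θ, hθ, hτθ⟩ := (hreg.deleteEdges_perm hσ).exists_isMatchingPerm_forall_ne (by omega) hτ
  have hστ := hP.sign_inv_mul hσ (fun b => (hτ b).1) fun b => (hτ b).2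
  have hσθ := hP.sign_inv_mul hσ (fun b => (hθ b).1) fun b => (hθ b).2
  rw [show σ⁻¹ * θ = σ⁻¹ * τ * (τ⁻¹ * θ) by group, Equiv.Perm.sign_mul, hστ,
    hP.sign_inv_mul (fun b => (hτ b).1) (fun b => (hθ b).1) hτθ] at hσθ
  exact mul_eq_left.1 hσθ

theorem IsHamiltonianPattern.sign_eq_of_forall_ne [Nonempty B] (hP : IsHamiltonianPattern P)
    (hreg : IsRegularPattern P k) (hk : 3 ≤ k) (hσ : IsMatchingPerm P σ) (hτ : IsMatchingPerm P τ)
    (hne : ∀ b, σ b ≠ τ b) : Equiv.Perm.sign σ = Equiv.Perm.sign τ := by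
  have hsign := hP.sign_inv_mul hσ hτ hne
  rw [hP.neg_neg_one_pow_card hreg hk, Equiv.Perm.sign_mul, Equiv.Perm.sign_inv] at hsign
  exact mul_left_cancel ((Int.units_mul_self _).trans hsign.symm)

theorem card_bipartiteAbove_le_deleteEdges_mixedEdges (Q : B → B → Prop) {v₀ b : B} {X : Set B}
    (hb : b ≠ v₀) : #(bipartiteAbove Q univ b) ≤
      #(bipartiteAbove (deleteEdges Q (mixedEdges σ τ v₀ X)) univ b) + 1 := by
  refine card_bipartiteAbove_le_deleteEdges (x := if b ∈ X then τ b else σ b) fun a ha => ?_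
  unfold mixedEdges at ha
  split_ifs <;> tauto

theorem card_bipartiteAbove_le_deleteEdges_mixedEdges_add_two (Q : B → B → Prop) (v₀ : B)
    (X : Set B) : #(bipartiteAbove Q univ v₀) ≤
      #(bipartiteAbove (deleteEdges Q (mixedEdges σ τ v₀ X)) univ v₀) + 2 := by
  have hτ := card_bipartiteAbove_le_deleteEdges (P := Q) (E := fun b a => a = τ b)
    (b := v₀) fun _ h => h
  have hσ := card_bipartiteAbove_le_deleteEdges (P := deleteEdges Q fun b a => a = τ b)
    (E := fun b a => a = σ b) (b := v₀) fun _ h => h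
  refine hτ.trans (Nat.add_le_add_right (hσ.trans (Nat.add_le_add_right ?_ 1)) 1)
  refine card_le_card fun a ha => ?_
  obtain ⟨-, ⟨hQ, hτa⟩, hσa⟩ := (mem_bipartiteAbove _).1 ha
  exact (mem_bipartiteAbove _).2 ⟨mem_univ _, hQ, by unfold mixedEdges; tauto⟩

theorem IsRegularPattern.exists_isMatchingPerm_forall_not_mixedEdges
    (hreg : IsRegularPattern P k) (hk : 4 ≤ k) (hσ : IsMatchingPerm P σ) (hτ : IsMatchingPerm P τ)
    (hθ : IsMatchingPerm P θ) {v₀ : B} {X : Set B}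
    (hX : ∀ b ∈ X, b ≠ v₀ → (σ⁻¹ * τ)⁻¹ b ∈ X) (hθX : ∀ b, ¬mixedEdges σ τ v₀ X b (θ b)) :
    ∃ θ', IsMatchingPerm P θ' ∧ (∀ b, ¬mixedEdges σ τ v₀ X b (θ' b)) ∧ ∀ b, θ b ≠ θ' b := by
  obtain ⟨k, rfl⟩ := Nat.exists_eq_add_of_le' hk
  set Q := deleteEdges P fun b a => θ b = a
  have hQ : IsRegularPattern Q (k + 3) := hreg.deleteEdges_perm hθ
  have hcol : ∀ a, #(bipartiteBelow (deleteEdges Q (mixedEdges σ τ v₀ X)) univ a) < k + 3 :=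
    fun a => by
      obtain ⟨b, hP, hE⟩ := exists_mixedEdges hσ hτ hX a
      rw [← hQ.card_below a]
      exact card_bipartiteBelow_deleteEdges_lt ⟨hP, fun h => hθX b (h ▸ hE)⟩ hE
  have hrow : ∀ b, b ≠ v₀ → k + 3 ≤
      #(bipartiteAbove (deleteEdges Q (mixedEdges σ τ v₀ X)) univ b) + 1 := fun b hb =>
    hQ.card_above b ▸ card_bipartiteAbove_le_deleteEdges_mixedEdges Q hb
  have hrow₀ : k + 3 ≤ #(bipartiteAbove (deleteEdges Q (mixedEdges σ τ v₀ X)) univ v₀) + 2 :=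
    hQ.card_above v₀ ▸ card_bipartiteAbove_le_deleteEdges_mixedEdges_add_two Q v₀ X
  obtain ⟨θ', hθ'⟩ := exists_isMatchingPerm_of_card_le (d := k + 2) (by omega) v₀
    (fun b hb => Nat.le_of_succ_le_succ (hrow b hb)) (Nat.le_of_succ_le_succ hrow₀)
    fun a => Nat.le_of_lt_succ (hcol a)
  exact ⟨θ', fun b => (hθ' b).1.1, fun b => (hθ' b).2, fun b => (hθ' b).1.2⟩

theorem IsHamiltonianPattern.exists_sign_eq_forall_not_mixedEdges [Nonempty B]
    (hP : IsHamiltonianPattern P) (hreg : IsRegularPattern P k) (hk : 4 ≤ k)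
    (hσ : IsMatchingPerm P σ) (hτ : IsMatchingPerm P τ) (v₀ : B) (j : ℕ) :
    ∃ θ, IsMatchingPerm P θ ∧ Equiv.Perm.sign θ = Equiv.Perm.sign σ ∧
      ∀ b, ¬mixedEdges σ τ v₀ (orbitSegment (σ⁻¹ * τ) v₀ j) b (θ b) := by
  induction j with
  | zero =>
    obtain ⟨θ, hθ, hne⟩ := hreg.exists_isMatchingPerm_forall_ne (by omega) hσ
    refine ⟨θ, hθ, (hP.sign_eq_of_forall_ne hreg (by omega) hσ hθ hne).symm, fun b hb => hne b ?_⟩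
    rcases hb with ⟨⟨i, hi, -⟩, -⟩ | ⟨-, hb⟩
    · exact absurd hi (Nat.not_lt_zero i)
    · exact hb.symm
  | succ j ih =>
    obtain ⟨θ, hθ, hsign, hθj⟩ := ih
    by_cases hj : θ (((σ⁻¹ * τ) ^ j) v₀) = τ (((σ⁻¹ * τ) ^ j) v₀)
    · obtain ⟨θ', hθ', hθ'j, hne⟩ := hreg.exists_isMatchingPerm_forall_not_mixedEdges hk hσ hτ hθ
        (fun b => inv_mem_orbitSegment) hθj
      refine ⟨θ', hθ', (hP.sign_eq_of_forall_ne hreg (by omega) hθ hθ' hne).symm.trans hsign,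
        not_mixedEdges_orbitSegment_succ hθ'j ?_⟩
      exact hj ▸ (hne _).symm
    · exact ⟨θ, hθ, hsign, not_mixedEdges_orbitSegment_succ hθj hj⟩

theorem mul_cycleOf_apply (σ τ : Equiv.Perm B) (v₀ b : B) :
    (σ * (σ⁻¹ * τ).cycleOf v₀) b = if (σ⁻¹ * τ).SameCycle v₀ b then τ b else σ b := by
  rw [Equiv.Perm.mul_apply, Equiv.Perm.cycleOf_apply]
  split_ifs <;> simp

theorem IsMatchingPerm.mul_cycleOf (hσ : IsMatchingPerm P σ) (hτ : IsMatchingPerm P τ) (v₀ : B) :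
    IsMatchingPerm P (σ * (σ⁻¹ * τ).cycleOf v₀) := fun b => by
  rw [mul_cycleOf_apply]
  split_ifs
  exacts [hτ b, hσ b]

theorem IsHamiltonianPattern.sign_mul_cycleOf [Nonempty B] (hP : IsHamiltonianPattern P)
    (hreg : IsRegularPattern P k) (hk : 4 ≤ k) (hσ : IsMatchingPerm P σ) (hτ : IsMatchingPerm P τ)
    (v₀ : B) : Equiv.Perm.sign (σ * (σ⁻¹ * τ).cycleOf v₀) = Equiv.Perm.sign σ := by
  obtain ⟨θ, hθ, hsign, hmixed⟩ :=
    hP.exists_sign_eq_forall_not_mixedEdges hreg hk hσ hτ v₀ (orderOf (σ⁻¹ * τ))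
  rw [← hsign]
  refine hP.sign_eq_of_forall_ne hreg (by omega) (hσ.mul_cycleOf hτ v₀) hθ fun b hb => hmixed b ?_
  rw [← hb, mul_cycleOf_apply]
  split_ifs with hcycle
  · obtain ⟨i, hi⟩ := hcycle.exists_nat_pow_eq
    refine .inl ⟨⟨i % orderOf (σ⁻¹ * τ), Nat.mod_lt _ (orderOf_pos _), ?_⟩, rfl⟩
    rw [pow_mod_orderOf, hi]
  · refine .inr ⟨.inl ?_, rfl⟩
    rintro ⟨i, -, hi⟩
    exact hcycle ⟨i, by simpa using hi⟩

theorem IsHamiltonianPattern.sign_eq [Nonempty B] (hP : IsHamiltonianPattern P)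
    (hreg : IsRegularPattern P k) (hk : 4 ≤ k) (hσ : IsMatchingPerm P σ)
    (hτ : IsMatchingPerm P τ) : Equiv.Perm.sign σ = Equiv.Perm.sign τ := by
  induction hm : #{b | σ b ≠ τ b} using Nat.strong_induction_on generalizing σ with
  | _ m ih =>
    subst hm
    by_cases hne : ∃ v₀, σ v₀ ≠ τ v₀
    · obtain ⟨v₀, hv₀⟩ := hne
      rw [← hP.sign_mul_cycleOf hreg hk hσ hτ v₀]
      refine ih _ (card_lt_card ?_) (hσ.mul_cycleOf hτ v₀) rfl
      refine (ssubset_iff_of_subset fun b => ?_).2 ⟨v₀, by simpa using hv₀, ?_⟩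
      · simp only [mem_filter, mul_cycleOf_apply]
        split_ifs <;> simp
      · simp [mul_cycleOf_apply, Equiv.Perm.SameCycle.refl]
    · push Not at hne
      rw [Equiv.ext hne]

end MatchingPerm

/-- The 0/1 biadjacency matrix of a bipartite graph. -/
noncomputable def indicator (P : B → A → Prop) : B → A → ℝ :=
  fun b a => if P b a then 1 else 0

theorem support_indicator (P : B → A → Prop) : support (indicator P) = P := by
  ext b a
  simp [support, indicator]

section SignNonsingular

variable [Fintype B] {P : B → B → Prop} {k : ℕ}

theorem det_ne_zero_of_sign_eq {M : Matrix B B ℝ} (hM : ∀ b a, 0 ≤ M b a) {τ : Equiv.Perm B}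
    (hτ : ∀ b, M b (τ b) ≠ 0)
    (hsign : ∀ σ : Equiv.Perm B, (∀ b, M b (σ b) ≠ 0) →
      Equiv.Perm.sign σ = Equiv.Perm.sign τ) : M.det ≠ 0 := by
  have hterm : ∀ σ : Equiv.Perm B, Equiv.Perm.sign σ • ∏ b, M.transpose (σ b) b =
      Equiv.Perm.sign τ • ∏ b, M b (σ b) := fun σ => by
    simp only [Matrix.transpose_apply]
    by_cases hσ : ∀ b, M b (σ b) ≠ 0
    · rw [hsign σ hσ]
    · push Not at hσ
      obtain ⟨b, hb⟩ := hσ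
      rw [prod_eq_zero (f := fun b => M b (σ b)) (mem_univ b) hb, smul_zero, smul_zero]
  have hpos : 0 < ∑ σ : Equiv.Perm B, ∏ b, M b (σ b) :=
    sum_pos' (fun σ _ => prod_nonneg fun b _ => hM b _)
      ⟨τ, mem_univ τ, prod_pos fun b _ => (hM b _).lt_of_ne' (hτ b)⟩
  rw [← Matrix.det_transpose, Matrix.det_apply, sum_congr rfl fun σ _ => hterm σ, ← smul_sum]
  exact (smul_ne_zero_iff_ne _).2 hpos.ne'

theorem isSignNonsingular_indicator (hP : ∀ σ τ : Equiv.Perm B, IsMatchingPerm P σ →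
    IsMatchingPerm P τ → Equiv.Perm.sign σ = Equiv.Perm.sign τ) :
    IsSignNonsingular (indicator P) univ univ := by
  intro w hw hmatching v hv
  obtain ⟨τ, hτ⟩ := hmatching.exists_isMatchingPerm
  have hsupport : ∀ σ : Equiv.Perm B, (∀ b, w b (σ b) * indicator P b (σ b) ≠ 0) →
      IsMatchingPerm P σ := fun σ hσ b => by
    rw [← support_indicator P]
    exact right_ne_zero_of_mul (hσ b)
  have hτ' : ∀ b, w b (τ b) * indicator P b (τ b) ≠ 0 := fun b => mul_ne_zero (hτ b).1 (hτ b).2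
  have hdet : (Matrix.of fun b a => w b a * indicator P b a).det ≠ 0 := by
    refine det_ne_zero_of_sign_eq (fun b a => mul_nonneg (hw b a) ?_) hτ' fun σ hσ =>
      hP σ τ (hsupport σ hσ) (hsupport τ hτ')
    unfold indicator
    positivity
  exact fun a _ => congrFun (Matrix.eq_zero_of_mulVec_eq_zero hdet (funext fun b =>
    hv b (mem_univ b))) a

theorem IsMatchingPerm.image_eq_nbhd {σ : Equiv.Perm B} (hσ : IsMatchingPerm P σ) {S : Finset B}
    (hS : #(nbhd P univ S) ≤ #S) : S.image σ = nbhd P univ S := by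
  refine eq_of_subset_of_card_le (fun a ha => ?_) ?_
  · obtain ⟨b, hb, rfl⟩ := mem_image.1 ha
    exact mem_nbhd.2 ⟨mem_univ _, b, hb, hσ b⟩
  · rwa [card_image_of_injective _ σ.injective]

theorem IsHamiltonianPattern.isElementary [Nonempty B] (hP : IsHamiltonianPattern P)
    (hreg : IsRegularPattern P k) (hk : 2 ≤ k) : IsElementary P univ univ := by
  refine ⟨rfl, fun S _ ⟨x, hx⟩ hlt => ?_⟩
  obtain ⟨σ, hσ⟩ := hreg.exists_isMatchingPerm (by omega)
  obtain ⟨τ, hτ, hne⟩ := hreg.exists_isMatchingPerm_forall_ne hk hσ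
  by_contra! hcard
  have hS : #(nbhd P univ S) ≤ #S := by omega
  have hinvariant : ∀ b ∈ S, (σ⁻¹ * τ) b ∈ S := fun b hb => by
    have hmem := mem_image_of_mem τ hb
    rw [hτ.image_eq_nbhd hS, ← hσ.image_eq_nbhd hS] at hmem
    obtain ⟨c, hc, hcb⟩ := mem_image.1 hmem
    rwa [Equiv.Perm.mul_apply, ← hcb, Equiv.Perm.inv_eq_iff_eq.2 rfl]
  have hpow : ∀ n, ((σ⁻¹ * τ) ^ n) x ∈ S := fun n => by
    induction n with
    | zero => exact hx
    | succ n ih => exact pow_succ' (σ⁻¹ * τ) n ▸ hinvariant _ ih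
  have huniv : S = univ := eq_univ_of_forall fun y => by
    obtain ⟨n, hn⟩ := (hP σ τ hσ hτ hne x y).exists_nat_pow_eq
    exact hn ▸ hpow n
  exact hlt.ne (congrArg card huniv)

theorem IsHamiltonianPattern.degree_le_three [Nonempty B] (hP : IsHamiltonianPattern P)
    (hreg : IsRegularPattern P k) : k ≤ 3 := by
  by_contra! hk
  have hcard : k ≤ Fintype.card B := by
    rw [← hreg.card_above (Classical.arbitrary B)]
    exact card_le_univ _
  have hs : IsSignNonsingular (indicator P) univ univ :=
    isSignNonsingular_indicator fun σ τ hσ hτ => hP.sign_eq hreg hk hσ hτ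
  refine hk.not_ge (hs.degree_le_three ?_ (by rw [card_univ]; omega) (k := k) ?_ ?_) <;>
    rw [support_indicator]
  exacts [hP.isElementary hreg (by omega), fun b _ => hreg.card_above b,
    fun a _ => hreg.card_below a]

end SignNonsingular

end BipartitePattern

/-! ### Two-factors of bipartite graphs -/

section TwoFactor

variable {V W : Type*} {G F : SimpleGraph V} {H : SimpleGraph W}

theorem ncard_neighborSet_iso (e : G ≃g H) (v : V) :
    (H.neighborSet (e v)).ncard = (G.neighborSet v).ncard :=
  (Nat.card_congr (e.mapNeighborSet v)).symm

theorem IsTwoFactor.iso (e : G ≃g H) (hF : IsTwoFactor G F) :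
    IsTwoFactor H (F.comap e.symm) := by
  refine ⟨fun u v huv => e.symm.map_adj_iff.1 (hF.1 huv), fun w => ?_⟩
  rw [← hF.2 (e.symm w)]
  exact (ncard_neighborSet_iso (Iso.comap e.symm.toEquiv F) w).symm

theorem TwoFactorHamiltonian.iso (e : G ≃g H) (hG : TwoFactorHamiltonian G) :
    TwoFactorHamiltonian H := by
  obtain ⟨⟨F, hF⟩, hconnected⟩ := hG
  refine ⟨⟨_, hF.iso e⟩, fun F' hF' => ?_⟩
  exact (Iso.comap e.toEquiv F').connected_iff.1 (hconnected _ (hF'.iso e.symm))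

end TwoFactor

namespace BipartitePattern

section BipartiteGraph

variable {A B V : Type*} {P : B → A → Prop} {Q : B → B → Prop} {σ τ : Equiv.Perm B} {k : ℕ}
  {G : SimpleGraph V} {s : Set V}

/-- The simple graph on the disjoint union of the two sides whose edges are given by `P`. -/
def bipartiteGraph (P : B → A → Prop) : SimpleGraph (B ⊕ A) where
  Adj
    | .inl b, .inr a => P b a
    | .inr a, .inl b => P b a
    | _, _ => False
  symm := ⟨by rintro (b | a) (b' | a') h <;> exact h⟩
  loopless := ⟨by rintro (b | a) h <;> exact h⟩

theorem ncard_neighborSet_inl (b : B) :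
    ((bipartiteGraph P).neighborSet (.inl b)).ncard = {a | P b a}.ncard := by
  rw [← Set.ncard_image_of_injective {a | P b a} (Sum.inr_injective (α := B))]
  congr 1
  ext (_ | _) <;> simp [bipartiteGraph]

theorem ncard_neighborSet_inr (a : A) :
    ((bipartiteGraph P).neighborSet (.inr a)).ncard = {b | P b a}.ncard := by
  rw [← Set.ncard_image_of_injective {b | P b a} (Sum.inl_injective (β := A))]
  congr 1
  ext (_ | _) <;> simp [bipartiteGraph]

theorem isRegularPattern_of_bipartiteGraph [Fintype B]
    (hreg : ∀ v, ((bipartiteGraph Q).neighborSet v).ncard = k) : IsRegularPattern Q k where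
  card_above b := by
    rw [← hreg (.inl b), ncard_neighborSet_inl, ← Set.ncard_coe_finset, Finset.bipartiteAbove,
      Finset.coe_filter_univ]
  card_below a := by
    rw [← hreg (.inr a), ncard_neighborSet_inr, ← Set.ncard_coe_finset, Finset.bipartiteBelow,
      Finset.coe_filter_univ]

/-- The union of two perfect matchings. -/
def matchingUnion (σ τ : Equiv.Perm B) : B → B → Prop :=
  fun b a => σ b = a ∨ τ b = a

theorem isTwoFactor_matchingUnion (hσ : IsMatchingPerm Q σ) (hτ : IsMatchingPerm Q τ)
    (hne : ∀ b, σ b ≠ τ b) :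
    IsTwoFactor (bipartiteGraph Q) (bipartiteGraph (matchingUnion σ τ)) := by
  have hle : ∀ b a, matchingUnion σ τ b a → Q b a := by
    rintro b a (rfl | rfl)
    exacts [hσ b, hτ b]
  refine ⟨?_, ?_⟩
  · rintro (b | a) (b' | a') h
    exacts [h, hle _ _ h, hle _ _ h, h]
  · rintro (b | a)
    · rw [ncard_neighborSet_inl, ← Set.ncard_pair (hne b)]
      congr 1
      ext a
      simp [matchingUnion, eq_comm]
    · have hne' : σ⁻¹ a ≠ τ⁻¹ a := fun h => hne (σ⁻¹ a) <|
        (σ.apply_symm_apply a).trans ((congrArg τ h).trans (τ.apply_symm_apply a)).symm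
      rw [ncard_neighborSet_inr, ← Set.ncard_pair hne']
      congr 1
      ext b
      simp [matchingUnion, ← Equiv.Perm.eq_inv_iff_eq]

theorem sameCycle_of_reachable_matchingUnion {u v : B ⊕ B}
    (h : (bipartiteGraph (matchingUnion σ τ)).Reachable u v) :
    (σ⁻¹ * τ).SameCycle (u.elim id ⇑σ⁻¹) (v.elim id ⇑σ⁻¹) := by
  have hedge : ∀ b a, matchingUnion σ τ b a → (σ⁻¹ * τ).SameCycle b (σ⁻¹ a) := by
    rintro b _ (rfl | rfl)
    · simpa using Equiv.Perm.SameCycle.refl _ b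
    · exact Equiv.Perm.sameCycle_apply_right.2 (.refl _ b)
  obtain ⟨p⟩ := h
  induction p with
  | nil => exact .refl _ _
  | @cons u v _ huv _ ih =>
    refine Equiv.Perm.SameCycle.trans ?_ ih
    rcases u with b | a <;> rcases v with b' | a'
    exacts [huv.elim, hedge _ _ huv, (hedge _ _ huv).symm, huv.elim]

theorem isHamiltonianPattern_of_twoFactorHamiltonian
    (hQ : TwoFactorHamiltonian (bipartiteGraph Q)) : IsHamiltonianPattern Q :=
  fun _ _ hσ hτ hne x y => sameCycle_of_reachable_matchingUnion
    ((hQ.2 _ (isTwoFactor_matchingUnion hσ hτ hne)).preconnected (.inl x) (.inl y))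

theorem nonempty_bipartiteGraph_iso (hG : G.IsBipartiteWith s sᶜ)
    (e : s ≃ (sᶜ : Set V)) : Nonempty (bipartiteGraph (fun b a : s => G.Adj b (e a)) ≃g G) := by
  classical
  let φ : s ⊕ s ≃ V := ((Equiv.refl s).sumCongr e).trans (Equiv.Set.sumCompl s)
  have hmem : ∀ b b' : s, ¬G.Adj b b' := fun b b' h => hG.mem_of_mem_adj b.2 h b'.2
  have hcompl : ∀ a a' : s, ¬G.Adj (e a) (e a') := fun a a' h =>
    (e a).2 (hG.mem_of_mem_adj' (e a').2 h)
  refine ⟨⟨φ, ?_⟩⟩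
  rintro (b | a) (b' | a')
  exacts [iff_of_false (hmem b b') id, Iff.rfl, G.adj_comm _ _, iff_of_false (hcompl a a') id]

theorem ncard_eq_ncard_compl [Finite V] (hG : G.IsBipartiteWith s sᶜ) (hk : 1 ≤ k)
    (hreg : ∀ v, (G.neighborSet v).ncard = k) : s.ncard = sᶜ.ncard := by
  classical
  have := Fintype.ofFinite V
  have hdegree : ∀ v, G.degree v = k := fun v => by
    rw [← hreg v, ← card_neighborSet_eq_degree, ← Nat.card_eq_fintype_card,
      Nat.card_coe_set_eq]
  have hsum := isBipartiteWith_sum_degrees_eq (s := s.toFinset) (t := sᶜ.toFinset)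
    (G := G) (by simpa using hG)
  simp only [hdegree, Finset.sum_const, smul_eq_mul] at hsum
  simpa [Set.ncard_eq_toFinset_card'] using Nat.eq_of_mul_eq_mul_right hk hsum

theorem exists_bipartiteGraph_iso [Finite V] (hG : G.IsBipartite) (hk : 1 ≤ k)
    (hreg : ∀ v, (G.neighborSet v).ncard = k) :
    ∃ (s : Set V) (Q : s → s → Prop), Nonempty (bipartiteGraph Q ≃g G) := by
  obtain ⟨s, t, hst⟩ := hG.exists_isBipartiteWith
  have hs : G.IsBipartiteWith s sᶜ := by
    have hts : t ⊆ sᶜ := hst.disjoint.subset_compl_left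
    exact ⟨disjoint_compl_right, fun v w h => (hst.mem_of_adj h).imp
      (And.imp_right (@hts _)) (And.imp_left (@hts _))⟩
  obtain ⟨e⟩ : Nonempty (s ≃ (sᶜ : Set V)) :=
    Finite.card_eq.1 (ncard_eq_ncard_compl hs hk hreg)
  exact ⟨s, _, nonempty_bipartiteGraph_iso hs e⟩

end BipartiteGraph

end BipartitePattern

open BipartitePattern

/-- a 2-factor Hamiltonian `k`-regular bipartite graph has `k ≤ 3`. -/
theorem stmt_3 {V : Type*} [Fintype V] (G : SimpleGraph V) (k : ℕ) (hk : 1 ≤ k)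
    (hreg : ∀ v : V, (G.neighborSet v).ncard = k)
    (hbip : G.Colorable 2)
    (h2fh : TwoFactorHamiltonian G) :
    k ≤ 3 := by
  classical
  obtain ⟨s, Q, ⟨e⟩⟩ := exists_bipartiteGraph_iso hbip hk hreg
  have hQreg : IsRegularPattern Q k :=
    isRegularPattern_of_bipartiteGraph fun v => (ncard_neighborSet_iso e v).symm.trans (hreg (e v))
  have hQ : TwoFactorHamiltonian (bipartiteGraph Q) := h2fh.iso e.symm
  have : Nonempty s := by
    obtain ⟨F, hF⟩ := hQ.1
    exact (hQ.2 F hF).nonempty.elim fun v => ⟨v.elim id id⟩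
  exact (isHamiltonianPattern_of_twoFactorHamiltonian hQ).degree_le_three hQreg
end

section
/- Let G be a cubic graph with the Perfect-Matching-Hamiltonian property (G need not be bipartite). Then G is not 2-factor Hamiltonian if and only if G admits a perfect matching M that can be extended to a Hamiltonian cycle in exactly one way, i.e., there is exactly one perfect matching N of G such that M ∪ N induces a Hamiltonian cycle of G. -/
open SimpleGraph

/-- A 1-factor (perfect matching) of `G`: a 1-regular spanning subgraph, given as a
simple graph `F ≤ G` in which every vertex has exactly one neighbour. -/
def IsOneFactor {V : Type*} (G F : SimpleGraph V) : Prop :=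
  F ≤ G ∧ ∀ v : V, (F.neighborSet v).ncard = 1

/-- `H` is a Hamiltonian cycle of `G`: a connected 2-regular spanning subgraph. -/
def IsHamiltonianCycleOf {V : Type*} (G H : SimpleGraph V) : Prop :=
  IsTwoFactor G H ∧ H.Connected

/-- `G` has the Perfect-Matching-Hamiltonian property: it admits a perfect matching,
and every perfect matching `M` of `G` can be extended to a Hamiltonian cycle of `G` by
a perfect matching `N`, i.e. `M ∪ N` is a Hamiltonian cycle of `G`. -/
def HasPMHProperty {V : Type*} (G : SimpleGraph V) : Prop :=
  (∃ M, IsOneFactor G M) ∧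
    ∀ M, IsOneFactor G M → ∃ N, IsOneFactor G N ∧ IsHamiltonianCycleOf G (M ⊔ N)

/-!
In a cubic graph the complement of a 2-factor is a perfect matching. Let `F` be a disconnected
2-factor with complement `M`, and let `M ⊔ N` be a Hamiltonian cycle with complement `L`. A perfect
matching extending `L` to a Hamiltonian cycle is disjoint from `L`, so it lies in `M ⊔ N`; since
agreement with `M` propagates along the edges of the connected graph `M ⊔ N`, it is `M` or `N`. But
`L ⊔ N = F` is disconnected, so `M` is the only extension of `L`. Conversely, if `N` is the only
extension of `M`, then the complement `L` of `M ⊔ N` does not extend `M` to a Hamiltonian cycle, so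
`M ⊔ L` is a disconnected 2-factor.
-/

section

variable {V : Type*} {G : SimpleGraph V}

theorem eq_empty_or_eq_univ_of_preconnected (hG : G.Preconnected) {s : Set V}
    (hs : ∀ ⦃v w⦄, G.Adj v w → v ∈ s → w ∈ s) : s = ∅ ∨ s = Set.univ := by
  refine s.eq_empty_or_nonempty.imp_right fun ⟨v, hv⟩ ↦ Set.eq_univ_of_forall fun w ↦ ?_
  obtain ⟨p⟩ := hG v w
  induction p with
  | nil => exact hv
  | cons hadj _ ih => exact ih (hs hadj hv)

namespace IsOneFactor

variable {K M N : SimpleGraph V}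

theorem existsUnique_adj (hM : IsOneFactor G M) (v : V) : ∃! w, M.Adj v w :=
  Set.singleton_iff_unique_mem.1 (Set.ncard_eq_one.1 (hM.2 v))

theorem ne_bot [Nonempty V] (hM : IsOneFactor G M) : M ≠ ⊥ := by
  rintro rfl
  exact (hM.existsUnique_adj (Classical.arbitrary V)).exists.elim fun _ ↦ id

theorem le_of_support_inf_eq_univ (hK : IsOneFactor G K) (h : (K ⊓ M).support = Set.univ) :
    K ≤ M := by
  intro v w hvw
  obtain ⟨x, hKx, hMx⟩ : v ∈ (K ⊓ M).support := h ▸ Set.mem_univ v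
  exact (hK.existsUnique_adj v).unique hvw hKx ▸ hMx

theorem eq_of_le (hK : IsOneFactor G K) (hM : IsOneFactor G M) (hle : K ≤ M) : K = M := by
  refine hle.antisymm (hM.le_of_support_inf_eq_univ (Set.eq_univ_of_forall fun v ↦ ?_))
  obtain ⟨w, hw, -⟩ := hK.existsUnique_adj v
  exact ⟨w, hle hw, hw⟩

theorem isTwoFactor_sup_iff (hM : IsOneFactor G M) (hN : IsOneFactor G N) :
    IsTwoFactor G (M ⊔ N) ↔ Disjoint M N := by
  rw [← disjoint_neighborSet]
  refine (and_iff_right (sup_le hM.1 hN.1)).trans (forall_congr' fun v ↦ ?_)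
  obtain ⟨a, ha⟩ := Set.ncard_eq_one.1 (hM.2 v)
  obtain ⟨b, hb⟩ := Set.ncard_eq_one.1 (hN.2 v)
  rw [neighborSet_sup, ha, hb, Set.singleton_union, Set.disjoint_singleton]
  refine ⟨?_, Set.ncard_pair⟩
  rintro hcard rfl
  simp at hcard

theorem le_of_isTwoFactor_sdiff_sup {F : SimpleGraph V} (hK : IsOneFactor G K) (hF : F ≤ G)
    (hGF : IsOneFactor G (G \ F)) (hsup : IsTwoFactor G (G \ F ⊔ K)) : K ≤ F := by
  have hdisj : Disjoint K (G \ F) := ((hGF.isTwoFactor_sup_iff hK).1 hsup).symm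
  exact sdiff_sdiff_eq_self hF ▸ le_sdiff.2 ⟨hK.1, hdisj⟩

theorem mem_support_inf_of_adj (hK : IsOneFactor G K) (hM : IsOneFactor G M)
    (hN : IsOneFactor G N) (hle : K ≤ M ⊔ N) {v w : V} (hvw : (M ⊔ N).Adj v w)
    (hv : v ∈ (K ⊓ M).support) : w ∈ (K ⊓ M).support := by
  obtain ⟨x, hKx, hMx⟩ := hv
  rcases hvw with hMvw | hNvw
  · obtain rfl := (hM.existsUnique_adj v).unique hMvw hMx
    exact ⟨v, hKx.symm, hMx.symm⟩
  · obtain ⟨y, hKy, -⟩ := hK.existsUnique_adj w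
    rcases hle hKy with hMwy | hNwy
    · exact ⟨y, hKy, hMwy⟩
    · obtain rfl := (hN.existsUnique_adj w).unique hNvw.symm hNwy
      obtain rfl := (hK.existsUnique_adj v).unique hKx hKy.symm
      exact ⟨v, hKy, hMx.symm⟩

theorem eq_or_eq_of_le_sup (hK : IsOneFactor G K) (hM : IsOneFactor G M)
    (hN : IsOneFactor G N) (hconn : (M ⊔ N).Preconnected) (hle : K ≤ M ⊔ N) :
    K = M ∨ K = N := by
  rcases eq_empty_or_eq_univ_of_preconnected hconn
      fun _ _ ↦ mem_support_inf_of_adj hK hM hN hle with hempty | huniv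
  · have hdisj : Disjoint K M := disjoint_iff.2 ((support_eq_bot_iff _).1 hempty)
    exact .inr (hK.eq_of_le hN (hdisj.left_le_of_le_sup_left hle))
  · exact .inl (hK.eq_of_le hM (hK.le_of_support_inf_eq_univ huniv))

end IsOneFactor

theorem IsTwoFactor.isOneFactor_sdiff {F : SimpleGraph V}
    (hcubic : ∀ v, (G.neighborSet v).ncard = 3) (hF : IsTwoFactor G F) :
    IsOneFactor G (G \ F) := by
  refine ⟨sdiff_le, fun v ↦ ?_⟩
  have hfin : (F.neighborSet v).Finite := Set.finite_of_ncard_ne_zero (by simp [hF.2 v])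
  have hsub : F.neighborSet v ⊆ G.neighborSet v := fun _ hw ↦ hF.1 hw
  rw [neighborSet_sdiff, Set.ncard_sdiff hsub hfin, hcubic v, hF.2 v]

theorem HasPMHProperty.exists_isTwoFactor (hpmh : HasPMHProperty G) :
    ∃ F, IsTwoFactor G F := by
  obtain ⟨⟨M, hM⟩, hext⟩ := hpmh
  obtain ⟨N, -, hH⟩ := hext M hM
  exact ⟨M ⊔ N, hH.1⟩

theorem HasPMHProperty.exists_existsUnique_of_not_connected (hpmh : HasPMHProperty G)
    (hcubic : ∀ v, (G.neighborSet v).ncard = 3) {F : SimpleGraph V} (hF : IsTwoFactor G F)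
    (hFconn : ¬ F.Connected) :
    ∃ L, IsOneFactor G L ∧ ∃! K, IsOneFactor G K ∧ IsHamiltonianCycleOf G (L ⊔ K) := by
  have hM : IsOneFactor G (G \ F) := hF.isOneFactor_sdiff hcubic
  obtain ⟨N, hN, hMN⟩ := hpmh.2 _ hM
  have hL : IsOneFactor G (G \ (G \ F ⊔ N)) := hMN.1.isOneFactor_sdiff hcubic
  have hLN : G \ (G \ F ⊔ N) ⊔ N = F := by
    have hNF : N ≤ F := hN.le_of_isTwoFactor_sdiff_sup hF.1 hM hMN.1
    rw [← sdiff_sdiff_left, sdiff_sdiff_eq_self hF.1, sdiff_sup_cancel hNF]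
  have huniq : ∀ K, IsOneFactor G K ∧ IsHamiltonianCycleOf G (G \ (G \ F ⊔ N) ⊔ K) →
      K = G \ F := by
    rintro K ⟨hK, hLK⟩
    have hle : K ≤ G \ F ⊔ N := hK.le_of_isTwoFactor_sdiff_sup hMN.1.1 hL hLK.1
    refine (hK.eq_or_eq_of_le_sup hM hN hMN.2.preconnected hle).resolve_right ?_
    rintro rfl
    exact hFconn (hLN ▸ hLK.2)
  obtain ⟨K, hK⟩ := hpmh.2 _ hL
  exact ⟨_, hL, K, hK, fun K' hK' ↦ (huniq K' hK').trans (huniq K hK).symm⟩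

theorem not_twoFactorHamiltonian_of_existsUnique (hcubic : ∀ v, (G.neighborSet v).ncard = 3)
    {M : SimpleGraph V} (hM : IsOneFactor G M)
    (hMuniq : ∃! N, IsOneFactor G N ∧ IsHamiltonianCycleOf G (M ⊔ N)) :
    ¬ TwoFactorHamiltonian G := by
  rintro ⟨-, hconn⟩
  obtain ⟨N, ⟨hN, hMN⟩, huniq⟩ := hMuniq
  have hL : IsOneFactor G (G \ (M ⊔ N)) := hMN.1.isOneFactor_sdiff hcubic
  have hML : IsTwoFactor G (M ⊔ G \ (M ⊔ N)) :=
    (hM.isTwoFactor_sup_iff hL).2 (disjoint_sdiff_self_right.mono_left le_sup_left)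
  have hLN : G \ (M ⊔ N) = N := huniq _ ⟨hL, hML, hconn _ hML⟩
  have hdisj : Disjoint N N := by
    nth_rewrite 2 [← hLN]
    exact disjoint_sdiff_self_right.mono_left le_sup_right
  have : Nonempty V := hMN.2.nonempty
  exact hN.ne_bot (disjoint_self.1 hdisj)

end

theorem stmt_7_general {V : Type*} (G : SimpleGraph V)
    (hcubic : ∀ v : V, (G.neighborSet v).ncard = 3)
    (hpmh : HasPMHProperty G) :
    ¬ TwoFactorHamiltonian G ↔
      ∃ M, IsOneFactor G M ∧
        ∃! N, IsOneFactor G N ∧ IsHamiltonianCycleOf G (M ⊔ N) := by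
  refine ⟨fun hnot ↦ ?_, fun ⟨_, hM, hMuniq⟩ ↦
    not_twoFactorHamiltonian_of_existsUnique hcubic hM hMuniq⟩
  obtain ⟨F, hF, hFconn⟩ : ∃ F, IsTwoFactor G F ∧ ¬ F.Connected := by
    by_contra! hconn
    exact hnot ⟨hpmh.exists_isTwoFactor, hconn⟩
  exact hpmh.exists_existsUnique_of_not_connected hcubic hF hFconn

/-- a cubic graph with the PMH-property is not 2-factor Hamiltonian if and
only if it admits a perfect matching which extends to a Hamiltonian cycle in exactly
one way. -/
theorem stmt_7 {V : Type*} [Fintype V] (G : SimpleGraph V)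
    (hcubic : ∀ v : V, (G.neighborSet v).ncard = 3)
    (hpmh : HasPMHProperty G) :
    ¬ TwoFactorHamiltonian G ↔
      ∃ M, IsOneFactor G M ∧
        ∃! N, IsOneFactor G N ∧ IsHamiltonianCycleOf G (M ⊔ N) :=
  stmt_7_general G hcubic hpmh
end
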